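/- Suppose the ODE γ' = V(t,γ) is uniquely solved by a flow X. Then for each S ∈ [0,T] and each probability measure μ on ℝ^d, the curve μ_t = (X_S^t)_♯ μ is the unique solution of the continuity equation in C([0,T], M⁺(ℝ^d)) with μ_S = μ. -/

import Mathlib

open MeasureTheory Set
open scoped ENNReal NNReal Topology

noncomputable section

/-- A solution of the ODE `γ' = V(t,γ)` on `[0,T]`, in integral form. -/
def IsSolution {d : ℕ} (T : ℝ) (hT : 0 ≤ T)
    (V : ℝ → EuclideanSpace ℝ (Fin d) → EuclideanSpace ℝ (Fin d))
    (γ : C(Set.Icc (0:ℝ) T, EuclideanSpace ℝ (Fin d))) : Prop :=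
  ∀ t : Set.Icc (0:ℝ) T,
    γ t - γ ⟨0, Set.left_mem_Icc.mpr hT⟩ =
      ∫ s in (0:ℝ)..(t:ℝ), V s (γ (Set.projIcc 0 T hT s))

/-- `X` is a flow of solutions of the ODE. -/
def IsFlow {d : ℕ} (T : ℝ) (hT : 0 ≤ T)
    (V : ℝ → EuclideanSpace ℝ (Fin d) → EuclideanSpace ℝ (Fin d))
    (X : ℝ → ℝ → EuclideanSpace ℝ (Fin d) → EuclideanSpace ℝ (Fin d)) : Prop :=
  ∀ (t : ℝ) (ht : t ∈ Set.Icc (0:ℝ) T) (x : EuclideanSpace ℝ (Fin d)),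
    ∃ γ : C(Set.Icc (0:ℝ) T, EuclideanSpace ℝ (Fin d)),
      IsSolution T hT V γ ∧ γ ⟨t, ht⟩ = x ∧
      (∀ s : Set.Icc (0:ℝ) T, X t s x = γ s) ∧
      (∀ γ' : C(Set.Icc (0:ℝ) T, EuclideanSpace ℝ (Fin d)),
        IsSolution T hT V γ' → γ' ⟨t, ht⟩ = x → γ' = γ)

/-- A (nonnegative-)measure-valued solution of the continuity equation,
in weak (integral) form. -/
def IsMeasureSolution {d : ℕ} (T : ℝ)
    (V : ℝ → EuclideanSpace ℝ (Fin d) → EuclideanSpace ℝ (Fin d))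
    (μ : ℝ → Measure (EuclideanSpace ℝ (Fin d))) : Prop :=
  ∀ u : EuclideanSpace ℝ (Fin d) → ℝ, ContDiff ℝ (⊤ : ℕ∞) u → HasCompactSupport u →
    ∀ s ∈ Set.Icc (0:ℝ) T, ∀ t ∈ Set.Icc (0:ℝ) T,
      (∫ x, u x ∂μ t) - (∫ x, u x ∂μ s) =
        ∫ σ in s..t, ∫ x, fderiv ℝ u x (V σ x) ∂μ σ

/-- A lower semicontinuous function with values in `[0, ∞]` is the supremum of an increasing
sequence of bounded Lipschitz functions. -/
lemma LowerSemicontinuous.exists_lipschitz_seq {α : Type*} [PseudoMetricSpace α]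
    {f : α → ℝ≥0∞} (hf : LowerSemicontinuous f) :
    ∃ F : ℕ → α → ℝ, (∀ k x, 0 ≤ F k x) ∧ (∀ k x, F k x ≤ k) ∧
      (∀ k x y, |F k x - F k y| ≤ k * dist x y) ∧ (∀ x, Monotone fun k => F k x) ∧
      (∀ k x, ENNReal.ofReal (F k x) ≤ f x) ∧ ∀ x, f x ≤ ⨆ k, ENNReal.ofReal (F k x) := by
  let A : ℕ → α → α → ℝ := fun k x y => (min (f y) k).toReal + k * dist x y
  have hA0 : ∀ k x y, 0 ≤ A k x y := fun k x y => by positivity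
  have hbdd : ∀ k x, BddBelow (range (A k x)) := fun k x =>
    ⟨0, by rintro _ ⟨y, rfl⟩; exact hA0 k x y⟩
  have hmin : ∀ (k : ℕ) y, min (f y) (k : ℝ≥0∞) ≠ ⊤ := fun k y =>
    ne_top_of_le_ne_top (ENNReal.natCast_ne_top k) (min_le_right _ _)
  have hself : ∀ k x, (⨅ y, A k x y) ≤ (min (f x) k).toReal := fun k x => by
    refine (ciInf_le (hbdd k x) x).trans ?_
    simp [A]
  have hlip : ∀ k x y, (⨅ z, A k x z) - (⨅ z, A k y z) ≤ k * dist x y := fun k x y => by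
    have : Nonempty α := ⟨x⟩
    rw [sub_le_iff_le_add, ← sub_le_iff_le_add']
    refine le_ciInf fun z => ?_
    have h1 := ciInf_le (hbdd k x) z
    have h2 : (k : ℝ) * dist x z ≤ k * dist x y + k * dist y z := by
      rw [← mul_add]; gcongr; exact dist_triangle _ _ _
    simp only [A] at h1 ⊢
    linarith
  refine ⟨fun k x => ⨅ y, A k x y, fun k x => ?_, fun k x => ?_, fun k x y => ?_, fun x k l hkl => ?_,
    fun k x => ?_, fun x => ?_⟩
  · exact Real.iInf_nonneg (hA0 k x)
  · refine (hself k x).trans ?_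
    have := ENNReal.toReal_mono (ENNReal.natCast_ne_top k) (min_le_right (f x) k)
    simpa using this
  · refine abs_sub_le_iff.2 ⟨hlip k x y, ?_⟩
    rw [dist_comm]; exact hlip k y x
  · have : Nonempty α := ⟨x⟩
    refine ciInf_mono (hbdd k x) fun y => ?_
    have h1 : (min (f y) (k : ℝ≥0∞)).toReal ≤ (min (f y) (l : ℝ≥0∞)).toReal :=
      ENNReal.toReal_mono (hmin l y) (min_le_min le_rfl (by exact_mod_cast hkl))
    have h2 : (k : ℝ) * dist x y ≤ l * dist x y := by gcongr
    simp only [A]; linarith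
  · calc ENNReal.ofReal (⨅ y, A k x y) ≤ ENNReal.ofReal (min (f x) k).toReal :=
          ENNReal.ofReal_le_ofReal (hself k x)
      _ = min (f x) k := ENNReal.ofReal_toReal (hmin k x)
      _ ≤ f x := min_le_left _ _
  · refine le_of_forall_lt fun c hc => ?_
    obtain ⟨c', hcc', hc'⟩ := ENNReal.lt_iff_exists_nnreal_btwn.1 hc
    refine hcc'.trans_le ?_
    obtain ⟨r, hr, hball⟩ := Metric.eventually_nhds_iff.1 (hf x c' hc')
    obtain ⟨k, hk⟩ := exists_nat_ge (max (c' : ℝ) (c' / r))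
    refine le_iSup_of_le k ?_
    have : Nonempty α := ⟨x⟩
    rw [← ENNReal.ofReal_coe_nnreal]
    refine ENNReal.ofReal_le_ofReal (le_ciInf fun y => ?_)
    by_cases hy : dist y x < r
    · have h1 : (c' : ℝ≥0∞) ≤ min (f y) k :=
        le_min (hball hy).le (by exact_mod_cast (le_max_left _ _).trans hk)
      have h2 := ENNReal.toReal_mono (hmin k y) h1
      simp only [ENNReal.coe_toReal] at h2
      have : 0 ≤ (k : ℝ) * dist x y := by positivity
      simp only [A]; linarith
    · have h1 : (c' : ℝ) / r ≤ k := (le_max_right _ _).trans hk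
      rw [div_le_iff₀ hr] at h1
      have h2 : (k : ℝ) * r ≤ k * dist x y := by
        gcongr; rw [dist_comm]; exact not_lt.1 hy
      have h3 : 0 ≤ (min (f y) (k : ℝ≥0∞)).toReal := ENNReal.toReal_nonneg
      simp only [A]; linarith

section Mollification

set_option maxSynthPendingDepth 3
set_option linter.unusedSectionVars false

variable {E : Type*} [NormedAddCommGroup E] [NormedSpace ℝ E] [FiniteDimensional ℝ E]
  [MeasureSpace E] [BorelSpace E] [(volume : Measure E).IsAddHaarMeasure]

/-- The convolution of `f` with the kernel `φ`. -/
def mollify (φ f : E → ℝ) (x : E) : ℝ := ∫ z, φ z * f (x - z)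

/-- `φ` is a smooth probability density supported in the ball of radius `δ`. -/
structure IsMollifier (φ : E → ℝ) (δ : ℝ) : Prop where
  contDiff : ContDiff ℝ (⊤ : ℕ∞) φ
  hasCompactSupport : HasCompactSupport φ
  nonneg : ∀ x, 0 ≤ φ x
  integral_eq_one : ∫ x, φ x = 1
  norm_le : ∀ x, φ x ≠ 0 → ‖x‖ ≤ δ

lemma exists_isMollifier {δ : ℝ} (hδ : 0 < δ) : ∃ φ : E → ℝ, IsMollifier φ δ := by
  let b : ContDiffBump (0 : E) := ⟨δ / 2, δ, by positivity, by linarith⟩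
  refine ⟨b.normed volume, b.contDiff_normed, b.hasCompactSupport_normed, b.nonneg_normed,
    b.integral_normed, fun x hx => ?_⟩
  have : x ∈ Function.support (b.normed volume) := hx
  rw [b.support_normed_eq] at this
  simpa using (Metric.mem_ball.1 this).le

namespace IsMollifier

variable {φ : E → ℝ} {δ : ℝ}

lemma integrable (hφ : IsMollifier φ δ) : Integrable φ :=
  hφ.contDiff.continuous.integrable_of_hasCompactSupport hφ.hasCompactSupport

lemma integrable_mul (hφ : IsMollifier φ δ) {f : E → ℝ} (hf : Continuous f) (x : E) :
    Integrable fun z => φ z * f (x - z) :=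
  (hφ.contDiff.continuous.mul (hf.comp (continuous_const.sub continuous_id))).integrable_of_hasCompactSupport
    hφ.hasCompactSupport.mul_right

lemma mollify_sub (hφ : IsMollifier φ δ) {f g : E → ℝ} (hf : Continuous f) (hg : Continuous g)
    (x : E) : mollify φ (fun y => f y - g y) x = mollify φ f x - mollify φ g x := by
  unfold mollify
  rw [← integral_sub (hφ.integrable_mul hf x) (hφ.integrable_mul hg x)]
  simp only [mul_sub]

/-- Mollification is a weighted average over translates of size at most `δ`. -/
lemma mollify_le_of_forall (hφ : IsMollifier φ δ) {f g : E → ℝ} (hf : Continuous f)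
    (hg : Continuous g) {x y : E} {c : ℝ}
    (h : ∀ z, ‖z‖ ≤ δ → f (x - z) ≤ g (y - z) + c) :
    mollify φ f x ≤ mollify φ g y + c := by
  unfold mollify
  calc ∫ z, φ z * f (x - z) ≤ ∫ z, (φ z * g (y - z) + φ z * c) := by
        refine integral_mono (hφ.integrable_mul hf x)
          ((hφ.integrable_mul hg y).add (hφ.integrable.mul_const c)) fun z => ?_
        by_cases hz : φ z = 0
        · simp [hz]
        · have := mul_le_mul_of_nonneg_left (h z (hφ.norm_le z hz)) (hφ.nonneg z)
          simpa [mul_add] using this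
    _ = _ := by
        rw [integral_add (hφ.integrable_mul hg y) (hφ.integrable.mul_const c), integral_mul_const,
          hφ.integral_eq_one, one_mul]

lemma mollify_const (hφ : IsMollifier φ δ) (c : ℝ) (x : E) : mollify φ (fun _ => c) x = c := by
  simp [mollify, integral_mul_const, hφ.integral_eq_one]

lemma abs_mollify_le (hφ : IsMollifier φ δ) {f : E → ℝ} (hf : Continuous f) {K : ℝ}
    (hK : ∀ x, |f x| ≤ K) (x : E) : |mollify φ f x| ≤ K := by
  refine abs_le.2 ⟨?_, ?_⟩
  · have := hφ.mollify_le_of_forall (f := fun _ => -K) (g := f) (c := 0) (x := x) (y := x)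
      continuous_const hf (fun z _ => by simpa using (abs_le.1 (hK _)).1)
    rw [hφ.mollify_const] at this; linarith
  · have := hφ.mollify_le_of_forall (f := f) (g := fun _ => K) (c := 0) (x := x) (y := x)
      hf continuous_const (fun z _ => by simpa using (abs_le.1 (hK _)).2)
    rw [hφ.mollify_const] at this; linarith

lemma abs_mollify_sub_le (hφ : IsMollifier φ δ) {f : E → ℝ} (hf : Continuous f) {Λ : ℝ}
    (hΛ0 : 0 ≤ Λ) (hΛ : ∀ x y, |f x - f y| ≤ Λ * ‖x - y‖) (x : E) :
    |mollify φ f x - f x| ≤ Λ * δ := by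
  have key : ∀ z : E, ‖z‖ ≤ δ → |f (x - z) - f x| ≤ Λ * δ := fun z hz => by
    refine (hΛ _ _).trans ?_
    gcongr
    simpa using hz
  refine abs_sub_le_iff.2 ⟨?_, ?_⟩
  · have := hφ.mollify_le_of_forall (f := f) (g := fun _ => f x) (c := Λ * δ) (x := x) (y := x)
      hf continuous_const (fun z hz => by linarith [(abs_le.1 (key z hz)).2])
    rw [hφ.mollify_const] at this; linarith
  · have := hφ.mollify_le_of_forall (f := fun _ => f x) (g := f) (c := Λ * δ) (x := x) (y := x)
      continuous_const hf (fun z hz => by linarith [(abs_le.1 (key z hz)).1])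
    rw [hφ.mollify_const] at this; linarith

lemma mollify_eq_convolution (f : E → ℝ) :
    mollify φ f = convolution φ f (ContinuousLinearMap.lsmul ℝ ℝ) volume := by
  ext x; simp [mollify, convolution]

lemma contDiff_mollify (hφ : IsMollifier φ δ) {f : E → ℝ} (hf : Continuous f) :
    ContDiff ℝ (⊤ : ℕ∞) (mollify φ f) := by
  rw [mollify_eq_convolution]
  exact hφ.hasCompactSupport.contDiff_convolution_left _ hφ.contDiff hf.locallyIntegrable

lemma norm_convolution_le {F G : Type*} [NormedAddCommGroup F] [NormedSpace ℝ F]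
    [NormedAddCommGroup G] [NormedSpace ℝ G] (L : F →L[ℝ] ℝ →L[ℝ] G) {ψ : E → F}
    (hψ : Integrable ψ) {f : E → ℝ} {K : ℝ} (hK : ∀ x, |f x| ≤ K) (x : E) :
    ‖convolution ψ f L volume x‖ ≤ ‖L‖ * (∫ z, ‖ψ z‖) * K := by
  have hK0 : 0 ≤ K := (abs_nonneg _).trans (hK 0)
  calc ‖convolution ψ f L volume x‖ ≤ ∫ z, ‖L‖ * ‖ψ z‖ * K := by
        refine norm_integral_le_of_norm_le ((hψ.norm.const_mul _).mul_const _)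
          (.of_forall fun z => ?_)
        refine (L.le_opNorm₂ _ _).trans ?_
        gcongr
        exact hK _
    _ = _ := by rw [integral_mul_const, integral_const_mul]

/-- Derivative bounds for mollified functions that only depend on the sup norm. -/
lemma exists_fderiv_bound (hφ : IsMollifier φ δ) : ∃ C, 0 ≤ C ∧ ∀ (f : E → ℝ) (K : ℝ),
    Continuous f → (∀ x, |f x| ≤ K) →
    (∀ x, ‖fderiv ℝ (mollify φ f) x‖ ≤ C * K) ∧
    ∀ x y, ‖fderiv ℝ (mollify φ f) x - fderiv ℝ (mollify φ f) y‖ ≤ C * K * ‖x - y‖ := by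
  let L := ContinuousLinearMap.lsmul ℝ ℝ (E := ℝ)
  let L1 := L.precompL E
  let L2 := L1.precompL E
  have h1 : ContDiff ℝ 1 φ := hφ.contDiff.of_le (by exact_mod_cast le_top)
  have h2 : ContDiff ℝ 1 (fderiv ℝ φ) := hφ.contDiff.fderiv_right (by norm_cast)
  have hs1 := hφ.hasCompactSupport.fderiv ℝ
  have hs2 := hs1.fderiv ℝ
  have i1 : Integrable (fderiv ℝ φ) := h2.continuous.integrable_of_hasCompactSupport hs1
  have i2 : Integrable (fderiv ℝ (fderiv ℝ φ)) :=
    (h2.continuous_fderiv one_ne_zero).integrable_of_hasCompactSupport hs2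
  refine ⟨max (‖L1‖ * ∫ z, ‖fderiv ℝ φ z‖) (‖L2‖ * ∫ z, ‖fderiv ℝ (fderiv ℝ φ) z‖),
    le_max_of_le_left (by positivity), fun f K hf hK => ?_⟩
  have hK0 : 0 ≤ K := (abs_nonneg _).trans (hK 0)
  have d1 : ∀ x, HasFDerivAt (mollify φ f) (convolution (fderiv ℝ φ) f L1 volume x) x := by
    rw [mollify_eq_convolution]
    exact hφ.hasCompactSupport.hasFDerivAt_convolution_left L h1 hf.locallyIntegrable
  have d2 := hs1.hasFDerivAt_convolution_left L1 h2 (hf.locallyIntegrable (μ := volume))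
  have e1 : fderiv ℝ (mollify φ f) = convolution (fderiv ℝ φ) f L1 volume :=
    funext fun x => (d1 x).fderiv
  rw [e1]
  refine ⟨fun x => (norm_convolution_le L1 i1 hK x).trans ?_, fun x y => ?_⟩
  · gcongr; exact le_max_left _ _
  · refine Convex.norm_image_sub_le_of_norm_hasFDerivWithin_le (𝕜 := ℝ) (s := univ)
      (fun z _ => (d2 z).hasFDerivWithinAt) (fun z _ => ?_) convex_univ (mem_univ y) (mem_univ x)
    refine (norm_convolution_le L2 i2 hK z).trans ?_
    gcongr; exact le_max_right _ _

end IsMollifier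

end Mollification

section Transport

open ProbabilityTheory

set_option maxSynthPendingDepth 3
set_option linter.unusedSectionVars false

variable {E : Type*} [NormedAddCommGroup E] [NormedSpace ℝ E] [FiniteDimensional ℝ E]
  [MeasureSpace E] [BorelSpace E] [(volume : Measure E).IsAddHaarMeasure]

lemma Measurable.fderiv_apply {α : Type*} [MeasurableSpace α] {u : E → ℝ}
    (hu : ContDiff ℝ (⊤ : ℕ∞) u) {f g : α → E} (hf : Measurable f) (hg : Measurable g) :
    Measurable fun a => fderiv ℝ u (f a) (g a) := by
  have h : Continuous fun p : E × E => fderiv ℝ u p.1 p.2 :=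
    ((hu.continuous_fderiv (by simp)).comp continuous_fst).clm_apply continuous_snd
  exact h.measurable.comp (hf.prodMk hg)

/-- First order Taylor estimate for a function with Lipschitz derivative. -/
lemma ContDiff.le_sub_fderiv_add {u : E → ℝ} (hu : ContDiff ℝ (⊤ : ℕ∞) u) {C : ℝ} (hC0 : 0 ≤ C)
    (hC : ∀ x y, ‖fderiv ℝ u x - fderiv ℝ u y‖ ≤ C * ‖x - y‖) (y h : E) :
    u (y - h) ≤ u y - fderiv ℝ u y h + C * ‖h‖ ^ 2 := by
  have hd : Differentiable ℝ u := hu.differentiable (by simp)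
  have := Convex.norm_image_sub_le_of_norm_hasFDerivWithin_le' (𝕜 := ℝ) (f := u)
    (f' := fderiv ℝ u) (φ := fderiv ℝ u y) (C := C * ‖h‖) (s := Metric.closedBall y ‖h‖)
    (x := y) (y := y - h) (fun z _ => (hd z).hasFDerivAt.hasFDerivWithinAt) (fun z hz => ?_)
    (convex_closedBall _ _) (by simp) (by simp)
  · have h2 := (le_abs_self _).trans this
    simp only [sub_sub_cancel_left, map_neg, norm_neg] at h2
    nlinarith
  · refine (hC z y).trans ?_
    gcongr
    simpa [dist_eq_norm] using hz

lemma integral_const_add_mul_sub {α : Type*} [MeasurableSpace α] {μ : Measure α}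
    [IsFiniteMeasure μ] {f g : α → ℝ} (hf : Integrable f μ) (hg : Integrable g μ) (c θ : ℝ) :
    ∫ x, c + θ * (f x - g x) ∂μ = c * μ.real univ + θ * (∫ x, f x ∂μ - ∫ x, g x ∂μ) := by
  have h : Integrable (fun x => θ * (f x - g x)) μ := (hf.sub hg).const_mul θ
  rw [integral_add (integrable_const c) h, integral_const_mul, integral_sub hf hg]
  simp [mul_comm]

variable {τ : Measure ℝ} {κ : Kernel ℝ E} {b : ℝ → E → E} {T : ℝ}

lemma integrable_integral_kernel [IsFiniteMeasure τ] [IsMarkovKernel κ] {f : ℝ → E → ℝ}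
    (hf : Measurable (Function.uncurry f)) {K : ℝ} (hK : ∀ r y, |f r y| ≤ K) :
    Integrable (fun r => ∫ y, f r y ∂κ r) τ := by
  refine Integrable.of_bound (C := K) ?_ (.of_forall fun r => ?_)
  · exact (StronglyMeasurable.integral_kernel_prod_right (κ := κ)
      hf.stronglyMeasurable).aestronglyMeasurable
  · refine (norm_integral_le_of_norm_le_const (C := K) (.of_forall fun y => ?_)).trans (by simp)
    simpa using hK r y

/-- A curve of probability measures transported by the velocity field `b`, bounded by one, with
respect to the clock `τ`. -/
structure IsTransport (τ : Measure ℝ) (κ : Kernel ℝ E) (b : ℝ → E → E) (T : ℝ) : Prop where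
  measurable : Measurable (Function.uncurry b)
  norm_le : ∀ r y, ‖b r y‖ ≤ 1
  integral_sub : ∀ u : E → ℝ, ContDiff ℝ (⊤ : ℕ∞) u → (∃ C, ∀ x, |u x| ≤ C) →
    (∃ C, ∀ x, ‖fderiv ℝ u x‖ ≤ C) → ∀ s t, 0 ≤ s → s ≤ t → t ≤ T →
    ∫ y, u y ∂κ t - ∫ y, u y ∂κ s = ∫ r in Ioc s t, ∫ y, fderiv ℝ u y (b r y) ∂κ r ∂τ

namespace IsTransport

lemma abs_fderiv_le (h : IsTransport τ κ b T) {u : E → ℝ} {C : ℝ}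
    (hC : ∀ x, ‖fderiv ℝ u x‖ ≤ C) (r : ℝ) (y : E) : |fderiv ℝ u y (b r y)| ≤ C := by
  refine ((fderiv ℝ u y).le_opNorm _).trans ?_
  calc ‖fderiv ℝ u y‖ * ‖b r y‖ ≤ C * 1 := by
        gcongr
        · exact (norm_nonneg _).trans (hC y)
        · exact hC y
        · exact h.norm_le r y
    _ = C := mul_one C

lemma abs_integral_sub_le [IsFiniteMeasure τ] [IsMarkovKernel κ] (h : IsTransport τ κ b T)
    {u : E → ℝ} (hu : ContDiff ℝ (⊤ : ℕ∞) u) (hub : ∃ C, ∀ x, |u x| ≤ C)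
    {C : ℝ} (hC : ∀ x, ‖fderiv ℝ u x‖ ≤ C) {s t : ℝ} (hs : 0 ≤ s) (hst : s ≤ t) (htT : t ≤ T) :
    |∫ y, u y ∂κ t - ∫ y, u y ∂κ s| ≤ C * τ.real (Ioc s t) := by
  rw [h.integral_sub u hu hub ⟨C, hC⟩ s t hs hst htT]
  rw [← Real.norm_eq_abs]
  refine norm_setIntegral_le_of_norm_le_const (measure_lt_top τ _) fun r _ => ?_
  refine (norm_integral_le_of_norm_le_const (C := C) (.of_forall fun y => ?_)).trans (by simp)
  exact h.abs_fderiv_le hC r y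

/-- One step of the dynamic programming inequality. -/
lemma integral_le_of_step [IsFiniteMeasure τ] [IsMarkovKernel κ] (h : IsTransport τ κ b T)
    {u w : E → ℝ} (hu : ContDiff ℝ (⊤ : ℕ∞) u) (hw : ContDiff ℝ (⊤ : ℕ∞) w)
    (hub : ∃ C, ∀ x, |u x| ≤ C) (hwb : ∃ C, ∀ x, |w x| ≤ C)
    {C : ℝ} (hC : ∀ x, ‖fderiv ℝ u x‖ ≤ C) {s t : ℝ} (hs : 0 ≤ s) (hst : s ≤ t) (htT : t ≤ T)
    {ℓ : E → E → ℝ} (hℓ : Measurable (Function.uncurry ℓ)) {K : ℝ}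
    (hK : ∀ y v, ‖v‖ ≤ 1 → |ℓ y v| ≤ K)
    (hstep : ∀ y v, ‖v‖ ≤ 1 → w y ≤ u (y - τ.real (Ioc s t) • v) + τ.real (Ioc s t) * ℓ y v)
    {Cu : ℝ} (hCu0 : 0 ≤ Cu) (hCu : ∀ x y, ‖fderiv ℝ u x - fderiv ℝ u y‖ ≤ Cu * ‖x - y‖)
    {C1 : ℝ} (hC1 : ∀ x, ‖fderiv ℝ (fun y => w y - u y) x‖ ≤ C1 * τ.real (Ioc s t)) :
    ∫ y, w y ∂κ t ≤ ∫ y, u y ∂κ s + ∫ r in Ioc s t, ∫ y, ℓ y (b r y) ∂κ r ∂τ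
      + (C1 + Cu) * τ.real (Ioc s t) ^ 2 := by
  set θ := τ.real (Ioc s t) with hθ
  have hθ0 : 0 ≤ θ := measureReal_nonneg
  obtain ⟨Ku, hKu⟩ := hub
  obtain ⟨Kw, hKw⟩ := hwb
  have iu : ∀ r, Integrable u (κ r) := fun r =>
    .of_bound hu.continuous.aestronglyMeasurable Ku (.of_forall hKu)
  have iw : ∀ r, Integrable w (κ r) := fun r =>
    .of_bound hw.continuous.aestronglyMeasurable Kw (.of_forall hKw)
  have hequ := h.integral_sub u hu ⟨Ku, hKu⟩ ⟨C, hC⟩ s t hs hst htT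
  rcases hθ0.eq_or_lt with h0 | hpos
  · have hz : τ.restrict (Ioc s t) = 0 := by
      rw [Measure.restrict_eq_zero]
      exact (measureReal_eq_zero_iff).1 h0.symm
    rw [hz, integral_zero_measure] at hequ ⊢
    have : ∫ y, w y ∂κ t ≤ ∫ y, u y ∂κ t :=
      integral_mono (iw t) (iu t) fun y => by
        simpa [← h0] using hstep y 0 (by simp)
    simp only [← h0]
    linarith
  · have mD : Measurable (Function.uncurry fun r y => fderiv ℝ u y (b r y)) :=
      Measurable.fderiv_apply hu measurable_snd h.measurable
    have mL : Measurable (Function.uncurry fun r y => ℓ y (b r y)) :=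
      hℓ.comp (measurable_snd.prodMk h.measurable)
    have bL : ∀ r y, |ℓ y (b r y)| ≤ K := fun r y => hK _ _ (h.norm_le r y)
    have iD : ∀ r, Integrable (fun y => fderiv ℝ u y (b r y)) (κ r) := fun r =>
      .of_bound (mD.comp measurable_prodMk_left).aestronglyMeasurable C
        (.of_forall fun y => h.abs_fderiv_le hC r y)
    have iL : ∀ r, Integrable (fun y => ℓ y (b r y)) (κ r) := fun r =>
      .of_bound (mL.comp measurable_prodMk_left).aestronglyMeasurable K (.of_forall (bL r))
    have IA := integrable_integral_kernel (τ := τ.restrict (Ioc s t)) (κ := κ) mD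
      (fun r y => h.abs_fderiv_le hC r y)
    have IB := integrable_integral_kernel (τ := τ.restrict (Ioc s t)) (κ := κ) mL bL
    set q := ∫ y, w y - u y ∂κ t with hq
    have key : ∀ r ∈ Ioc s t, q ≤ (C1 + Cu) * θ ^ 2 +
        θ * (∫ y, ℓ y (b r y) ∂κ r - ∫ y, fderiv ℝ u y (b r y) ∂κ r) := by
      intro r hr
      have e1 : ∫ y, w y - u y ∂κ r ≤
          ∫ y, Cu * θ ^ 2 + θ * (ℓ y (b r y) - fderiv ℝ u y (b r y)) ∂κ r := by
        refine integral_mono ((iw r).sub (iu r)) ((integrable_const _).add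
          (((iL r).sub (iD r)).const_mul θ)) fun y => ?_
        have a1 := hstep y (b r y) (h.norm_le r y)
        have a2 := hu.le_sub_fderiv_add hCu0 hCu y (θ • b r y)
        have a3 : Cu * ‖θ • b r y‖ ^ 2 ≤ Cu * θ ^ 2 := by
          rw [norm_smul, Real.norm_of_nonneg hθ0]
          have := h.norm_le r y
          gcongr
          nlinarith
        simp only [map_smul, smul_eq_mul] at a2
        simp only
        nlinarith
      have e3 : ∫ y, Cu * θ ^ 2 + θ * (ℓ y (b r y) - fderiv ℝ u y (b r y)) ∂κ r =
          Cu * θ ^ 2 + θ * (∫ y, ℓ y (b r y) ∂κ r - ∫ y, fderiv ℝ u y (b r y) ∂κ r) := by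
        rw [integral_const_add_mul_sub (iL r) (iD r)]
        simp
      have e2 : q - ∫ y, w y - u y ∂κ r ≤ C1 * θ * θ := by
        refine (le_abs_self _).trans ((h.abs_integral_sub_le (hw.sub hu) ⟨Kw + Ku, fun x =>
          (abs_sub _ _).trans (add_le_add (hKw x) (hKu x))⟩ hC1 (hs.trans hr.1.le) hr.2 htT).trans ?_)
        have : 0 ≤ C1 * θ := (norm_nonneg _).trans (hC1 0)
        gcongr
        exact measureReal_mono (Ioc_subset_Ioc_left hr.1.le)
      rw [e3] at e1
      linarith
    have hInt : q * θ ≤ ∫ r in Ioc s t, (C1 + Cu) * θ ^ 2 +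
        θ * (∫ y, ℓ y (b r y) ∂κ r - ∫ y, fderiv ℝ u y (b r y) ∂κ r) ∂τ := by
      have := setIntegral_mono_on (μ := τ) (s := Ioc s t) (f := fun _ => q) (integrable_const _)
        ((integrable_const ((C1 + Cu) * θ ^ 2)).add ((IB.sub IA).const_mul θ)) measurableSet_Ioc key
      simpa [mul_comm, hθ] using this
    rw [integral_const_add_mul_sub IB IA, ← hequ, hq, MeasureTheory.integral_sub (iw t) (iu t),
      measureReal_restrict_apply_univ, ← hθ] at hInt
    refine le_of_mul_le_mul_right ?_ hpos
    nlinarith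

end IsTransport

end Transport

section DynamicProgramming

open ProbabilityTheory Metric

set_option maxSynthPendingDepth 3
set_option linter.unusedSectionVars false

variable {E : Type*} [NormedAddCommGroup E] [NormedSpace ℝ E] [FiniteDimensional ℝ E]
  [MeasureSpace E] [BorelSpace E] [(volume : Measure E).IsAddHaarMeasure]

/-- The optimal value of moving for a time `θ` with speed at most one at running cost `ℓ`,
starting with cost `U`. -/
def costStep (θ : ℝ) (ℓ : E → E → ℝ) (U : E → ℝ) (x : E) : ℝ :=
  ⨅ v : closedBall (0 : E) 1, (θ * ℓ x v + U (x - θ • (v : E)))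

lemma exists_costStep_eq {θ : ℝ} {ℓ : E → E → ℝ} {U : E → ℝ}
    (hℓ : Continuous (Function.uncurry ℓ)) (hU : Continuous U) (x : E) :
    (∃ v, ‖v‖ ≤ 1 ∧ costStep θ ℓ U x = θ * ℓ x v + U (x - θ • v)) ∧
      ∀ v, ‖v‖ ≤ 1 → costStep θ ℓ U x ≤ θ * ℓ x v + U (x - θ • v) := by
  have hcont : Continuous fun v : E => θ * ℓ x v + U (x - θ • v) :=
    (continuous_const.mul (hℓ.comp (continuous_const.prodMk continuous_id))).add
      (hU.comp (continuous_const.sub (continuous_const.smul continuous_id)))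
  obtain ⟨v, hv, hmin⟩ := (isCompact_closedBall (0 : E) 1).exists_isMinOn
    ⟨0, by simp⟩ hcont.continuousOn
  have hle : ∀ w : closedBall (0 : E) 1, θ * ℓ x v + U (x - θ • v) ≤
      θ * ℓ x w + U (x - θ • (w : E)) := fun w => hmin w.2
  have hbdd : BddBelow (range fun w : closedBall (0 : E) 1 =>
      θ * ℓ x w + U (x - θ • (w : E))) := ⟨_, by rintro _ ⟨w, rfl⟩; exact hle w⟩
  refine ⟨⟨v, by simpa using hv, le_antisymm (ciInf_le hbdd ⟨v, hv⟩) ?_⟩, fun w hw =>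
    ciInf_le hbdd ⟨w, by simpa using hw⟩⟩
  have : Nonempty (closedBall (0 : E) 1) := ⟨⟨0, by simp⟩⟩
  exact le_ciInf hle

section costStep

variable {θ K M : ℝ} {ℓ : E → E → ℝ} {U : E → ℝ}

lemma abs_costStep_sub_le (hθ : 0 ≤ θ) (hℓ : Continuous (Function.uncurry ℓ))
    (hU : Continuous U) (hℓL : ∀ x y v, ‖v‖ ≤ 1 → |ℓ x v - ℓ y v| ≤ K * ‖x - y‖)
    (hUL : ∀ x y, |U x - U y| ≤ M * ‖x - y‖) (x y : E) :
    |costStep θ ℓ U x - costStep θ ℓ U y| ≤ (M + K * θ) * ‖x - y‖ := by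
  have key : ∀ x y, costStep θ ℓ U x - costStep θ ℓ U y ≤ (M + K * θ) * ‖x - y‖ := fun x y => by
    obtain ⟨v, hv, he⟩ := (exists_costStep_eq (θ := θ) hℓ hU y).1
    have h1 := (exists_costStep_eq (θ := θ) hℓ hU x).2 v hv
    have h2 := (abs_le.1 (hℓL x y v hv)).2
    have h3 := (abs_le.1 (hUL (x - θ • v) (y - θ • v))).2
    rw [sub_sub_sub_cancel_right] at h3
    nlinarith
  refine abs_sub_le_iff.2 ⟨key x y, ?_⟩
  rw [norm_sub_rev]
  exact key y x

lemma abs_costStep_sub_self_le (hθ : 0 ≤ θ) (hℓ : Continuous (Function.uncurry ℓ))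
    (hU : Continuous U) (hℓ0 : ∀ x v, 0 ≤ ℓ x v) (hℓK : ∀ x v, ‖v‖ ≤ 1 → ℓ x v ≤ K)
    (hM : 0 ≤ M) (hUL : ∀ x y, |U x - U y| ≤ M * ‖x - y‖) (x : E) :
    |costStep θ ℓ U x - U x| ≤ θ * (K + M) := by
  obtain ⟨⟨v, hv, he⟩, hle⟩ := exists_costStep_eq (θ := θ) hℓ hU x
  have hK : 0 ≤ K := (hℓ0 0 0).trans (hℓK 0 0 (by simp))
  refine abs_sub_le_iff.2 ⟨?_, ?_⟩
  · have h1 := hle 0 (by simp)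
    have h2 := hℓK x 0 (by simp)
    simp only [smul_zero, sub_zero] at h1
    nlinarith [mul_nonneg hθ hM, mul_le_mul_of_nonneg_left h2 hθ]
  · have h1 := (abs_le.1 (hUL x (x - θ • v))).2
    rw [sub_sub_cancel, norm_smul, Real.norm_of_nonneg hθ] at h1
    have h2 : M * (θ * ‖v‖) ≤ M * (θ * 1) := by gcongr
    nlinarith [mul_nonneg hθ (hℓ0 x v), mul_nonneg hθ hK]

lemma abs_costStep_le (hθ : 0 ≤ θ) (hℓ : Continuous (Function.uncurry ℓ))
    (hU : Continuous U) (hℓ0 : ∀ x v, 0 ≤ ℓ x v) (hℓK : ∀ x v, ‖v‖ ≤ 1 → ℓ x v ≤ K)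
    (hUM : ∀ x, |U x| ≤ M) (x : E) : |costStep θ ℓ U x| ≤ M + K * θ := by
  obtain ⟨v, hv, he⟩ := (exists_costStep_eq (θ := θ) hℓ hU x).1
  have h1 := hℓ0 x v
  have h2 := hℓK x v hv
  have h3 := abs_le.1 (hUM (x - θ • v))
  rw [he]
  refine abs_le.2 ⟨?_, ?_⟩ <;> nlinarith

end costStep

/-- The value function of the discrete control problem with running cost `L` and point costs `g`. -/
def valueFn (θ : ℕ → ℝ) (L : ℕ → E → E → ℝ) (g : ℕ → E → ℝ) : ℕ → E → ℝ
  | 0 => g 0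
  | i + 1 => fun x => g (i + 1) x + costStep (θ i) (L i) (valueFn θ L g i) x

/-- Running costs and point costs, with bounds, of a discrete control problem. -/
structure IsCost (θ : ℕ → ℝ) (L : ℕ → E → E → ℝ) (g : ℕ → E → ℝ) (K : ℝ) (c : ℕ → ℝ) : Prop where
  step_nonneg : ∀ i, 0 ≤ θ i
  continuous : ∀ i, Continuous (Function.uncurry (L i))
  nonneg : ∀ i x v, 0 ≤ L i x v
  le : ∀ i x v, ‖v‖ ≤ 1 → L i x v ≤ K
  lipschitz : ∀ i x y v, ‖v‖ ≤ 1 → |L i x v - L i y v| ≤ K * ‖x - y‖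
  abs_le : ∀ i x, |g i x| ≤ K * c i
  abs_sub_le : ∀ i x y, |g i x - g i y| ≤ K * c i * ‖x - y‖

lemma continuous_of_abs_sub_le {f : E → ℝ} {M : ℝ} (h : ∀ x y, |f x - f y| ≤ M * ‖x - y‖) :
    Continuous f := by
  refine (LipschitzWith.of_dist_le_mul (K := M.toNNReal) fun x y => ?_).continuous
  rw [Real.dist_eq, dist_eq_norm]
  exact (h x y).trans (by gcongr; exact Real.le_coe_toNNReal M)

namespace IsCost

variable {θ : ℕ → ℝ} {L : ℕ → E → E → ℝ} {g : ℕ → E → ℝ} {K : ℝ} {c : ℕ → ℝ}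

lemma bound_nonneg (h : IsCost θ L g K c) : 0 ≤ K := (h.nonneg 0 0 0).trans (h.le 0 0 0 (by simp))

lemma continuous_point (h : IsCost θ L g K c) (i : ℕ) : Continuous (g i) :=
  continuous_of_abs_sub_le (h.abs_sub_le i)

lemma valueFn_bound (h : IsCost θ L g K c) (i : ℕ) :
    (∀ x, |valueFn θ L g i x| ≤
        K * (∑ j ∈ Finset.range (i + 1), c j + ∑ j ∈ Finset.range i, θ j)) ∧
    ∀ x y, |valueFn θ L g i x - valueFn θ L g i y| ≤
        K * (∑ j ∈ Finset.range (i + 1), c j + ∑ j ∈ Finset.range i, θ j) * ‖x - y‖ := by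
  induction i with
  | zero => simpa [valueFn] using ⟨h.abs_le 0, h.abs_sub_le 0⟩
  | succ i ih =>
    have hc := continuous_of_abs_sub_le ih.2
    set M := K * (∑ j ∈ Finset.range (i + 1), c j + ∑ j ∈ Finset.range i, θ j) with hM
    have e : K * (∑ j ∈ Finset.range (i + 1 + 1), c j + ∑ j ∈ Finset.range (i + 1), θ j) =
        K * c (i + 1) + (M + K * θ i) := by
      rw [Finset.sum_range_succ c (i + 1), Finset.sum_range_succ θ i, hM]; ring
    rw [e]
    refine ⟨fun x => (abs_add_le _ _).trans (add_le_add (h.abs_le _ x)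
      (abs_costStep_le (h.step_nonneg i) (h.continuous i) hc (h.nonneg i) (h.le i) ih.1 x)),
      fun x y => ?_⟩
    have h1 := abs_costStep_sub_le (h.step_nonneg i) (h.continuous i) hc (h.lipschitz i) ih.2 x y
    have h2 := h.abs_sub_le (i + 1) x y
    simp only [valueFn]
    rw [add_sub_add_comm, add_mul]
    exact (abs_add_le _ _).trans (add_le_add h2 h1)

lemma exists_path (h : IsCost θ L g K c) (n : ℕ) (x : E) : ∃ p v : ℕ → E, p n = x ∧
    (∀ i, ‖v i‖ ≤ 1) ∧ (∀ i < n, p (i + 1) = p i + θ i • v i) ∧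
    ∑ i ∈ Finset.range (n + 1), g i (p i) + ∑ i ∈ Finset.range n, θ i * L i (p (i + 1)) (v i) =
      valueFn θ L g n x := by
  induction n generalizing x with
  | zero => exact ⟨fun _ => x, fun _ => 0, rfl, by simp, by simp, by simp [valueFn]⟩
  | succ n ih =>
    have hc := continuous_of_abs_sub_le (h.valueFn_bound n).2
    obtain ⟨w, hw, he⟩ := (exists_costStep_eq (θ := θ n) (h.continuous n) hc x).1
    obtain ⟨p, v, hp, hv, hpv, hs⟩ := ih (x - θ n • w)
    refine ⟨fun i => if i ≤ n then p i else x, fun i => if i < n then v i else w, by simp,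
      fun i => ?_, fun i hi => ?_, ?_⟩
    · dsimp only; split_ifs
      exacts [hv i, hw]
    · rcases Nat.lt_succ_iff_lt_or_eq.1 hi with hi | rfl
      · simp [hi, hi.le, Nat.succ_le_of_lt hi, hpv i hi]
      · simp [hp]
    · dsimp only
      have e1 : ∀ i ∈ Finset.range (n + 1), g i (if i ≤ n then p i else x) = g i (p i) :=
        fun i hi => by simp [Nat.lt_succ_iff.1 (Finset.mem_range.1 hi)]
      have e2 : ∀ i ∈ Finset.range n, θ i * L i (if i + 1 ≤ n then p (i + 1) else x)
          (if i < n then v i else w) = θ i * L i (p (i + 1)) (v i) :=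
        fun i hi => by simp [Nat.succ_le_of_lt (Finset.mem_range.1 hi), Finset.mem_range.1 hi]
      rw [Finset.sum_range_succ _ (n + 1), Finset.sum_congr rfl e1,
        Finset.sum_range_succ (fun i => θ i * L i _ _), Finset.sum_congr rfl e2]
      simp only [valueFn, he, ← hs, add_le_iff_nonpos_right, nonpos_iff_eq_zero, one_ne_zero,
        lt_irrefl, if_false]
      ring

end IsCost

variable {τ : Measure ℝ} {κ : Kernel ℝ E} {b : ℝ → E → E} {T : ℝ}

/-- The mollified value functions are subsolutions along the transported curve. -/
lemma IsTransport.integral_mollify_valueFn_le [IsFiniteMeasure τ] [IsMarkovKernel κ]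
    (h : IsTransport τ κ b T) {t : ℕ → ℝ} (htm : Monotone t) (ht0 : 0 ≤ t 0) {n : ℕ}
    (htn : t n ≤ T) {L : ℕ → E → E → ℝ} {g : ℕ → E → ℝ} {K : ℝ} {c : ℕ → ℝ}
    (hc : IsCost (fun i => τ.real (Ioc (t i) (t (i + 1)))) L g K c) {M : ℝ} (hM0 : 0 ≤ M)
    (hM : ∀ i ≤ n, K * (∑ j ∈ Finset.range (i + 1), c j +
      ∑ j ∈ Finset.range i, τ.real (Ioc (t j) (t (j + 1)))) ≤ M)
    {φ : E → ℝ} {δ : ℝ} (hδ : 0 ≤ δ) (hφ : IsMollifier φ δ) {C : ℝ} (hC0 : 0 ≤ C)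
    (hC : ∀ (f : E → ℝ) (K : ℝ), Continuous f → (∀ x, |f x| ≤ K) →
      (∀ x, ‖fderiv ℝ (mollify φ f) x‖ ≤ C * K) ∧
      ∀ x y, ‖fderiv ℝ (mollify φ f) x - fderiv ℝ (mollify φ f) y‖ ≤ C * K * ‖x - y‖)
    {i : ℕ} (hi : i ≤ n) :
    ∫ y, mollify φ (valueFn (fun i => τ.real (Ioc (t i) (t (i + 1)))) L g i) y ∂κ (t i) ≤
      ∑ j ∈ Finset.range (i + 1), ∫ y, mollify φ (g j) y ∂κ (t j) +
      ∑ j ∈ Finset.range i,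
        (∫ r in Ioc (t j) (t (j + 1)), ∫ y, (L j y (b r y) + K * δ) ∂κ r ∂τ +
          C * (K + 2 * M) * τ.real (Ioc (t j) (t (j + 1))) ^ 2) := by
  set θ : ℕ → ℝ := fun i => τ.real (Ioc (t i) (t (i + 1))) with hθ
  induction i with
  | zero => simp [valueFn]
  | succ i ih =>
    specialize ih (by omega)
    set U := valueFn θ L g i with hU
    set W := costStep (θ i) (L i) U with hW
    have hUM : ∀ x, |U x| ≤ M := fun x => ((hc.valueFn_bound i).1 x).trans (hM i (by omega))
    have hUL : ∀ x y, |U x - U y| ≤ M * ‖x - y‖ := fun x y =>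
      ((hc.valueFn_bound i).2 x y).trans (by gcongr; exact hM i (by omega))
    have hUc := continuous_of_abs_sub_le hUL
    have hθ0 := hc.step_nonneg i
    have hWc : Continuous W := continuous_of_abs_sub_le
      (abs_costStep_sub_le hθ0 (hc.continuous i) hUc (hc.lipschitz i) hUL)
    have hWM := abs_costStep_le hθ0 (hc.continuous i) hUc (hc.nonneg i) (hc.le i) hUM
    have hWU := abs_costStep_sub_self_le hθ0 (hc.continuous i) hUc (hc.nonneg i) (hc.le i) hM0 hUL
    have hV : ∀ x, mollify φ (valueFn θ L g (i + 1)) x =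
        mollify φ (g (i + 1)) x + mollify φ W x := fun x => by
      have hVc := continuous_of_abs_sub_le (hc.valueFn_bound (i + 1)).2
      have := hφ.mollify_sub hVc (hc.continuous_point (i + 1)) x
      have e : (fun y => valueFn θ L g (i + 1) y - g (i + 1) y) = W := by
        ext y; simp [valueFn, hW, hU]
      rw [e] at this
      linarith
    have hgW : Integrable (mollify φ W) (κ (t (i + 1))) :=
      .of_bound (hφ.contDiff_mollify hWc).continuous.aestronglyMeasurable _
        (.of_forall fun x => hφ.abs_mollify_le hWc hWM x)
    have hgg : Integrable (mollify φ (g (i + 1))) (κ (t (i + 1))) :=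
      .of_bound (hφ.contDiff_mollify (hc.continuous_point _)).continuous.aestronglyMeasurable _
        (.of_forall fun x => hφ.abs_mollify_le (hc.continuous_point _) (hc.abs_le _) x)
    simp only [hV]
    rw [integral_add hgg hgW, Finset.sum_range_succ _ (i + 1)]
    simp only [Finset.sum_range_succ _ i] at ih ⊢
    have hK0 := hc.bound_nonneg
    have hti : 0 ≤ t i := ht0.trans (htm (Nat.zero_le i))
    have htT : t (i + 1) ≤ T := (htm hi).trans htn
    have hsub : ∀ y, mollify φ W y - mollify φ U y = mollify φ (fun z => W z - U z) y :=
      fun y => (hφ.mollify_sub hWc hUc y).symm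
    have := h.integral_le_of_step (u := mollify φ U) (w := mollify φ W)
      (hφ.contDiff_mollify hUc) (hφ.contDiff_mollify hWc) ⟨M, hφ.abs_mollify_le hUc hUM⟩
      ⟨_, hφ.abs_mollify_le hWc hWM⟩ (hC U M hUc hUM).1 hti (htm (Nat.le_add_right i 1)) htT
      (ℓ := fun y v => L i y v + K * δ) (K := K + K * δ)
      ((hc.continuous i).measurable.add_const _)
      (fun y v hv => by
        rw [abs_of_nonneg (add_nonneg (hc.nonneg i y v) (mul_nonneg hK0 hδ))]
        linarith [hc.le i y v hv])
      (fun y v hv => by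
        refine hφ.mollify_le_of_forall hWc hUc fun z hz => ?_
        have h1 := (exists_costStep_eq (θ := θ i) (hc.continuous i) hUc (y - z)).2 v hv
        have h2 := (abs_le.1 (hc.lipschitz i (y - z) y v hv)).2
        rw [sub_sub_cancel_left, norm_neg] at h2
        have h3 : K * ‖z‖ ≤ K * δ := by gcongr
        have h4 : θ i * L i (y - z) v ≤ θ i * (L i y v + K * δ) := by
          gcongr; linarith
        rw [sub_right_comm] at h1
        exact h1.trans (by rw [add_comm]; exact add_le_add le_rfl h4))
      (mul_nonneg hC0 hM0) (hC U M hUc hUM).2 (C1 := C * (K + M))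
      (fun x => by
        simp only [hsub]
        refine ((hC _ _ (hWc.sub hUc) hWU).1 x).trans (le_of_eq ?_)
        ring)
    have e : (C * (K + M) + C * M) * θ i ^ 2 = C * (K + 2 * M) * θ i ^ 2 := by ring
    rw [e] at this
    simp only [hθ] at this
    linarith

end DynamicProgramming

section Duality

open ProbabilityTheory Metric

set_option maxSynthPendingDepth 3
set_option linter.unusedSectionVars false

variable {E : Type*} [NormedAddCommGroup E] [NormedSpace ℝ E] [FiniteDimensional ℝ E]
  [MeasureSpace E] [BorelSpace E] [(volume : Measure E).IsAddHaarMeasure]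

/-- Short intervals have uniformly small measure. -/
def IsContinuousClock (τ : Measure ℝ) : Prop :=
  ∀ ε > 0, ∃ ρ > 0, ∀ s t, t - s ≤ ρ → τ.real (Ioc s t) ≤ ε

/-- A nonnegative running cost, bounded for speeds at most one and Lipschitz in time and space. -/
structure IsLagrangian (L : ℝ → E → E → ℝ) (K : ℝ) : Prop where
  continuous : Continuous fun p : ℝ × E × E => L p.1 p.2.1 p.2.2
  nonneg : ∀ t x v, 0 ≤ L t x v
  le : ∀ t x v, ‖v‖ ≤ 1 → L t x v ≤ K
  lipschitz : ∀ s t x y v, ‖v‖ ≤ 1 → |L s x v - L t y v| ≤ K * (|s - t| + ‖x - y‖)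

/-- A bounded Lipschitz function, with the same constant for both bounds. -/
structure IsBoundedLipschitz (G : E → ℝ) (K : ℝ) : Prop where
  abs_le : ∀ x, |G x| ≤ K
  abs_sub_le : ∀ x y, |G x - G y| ≤ K * ‖x - y‖

variable {τ : Measure ℝ} {κ : Kernel ℝ E} {b : ℝ → E → E} {T : ℝ}

lemma IsBoundedLipschitz.continuous {G : E → ℝ} {K : ℝ} (hG : IsBoundedLipschitz G K) :
    Continuous G := continuous_of_abs_sub_le hG.abs_sub_le

lemma IsBoundedLipschitz.integrable {G : E → ℝ} {K : ℝ} (hG : IsBoundedLipschitz G K)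
    (μ : Measure E) [IsFiniteMeasure μ] : Integrable G μ :=
  .of_bound hG.continuous.aestronglyMeasurable K (.of_forall hG.abs_le)

lemma IsMollifier.abs_integral_mollify_sub_le {φ : E → ℝ} {δ : ℝ} (hφ : IsMollifier φ δ)
    {G : E → ℝ} {K : ℝ} (hK : 0 ≤ K) (hG : IsBoundedLipschitz G K)
    (μ : Measure E) [IsProbabilityMeasure μ] :
    |∫ y, mollify φ G y ∂μ - ∫ y, G y ∂μ| ≤ K * δ := by
  have hm : Integrable (mollify φ G) μ :=
    .of_bound (hφ.contDiff_mollify hG.continuous).continuous.aestronglyMeasurable K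
      (.of_forall fun x => hφ.abs_mollify_le hG.continuous hG.abs_le x)
  rw [← integral_sub hm (hG.integrable μ), ← Real.norm_eq_abs]
  refine (norm_integral_le_of_norm_le_const (C := K * δ) (.of_forall fun y => ?_)).trans (by simp)
  exact hφ.abs_mollify_sub_le hG.continuous hK hG.abs_sub_le y

/-- The grid step lengths, measured by the clock. -/
def gridStep (τ : Measure ℝ) (h : ℝ) (i : ℕ) : ℝ := τ.real (Ioc (i * h) ((i + 1 : ℕ) * h))

/-- Point costs `G` and `g` placed at the grid points next to `A` and `B`. -/
def pointCost (A B : ℝ) (G g : E → ℝ) (h : ℝ) (i : ℕ) (x : E) : ℝ :=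
  (if i = ⌊A / h⌋₊ then G x else 0) + (if i = ⌊B / h⌋₊ then g x else 0)

lemma sum_pointCost {A B h : ℝ} {G g : E → ℝ} {n : ℕ} (hA : ⌊A / h⌋₊ ≤ n) (hB : ⌊B / h⌋₊ ≤ n)
    (f : ℕ → (E → ℝ) → ℝ) (hf0 : ∀ i, f i 0 = 0)
    (hf : ∀ i, f i (fun x => G x + g x) = f i G + f i g) :
    ∑ i ∈ Finset.range (n + 1), f i (pointCost A B G g h i) = f ⌊A / h⌋₊ G + f ⌊B / h⌋₊ g := by
  have e : ∀ i, f i (pointCost A B G g h i) =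
      (if i = ⌊A / h⌋₊ then f i G else 0) + (if i = ⌊B / h⌋₊ then f i g else 0) := by
    intro i
    unfold pointCost
    split_ifs
    · exact hf i
    · simp
    · simp
    · simp only [add_zero]; exact hf0 i
  simp only [e, Finset.sum_add_distrib, Finset.sum_ite_eq', Finset.mem_range]
  rw [if_pos (by omega), if_pos (by omega)]

lemma sum_gridStep_le [IsFiniteMeasure τ] {h : ℝ} (hh : 0 ≤ h) (n : ℕ) :
    ∑ i ∈ Finset.range n, gridStep τ h i ≤ τ.real univ := by
  have hmono : Monotone fun i : ℕ => (i : ℝ) * h := fun i j hij => by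
    dsimp only; gcongr
  have hd : Pairwise (Function.onFun Disjoint fun i : ℕ =>
      Ioc ((i : ℝ) * h) ((i + 1 : ℕ) * h)) := hmono.pairwise_disjoint_on_Ioc_succ
  unfold gridStep
  rw [← measureReal_biUnion_finset (fun i _ j _ hij => hd hij) fun i _ => measurableSet_Ioc]
  exact measureReal_mono (subset_univ _)

lemma sum_setIntegral_grid {F : Type*} [NormedAddCommGroup F] [NormedSpace ℝ F] {h : ℝ}
    (hh : 0 ≤ h) (n : ℕ) {f : ℝ → F} (hf : Integrable f τ) :
    ∑ i ∈ Finset.range n, ∫ r in Ioc (i * h) ((i + 1 : ℕ) * h), f r ∂τ =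
      ∫ r in Ioc 0 (n * h), f r ∂τ := by
  have := intervalIntegral.sum_integral_adjacent_intervals (μ := τ) (f := f)
    (a := fun i : ℕ => (i : ℝ) * h) (n := n) fun _ _ => hf.intervalIntegrable
  have e : ∀ i j : ℕ, i ≤ j → ∫ r in (i * h)..(j * h), f r ∂τ = ∫ r in Ioc (i * h) (j * h), f r ∂τ :=
    fun i j hij => intervalIntegral.integral_of_le (by gcongr)
  rw [e 0 n (Nat.zero_le n)] at this
  simp only [Nat.cast_zero, zero_mul] at this
  rw [← this]
  exact Finset.sum_congr rfl fun i _ => (e i (i + 1) (Nat.le_succ i)).symm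

lemma IsTransport.abs_integral_sub_le_of_mollifier [IsFiniteMeasure τ] [IsMarkovKernel κ]
    (h : IsTransport τ κ b T) {G : E → ℝ} {K : ℝ} (hK : 0 ≤ K) (hG : IsBoundedLipschitz G K)
    {φ : E → ℝ} {δ : ℝ} (hφ : IsMollifier φ δ) {C : ℝ}
    (hC : ∀ x, ‖fderiv ℝ (mollify φ G) x‖ ≤ C * K)
    {s t : ℝ} (hs : 0 ≤ s) (hst : s ≤ t) (htT : t ≤ T) :
    |∫ y, G y ∂κ t - ∫ y, G y ∂κ s| ≤ 2 * K * δ + C * K * τ.real (Ioc s t) := by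
  have h1 := hφ.abs_integral_mollify_sub_le hK hG (κ t)
  have h2 := hφ.abs_integral_mollify_sub_le hK hG (κ s)
  have h3 := h.abs_integral_sub_le (hφ.contDiff_mollify hG.continuous)
    ⟨K, hφ.abs_mollify_le hG.continuous hG.abs_le⟩ hC hs hst htT
  rw [abs_le] at *
  constructor <;> linarith

lemma isCost_grid {L : ℝ → E → E → ℝ} {K : ℝ} (hL : IsLagrangian L K) {G g : E → ℝ}
    (hG : IsBoundedLipschitz G K) (hg : IsBoundedLipschitz g K) (A B h : ℝ) :
    IsCost (gridStep τ h) (fun i => L (i * h)) (pointCost A B G g h) K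
      (fun i => (if i = ⌊A / h⌋₊ then 1 else 0) + (if i = ⌊B / h⌋₊ then 1 else 0)) where
  step_nonneg i := measureReal_nonneg
  continuous i := hL.continuous.comp (continuous_const.prodMk continuous_id)
  nonneg i := hL.nonneg _
  le i := hL.le _
  lipschitz i x y v hv := by simpa using hL.lipschitz (i * h) (i * h) x y v hv
  abs_le i x := by
    unfold pointCost
    refine (abs_add_le _ _).trans ?_
    rw [mul_add]
    gcongr <;> split_ifs <;> simp [hG.abs_le, hg.abs_le]
  abs_sub_le i x y := by
    unfold pointCost
    rw [add_sub_add_comm]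
    refine (abs_add_le _ _).trans ?_
    rw [mul_add, add_mul]
    gcongr <;> split_ifs <;> simp [hG.abs_sub_le, hg.abs_sub_le]

/-- The value function on a fine grid is an approximate subsolution. -/
lemma IsTransport.eventually_integral_valueFn_lt [IsFiniteMeasure τ] [IsMarkovKernel κ]
    (htr : IsTransport τ κ b T) (hτ : IsContinuousClock τ) (hT : 0 < T)
    {L : ℝ → E → E → ℝ} {K : ℝ} (hL : IsLagrangian L K) {G g : E → ℝ}
    (hG : IsBoundedLipschitz G K) (hg : IsBoundedLipschitz g K) {A B : ℝ}
    (hA : A ∈ Icc 0 T) (hB : B ∈ Icc 0 T) {c : ℝ}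
    (hc : ∫ r in Ioc 0 T, ∫ y, L r y (b r y) ∂κ r ∂τ + ∫ y, G y ∂κ A + ∫ y, g y ∂κ B < c) :
    ∀ᶠ n : ℕ in Filter.atTop, ∫ y, valueFn (gridStep τ (T / n)) (fun i => L (i * (T / n)))
      (pointCost A B G g (T / n)) n y ∂κ T < c := by
  have hK : 0 ≤ K := (hL.nonneg 0 0 0).trans (hL.le 0 0 0 (by simp))
  set ε := c - (∫ r in Ioc 0 T, ∫ y, L r y (b r y) ∂κ r ∂τ + ∫ y, G y ∂κ A + ∫ y, g y ∂κ B)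
    with hε
  have hε0 : 0 < ε := sub_pos.2 hc
  set Θ := τ.real univ with hΘ
  have hΘ0 : 0 ≤ Θ := measureReal_nonneg
  set M := K * (2 + Θ) with hM
  have hM0 : 0 ≤ M := by positivity
  obtain ⟨δ, hδ0, hδ⟩ : ∃ δ > 0, (M + 6 * K + K * Θ) * δ ≤ ε / 4 := by
    refine ⟨ε / 4 / (M + 6 * K + K * Θ + 1), by positivity, ?_⟩
    rw [mul_div_assoc', div_le_iff₀ (by positivity)]
    nlinarith
  obtain ⟨φ, hφ⟩ := exists_isMollifier (E := E) hδ0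
  obtain ⟨C, hC0, hC⟩ := hφ.exists_fderiv_bound
  obtain ⟨e, he0, he⟩ : ∃ e > 0, (C * (K + 2 * M) * Θ + 2 * (C * K)) * e ≤ ε / 4 := by
    refine ⟨ε / 4 / (C * (K + 2 * M) * Θ + 2 * (C * K) + 1), by positivity, ?_⟩
    rw [mul_div_assoc', div_le_iff₀ (by positivity)]
    nlinarith
  obtain ⟨ρ, hρ0, hρ⟩ := hτ e he0
  obtain ⟨η, hη0, hη⟩ : ∃ η > 0, K * Θ * η ≤ ε / 4 := by
    refine ⟨ε / 4 / (K * Θ + 1), by positivity, ?_⟩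
    rw [mul_div_assoc', div_le_iff₀ (by positivity)]
    nlinarith
  have hlim : Filter.Tendsto (fun n : ℕ => T / (n : ℝ)) Filter.atTop (𝓝 0) :=
    tendsto_const_div_atTop_nhds_zero_nat T
  filter_upwards [hlim.eventually_le_const hρ0, hlim.eventually_le_const hη0,
    Filter.eventually_gt_atTop 0] with n hn1 hn2 hn0
  set h := T / (n : ℝ) with hh
  have hn0' : (0 : ℝ) < n := by exact_mod_cast hn0
  have hpos : 0 < h := by positivity
  have hnh : (n : ℝ) * h = T := by rw [hh]; field_simp
  have hfl : ∀ {D}, D ∈ Icc 0 T → ⌊D / h⌋₊ ≤ n ∧ (⌊D / h⌋₊ : ℝ) * h ≤ D ∧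
      D - ⌊D / h⌋₊ * h ≤ h := by
    intro D hD
    have h1 : (⌊D / h⌋₊ : ℝ) ≤ D / h := Nat.floor_le (div_nonneg hD.1 hpos.le)
    have h2 := Nat.lt_floor_add_one (D / h)
    rw [le_div_iff₀ hpos] at h1
    rw [div_lt_iff₀ hpos] at h2
    refine ⟨Nat.floor_le_of_le ?_, h1, by linarith⟩
    rw [div_le_iff₀ hpos, hnh]
    exact hD.2
  have hθe : ∀ i, gridStep τ h i ≤ e := fun i => hρ _ _ (by push_cast; linarith)
  have hθ0 : ∀ i, 0 ≤ gridStep τ h i := fun i => measureReal_nonneg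
  have hcost := isCost_grid (τ := τ) hL hG hg A B h
  have hcsum : ∀ i, ∑ j ∈ Finset.range i, ((if j = ⌊A / h⌋₊ then (1 : ℝ) else 0) +
      (if j = ⌊B / h⌋₊ then 1 else 0)) ≤ 2 := fun i => by
    rw [Finset.sum_add_distrib, Finset.sum_ite_eq', Finset.sum_ite_eq']
    split_ifs <;> norm_num
  have hbd : ∀ i ≤ n, K * (∑ j ∈ Finset.range (i + 1), ((if j = ⌊A / h⌋₊ then (1 : ℝ) else 0) +
      (if j = ⌊B / h⌋₊ then 1 else 0)) + ∑ j ∈ Finset.range i, gridStep τ h j) ≤ M :=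
    fun i _ => mul_le_mul_of_nonneg_left (add_le_add (hcsum _) (sum_gridStep_le hpos.le i)) hK
  have hmain := htr.integral_mollify_valueFn_le (t := fun i : ℕ => (i : ℝ) * h)
    (fun i j hij => by dsimp only; gcongr) (by simp) (n := n) hnh.le hcost hM0 hbd hδ0.le hφ hC0 hC
    le_rfl
  have hVal : IsBoundedLipschitz (valueFn (gridStep τ h) (fun i => L (i * h))
      (pointCost A B G g h) n) M :=
    ⟨fun x => ((hcost.valueFn_bound n).1 x).trans (hbd n le_rfl), fun x y =>
      ((hcost.valueFn_bound n).2 x y).trans (by gcongr; exact hbd n le_rfl)⟩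
  have hV := (abs_le.1 (hφ.abs_integral_mollify_sub_le hM0 hVal (κ T))).1
  have mL : Measurable (Function.uncurry fun r y => L r y (b r y)) :=
    hL.continuous.measurable.comp (measurable_fst.prodMk (measurable_snd.prodMk htr.measurable))
  have IL := integrable_integral_kernel (τ := τ) (κ := κ) mL (K := K)
    (fun r y => (abs_of_nonneg (hL.nonneg r y _)).trans_le (hL.le r y _ (htr.norm_le r y)))
  have hrun : ∀ i : ℕ, ∫ r in Ioc (i * h) ((i + 1 : ℕ) * h),
      ∫ y, (L (i * h) y (b r y) + K * δ) ∂κ r ∂τ ≤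
      ∫ r in Ioc (i * h) ((i + 1 : ℕ) * h), ∫ y, L r y (b r y) ∂κ r ∂τ +
        K * (h + δ) * gridStep τ h i := by
    intro i
    have mLi : Measurable (Function.uncurry fun r y => L (i * h) y (b r y) + K * δ) :=
      (hL.continuous.measurable.comp (measurable_const.prodMk
        (measurable_snd.prodMk htr.measurable))).add_const _
    have bLi : ∀ r y, |L (i * h) y (b r y) + K * δ| ≤ K + K * δ := fun r y => by
      rw [abs_of_nonneg (add_nonneg (hL.nonneg _ _ _) (by positivity))]
      linarith [hL.le (i * h) y (b r y) (htr.norm_le r y)]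
    have ILi := integrable_integral_kernel (τ := τ.restrict (Ioc (i * h) ((i + 1 : ℕ) * h)))
      (κ := κ) mLi bLi
    have e1 : ∫ r in Ioc (i * h) ((i + 1 : ℕ) * h), ∫ y, L r y (b r y) ∂κ r ∂τ +
        K * (h + δ) * gridStep τ h i =
        ∫ r in Ioc (i * h) ((i + 1 : ℕ) * h), (∫ y, L r y (b r y) ∂κ r + K * (h + δ)) ∂τ := by
      rw [integral_add IL.integrableOn (integrable_const _)]
      simp [gridStep, mul_comm]
    rw [e1]
    refine setIntegral_mono_on ILi (IL.integrableOn.add (integrable_const _)) measurableSet_Ioc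
      fun r hr => ?_
    have i1 : Integrable (fun y => L r y (b r y)) (κ r) :=
      .of_bound (mL.comp measurable_prodMk_left).aestronglyMeasurable K (.of_forall fun y =>
        (abs_of_nonneg (hL.nonneg r y _)).trans_le (hL.le r y _ (htr.norm_le r y)))
    have i2 : Integrable (fun y => L (i * h) y (b r y) + K * δ) (κ r) :=
      .of_bound (mLi.comp measurable_prodMk_left).aestronglyMeasurable _ (.of_forall (bLi r))
    have e2 : ∫ y, L r y (b r y) ∂κ r + K * (h + δ) = ∫ y, (L r y (b r y) + K * (h + δ)) ∂κ r := by
      rw [integral_add i1 (integrable_const _)]; simp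
    rw [e2]
    refine integral_mono i2 (i1.add (integrable_const _)) fun y => ?_
    have h1 := (abs_le.1 (hL.lipschitz (i * h) r y y (b r y) (htr.norm_le r y))).2
    have h2 : |(i : ℝ) * h - r| ≤ h := by
      have := hr.2
      push_cast at this
      rw [abs_le]; constructor <;> linarith [hr.1]
    have h3 : K * (|(i : ℝ) * h - r| + ‖y - y‖) ≤ K * h := by
      simpa using mul_le_mul_of_nonneg_left h2 hK
    simp only
    nlinarith
  have hsq : ∀ i, C * (K + 2 * M) * gridStep τ h i ^ 2 ≤ C * (K + 2 * M) * e * gridStep τ h i :=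
    fun i => by
      rw [sq, ← mul_assoc, mul_assoc (C * (K + 2 * M)), mul_assoc (C * (K + 2 * M))]
      have := hθ0 i
      have := hθe i
      gcongr ?_ * ?_
      nlinarith
  have hsum : ∑ j ∈ Finset.range n,
        (∫ r in Ioc ((j : ℝ) * h) ((j + 1 : ℕ) * h), ∫ y, (L (j * h) y (b r y) + K * δ) ∂κ r ∂τ +
          C * (K + 2 * M) * gridStep τ h j ^ 2) ≤
      ∫ r in Ioc 0 T, ∫ y, L r y (b r y) ∂κ r ∂τ + (K * (h + δ) + C * (K + 2 * M) * e) * Θ := by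
    calc _ ≤ ∑ j ∈ Finset.range n, (∫ r in Ioc ((j : ℝ) * h) ((j + 1 : ℕ) * h),
            ∫ y, L r y (b r y) ∂κ r ∂τ +
            (K * (h + δ) + C * (K + 2 * M) * e) * gridStep τ h j) := by
          refine Finset.sum_le_sum fun j _ => ?_
          have := hrun j
          have := hsq j
          linarith
      _ ≤ _ := by
          rw [Finset.sum_add_distrib, sum_setIntegral_grid hpos.le n IL, ← Finset.mul_sum, hnh]
          gcongr
          exact sum_gridStep_le hpos.le n
  have hpt : ∑ j ∈ Finset.range (n + 1), ∫ y, mollify φ (pointCost A B G g h j) y ∂κ (j * h) =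
      ∫ y, mollify φ G y ∂κ (⌊A / h⌋₊ * h) + ∫ y, mollify φ g y ∂κ (⌊B / h⌋₊ * h) := by
    refine sum_pointCost (hfl hA).1 (hfl hB).1 (fun j f => ∫ y, mollify φ f y ∂κ (j * h))
      (fun i => ?_) fun i => ?_
    · simp [mollify]
    · have : ∀ y, mollify φ (fun x => G x + g x) y = mollify φ G y + mollify φ g y := fun y => by
        have := hφ.mollify_sub (hG.continuous.add hg.continuous) hg.continuous y
        simp only [Pi.add_apply, add_sub_cancel_right] at this
        simp only [Pi.add_def] at this
        linarith
      simp only [this]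
      refine integral_add ?_ ?_
      · exact .of_bound (hφ.contDiff_mollify hG.continuous).continuous.aestronglyMeasurable K
          (.of_forall fun x => hφ.abs_mollify_le hG.continuous hG.abs_le x)
      · exact .of_bound (hφ.contDiff_mollify hg.continuous).continuous.aestronglyMeasurable K
          (.of_forall fun x => hφ.abs_mollify_le hg.continuous hg.abs_le x)
  have hend : ∀ {D : ℝ} {f : E → ℝ}, D ∈ Icc 0 T → IsBoundedLipschitz f K →
      ∫ y, mollify φ f y ∂κ (⌊D / h⌋₊ * h) ≤ ∫ y, f y ∂κ D + 3 * K * δ + C * K * e := by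
    intro D f hD hf
    have h1 := (abs_le.1 (hφ.abs_integral_mollify_sub_le hK hf (κ (⌊D / h⌋₊ * h)))).2
    have h2 := (abs_le.1 (htr.abs_integral_sub_le_of_mollifier hK hf hφ
      (hC f K hf.continuous hf.abs_le).1 (by positivity) (hfl hD).2.1 hD.2)).1
    have h3 : C * K * τ.real (Ioc (⌊D / h⌋₊ * h) D) ≤ C * K * e := by
      gcongr; exact hρ _ _ ((hfl hD).2.2.trans hn1)
    linarith
  have hGA := hend hA hG
  have hgB := hend hB hg
  have hη' : K * Θ * h ≤ K * Θ * η := by gcongr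
  change ∫ y, mollify φ (valueFn (gridStep τ h) (fun i => L (i * h)) (pointCost A B G g h) n) y
    ∂κ (n * h) ≤ _ + ∑ j ∈ Finset.range n,
        (∫ r in Ioc ((j : ℝ) * h) ((j + 1 : ℕ) * h), ∫ y, (L (j * h) y (b r y) + K * δ) ∂κ r ∂τ +
          C * (K + 2 * M) * gridStep τ h j ^ 2) at hmain
  rw [hpt, hnh] at hmain
  linarith

end Duality

section Paths

open ProbabilityTheory Metric Filter

set_option maxSynthPendingDepth 3
set_option linter.unusedSectionVars false

variable {E : Type*} [NormedAddCommGroup E] [NormedSpace ℝ E] [FiniteDimensional ℝ E]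
  [MeasureSpace E] [BorelSpace E] [(volume : Measure E).IsAddHaarMeasure]

variable {τ : Measure ℝ} {κ : Kernel ℝ E} {b : ℝ → E → E} {T : ℝ}

/-- `p` is a discrete path on the grid of mesh `h` with velocities `v` of size at most one. -/
structure IsDiscretePath (τ : Measure ℝ) (h : ℝ) (n : ℕ) (p v : ℕ → E) : Prop where
  norm_le : ∀ i, ‖v i‖ ≤ 1
  succ : ∀ i < n, p (i + 1) = p i + gridStep τ h i • v i

/-- Cheap discrete paths ending in any prescribed set of large measure. -/
lemma IsTransport.eventually_exists_path [IsFiniteMeasure τ] [IsMarkovKernel κ]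
    (htr : IsTransport τ κ b T) (hτ : IsContinuousClock τ) (hT : 0 < T)
    {L : ℝ → E → E → ℝ} {K : ℝ} (hL : IsLagrangian L K) {G g : E → ℝ}
    (hG : IsBoundedLipschitz G K) (hg : IsBoundedLipschitz g K)
    (hG0 : ∀ x, 0 ≤ G x) (hg0 : ∀ x, 0 ≤ g x) {A B : ℝ}
    (hA : A ∈ Icc 0 T) (hB : B ∈ Icc 0 T) {c c' : ℝ}
    (hc : ∫ r in Ioc 0 T, ∫ y, L r y (b r y) ∂κ r ∂τ + ∫ y, G y ∂κ A + ∫ y, g y ∂κ B < c)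
    {D : Set E} (hD : MeasurableSet D) (hcD : c ≤ c' * (κ T).real D) :
    ∀ᶠ n : ℕ in atTop, ∃ p v : ℕ → E, IsDiscretePath τ (T / n) n p v ∧ p n ∈ D ∧
      G (p ⌊A / (T / n)⌋₊) + g (p ⌊B / (T / n)⌋₊) +
        ∑ i ∈ Finset.range n, gridStep τ (T / n) i * L (i * (T / n)) (p (i + 1)) (v i) ≤ c' := by
  filter_upwards [htr.eventually_integral_valueFn_lt hτ hT hL hG hg hA hB hc,
    eventually_gt_atTop 0] with n hn hn0
  set h := T / (n : ℝ) with hh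
  have hn0' : (0 : ℝ) < n := by exact_mod_cast hn0
  have hpos : 0 < h := by positivity
  have hnh : (n : ℝ) * h = T := by rw [hh]; field_simp
  have hfl : ∀ {D}, D ∈ Icc 0 T → ⌊D / h⌋₊ ≤ n := fun {D} hD => by
    refine Nat.floor_le_of_le ?_
    rw [div_le_iff₀ hpos, hnh]
    exact hD.2
  have hcost := isCost_grid (τ := τ) hL hG hg A B h
  set U := valueFn (gridStep τ h) (fun i => L (i * h)) (pointCost A B G g h) n with hU
  have hsum : ∀ p : ℕ → E, ∑ i ∈ Finset.range (n + 1), pointCost A B G g h i (p i) =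
      G (p ⌊A / h⌋₊) + g (p ⌊B / h⌋₊) := fun p =>
    sum_pointCost (hfl hA) (hfl hB) (fun i f => f (p i)) (fun i => rfl) (fun i => rfl)
  have hU0 : ∀ x, 0 ≤ U x := fun x => by
    obtain ⟨p, v, -, -, -, hs⟩ := hcost.exists_path n x
    rw [hU, ← hs, hsum]
    have : 0 ≤ ∑ i ∈ Finset.range n, gridStep τ h i * L (i * h) (p (i + 1)) (v i) :=
      Finset.sum_nonneg fun i _ => mul_nonneg measureReal_nonneg (hL.nonneg _ _ _)
    have := hG0 (p ⌊A / h⌋₊)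
    have := hg0 (p ⌊B / h⌋₊)
    positivity
  have hUc : Continuous U := continuous_of_abs_sub_le (hcost.valueFn_bound n).2
  have hUi : Integrable U (κ T) :=
    .of_bound hUc.aestronglyMeasurable _ (.of_forall (hcost.valueFn_bound n).1)
  obtain ⟨x, hxD, hx⟩ : ∃ x ∈ D, U x ≤ c' := by
    by_contra! hcon
    have h1 : c' * (κ T).real D ≤ ∫ y in D, U y ∂κ T := by
      have := setIntegral_mono_on (μ := κ T) (s := D) (f := fun _ => c') (integrable_const _)
        hUi.integrableOn hD fun y hy => (hcon y hy).le
      simpa [mul_comm] using this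
    have h2 := setIntegral_le_integral (s := D) hUi (.of_forall hU0)
    linarith
  obtain ⟨p, v, hp, hv, hpv, hs⟩ := hcost.exists_path n x
  refine ⟨p, v, ⟨hv, hpv⟩, hp ▸ hxD, ?_⟩
  rw [← hsum p, hs]
  exact hx

/-- The step function through the points of a discrete path. -/
def stepPath (h : ℝ) (n : ℕ) (p : ℕ → E) (t : ℝ) : E := p (min ⌊t / h⌋₊ n)

namespace IsDiscretePath

variable {h : ℝ} {n : ℕ} {p v : ℕ → E}

lemma sub_eq_sum (hp : IsDiscretePath τ h n p v) {m : ℕ} (hm : m ≤ n) :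
    p m - p 0 = ∑ i ∈ Finset.range m, gridStep τ h i • v i := by
  induction m with
  | zero => simp
  | succ m ih => rw [Finset.sum_range_succ, ← ih (by omega), hp.succ m (by omega)]; abel

lemma norm_sub_le [IsFiniteMeasure τ] (hp : IsDiscretePath τ h n p v) (hh : 0 ≤ h) {l m : ℕ}
    (hlm : l ≤ m) (hm : m ≤ n) : ‖p m - p l‖ ≤ τ.real (Ioc (l * h) (m * h)) := by
  induction m, hlm using Nat.le_induction with
  | base => simp
  | succ m hlm ih =>
    have h1 : (l : ℝ) * h ≤ m * h := by gcongr
    have h2 : (m : ℝ) * h ≤ (m + 1 : ℕ) * h := by gcongr; simp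
    rw [← Ioc_union_Ioc_eq_Ioc h1 h2, measureReal_union (Ioc_disjoint_Ioc_of_le le_rfl)
      measurableSet_Ioc, hp.succ m (by omega)]
    calc ‖p m + gridStep τ h m • v m - p l‖ = ‖(p m - p l) + gridStep τ h m • v m‖ := by
          congr 1; abel
      _ ≤ ‖p m - p l‖ + gridStep τ h m * 1 := by
          refine (norm_add_le _ _).trans ?_
          have h0 : 0 ≤ gridStep τ h m := measureReal_nonneg
          rw [norm_smul, Real.norm_of_nonneg h0]
          gcongr
          exact hp.norm_le m
      _ ≤ _ := by
          rw [mul_one]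
          exact add_le_add (ih (by omega)) le_rfl

lemma norm_stepPath_sub_le [IsFiniteMeasure τ] (hp : IsDiscretePath τ h n p v) (hh : 0 < h)
    {e : ℝ} (he : ∀ i, gridStep τ h i ≤ e) {s t : ℝ} (hst : s ≤ t) :
    ‖stepPath h n p t - stepPath h n p s‖ ≤ τ.real (Ioc s t) + e := by
  unfold stepPath
  set l := min ⌊s / h⌋₊ n with hl
  set m := min ⌊t / h⌋₊ n with hm
  have hlm : l ≤ m := min_le_min (Nat.floor_mono (by gcongr)) le_rfl
  refine (hp.norm_sub_le hh.le hlm (min_le_right _ _)).trans ?_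
  have hsub : Ioc ((l : ℝ) * h) (m * h) ⊆ Ioc s t ∪ Ioc (l * h) ((l + 1 : ℕ) * h) := by
    intro r hr
    have hl0 : (0 : ℝ) ≤ l * h := by positivity
    have hm0 : m ≠ 0 := by
      rintro h0
      rw [h0] at hr
      simp only [Nat.cast_zero, zero_mul] at hr
      linarith [hr.1, hr.2]
    have hmt : (m : ℝ) * h ≤ t := by
      rw [← le_div_iff₀ hh]
      exact (Nat.le_floor_iff' hm0).1 (min_le_left _ _)
    by_cases hrs : s < r
    · exact .inl ⟨hrs, hr.2.trans hmt⟩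
    · refine .inr ⟨hr.1, (not_lt.1 hrs).trans ?_⟩
      have hlt : l < m := by
        by_contra! hle
        have : (m : ℝ) * h ≤ l * h := by gcongr
        linarith [hr.1, hr.2]
      have hln : l = ⌊s / h⌋₊ := by omega
      have := Nat.lt_floor_add_one (s / h)
      rw [div_lt_iff₀ hh, ← hln] at this
      push_cast
      exact this.le
  calc τ.real (Ioc ((l : ℝ) * h) (m * h)) ≤ τ.real (Ioc s t ∪ Ioc (l * h) ((l + 1 : ℕ) * h)) :=
        measureReal_mono hsub
    _ ≤ τ.real (Ioc s t) + τ.real (Ioc (l * h) ((l + 1 : ℕ) * h)) := measureReal_union_le _ _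
    _ ≤ _ := add_le_add le_rfl (he l)

lemma norm_stepPath_le [IsFiniteMeasure τ] (hp : IsDiscretePath τ h n p v) (hh : 0 < h) {R : ℝ}
    (hR : ‖p n‖ ≤ R) (t : ℝ) : ‖stepPath h n p t‖ ≤ R + τ.real univ := by
  have h1 := hp.norm_sub_le hh.le (min_le_right ⌊t / h⌋₊ n) le_rfl
  have h2 : τ.real (Ioc ((min ⌊t / h⌋₊ n : ℕ) * h) (n * h)) ≤ τ.real univ :=
    measureReal_mono (subset_univ _)
  have h3 := norm_sub_norm_le (p (min ⌊t / h⌋₊ n)) (p n)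
  rw [norm_sub_rev] at h3
  unfold stepPath
  linarith

end IsDiscretePath

lemma IsContinuousClock.continuous (hτ : IsContinuousClock τ) {γ : ℝ → E}
    (hγ : ∀ s t, s ≤ t → ‖γ t - γ s‖ ≤ τ.real (Ioc s t)) : Continuous γ := by
  refine Metric.continuous_iff.2 fun s ε hε => ?_
  obtain ⟨ρ, hρ, hclock⟩ := hτ (ε / 2) (by positivity)
  refine ⟨ρ, hρ, fun t ht => ?_⟩
  rw [Real.dist_eq, abs_lt] at ht
  rcases le_total s t with hst | hst
  · rw [dist_eq_norm]
    linarith [hγ s t hst, hclock s t (by linarith)]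
  · rw [dist_comm, dist_eq_norm]
    linarith [hγ t s hst, hclock t s (by linarith)]

/-- Compactness of almost equicontinuous sequences of curves. -/
lemma IsContinuousClock.exists_uniform_limit (hτ : IsContinuousClock τ)
    {γ : ℕ → ℝ → E} {R : ℝ} (hR : ∀ n t, ‖γ n t‖ ≤ R) {e : ℕ → ℝ} (he : Tendsto e atTop (𝓝 0))
    (hγ : ∀ n s t, s ≤ t → ‖γ n t - γ n s‖ ≤ τ.real (Ioc s t) + e n) (T : ℝ) :
    ∃ (l : Filter ℕ) (γ' : ℝ → E), l.NeBot ∧ l ≤ atTop ∧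
      (∀ s t, s ≤ t → ‖γ' t - γ' s‖ ≤ τ.real (Ioc s t)) ∧
      ∀ ε > 0, ∀ᶠ n in l, ∀ t ∈ Icc 0 T, ‖γ n t - γ' t‖ ≤ ε := by
  let l : Ultrafilter ℕ := hyperfilter ℕ
  have hl : (l : Filter ℕ) ≤ atTop := by
    rw [← Nat.cofinite_eq_atTop]; exact hyperfilter_le_cofinite
  have hlim : ∀ t, ∃ x, Tendsto (fun n => γ n t) l (𝓝 x) := fun t => by
    obtain ⟨x, -, hx⟩ := (isCompact_closedBall (0 : E) R).ultrafilter_le_nhds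
      (l.map fun n => γ n t) (by
        rw [Ultrafilter.coe_map, le_principal_iff]
        exact Filter.mem_map.2 (univ_mem' fun n => by simpa using hR n t))
    exact ⟨x, hx⟩
  choose γ' hγ' using hlim
  have hlip : ∀ s t, s ≤ t → ‖γ' t - γ' s‖ ≤ τ.real (Ioc s t) := fun s t hst => by
    have h1 : Tendsto (fun n => ‖γ n t - γ n s‖) l (𝓝 ‖γ' t - γ' s‖) :=
      ((hγ' t).sub (hγ' s)).norm
    have h2 : Tendsto (fun n => τ.real (Ioc s t) + e n) l (𝓝 (τ.real (Ioc s t) + 0)) :=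
      tendsto_const_nhds.add (he.mono_left hl)
    rw [add_zero] at h2
    exact le_of_tendsto_of_tendsto' h1 h2 fun n => hγ n s t hst
  refine ⟨l, γ', inferInstance, hl, hlip, fun ε hε => ?_⟩
  obtain ⟨ρ, hρ, hclock⟩ := hτ (ε / 4) (by positivity)
  have hfin : ∀ᶠ n in (l : Filter ℕ), ∀ i ∈ Finset.range (⌊T / ρ⌋₊ + 1),
      ‖γ n (i * ρ) - γ' (i * ρ)‖ ≤ ε / 4 := by
    rw [Filter.eventually_all_finset]
    intro i _
    have := ((hγ' (i * ρ)).sub_const (γ' (i * ρ))).norm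
    rw [sub_self, norm_zero] at this
    exact this.eventually_le_const (by positivity)
  have hee := (he.mono_left hl).eventually_le_const (show (0 : ℝ) < ε / 4 by positivity)
  filter_upwards [hfin, hee] with n hn hen t ht
  set i := ⌊t / ρ⌋₊ with hi
  have hi1 : (i : ℝ) * ρ ≤ t := by
    rw [← le_div_iff₀ hρ]; exact Nat.floor_le (div_nonneg ht.1 hρ.le)
  have hi2 : t - i * ρ ≤ ρ := by
    have := Nat.lt_floor_add_one (t / ρ)
    rw [div_lt_iff₀ hρ, ← hi] at this
    linarith
  have hi3 : i ∈ Finset.range (⌊T / ρ⌋₊ + 1) :=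
    Finset.mem_range.2 (Nat.lt_succ_of_le (Nat.floor_mono (by gcongr; exact ht.2)))
  have h1 := hn i hi3
  have h2 := hγ n _ _ hi1
  have h3 := hlip _ _ hi1
  have h4 := hclock _ _ hi2
  calc ‖γ n t - γ' t‖ = ‖(γ n t - γ n (i * ρ)) + (γ n (i * ρ) - γ' (i * ρ)) -
        (γ' t - γ' (i * ρ))‖ := by congr 1; abel
    _ ≤ ‖γ n t - γ n (i * ρ)‖ + ‖γ n (i * ρ) - γ' (i * ρ)‖ + ‖γ' t - γ' (i * ρ)‖ :=
        (norm_sub_le _ _).trans (add_le_add (norm_add_le _ _) le_rfl)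
    _ ≤ ε := by linarith

/-- Riemann sums along discrete paths. -/
lemma norm_sum_gridStep_sub_integral_le [IsFiniteMeasure τ] {F : Type*} [NormedAddCommGroup F]
    [NormedSpace ℝ F] [CompleteSpace F] {f : ℝ → E → F} {Λ : ℝ} (hΛ : 0 ≤ Λ)
    (hf : ∀ s t x y, ‖f s x - f t y‖ ≤ Λ * (|s - t| + ‖x - y‖)) {γ : ℝ → E}
    (hγ : ∀ s t, s ≤ t → ‖γ t - γ s‖ ≤ τ.real (Ioc s t)) {h e : ℝ} (hh : 0 ≤ h)
    (he : ∀ i, gridStep τ h i ≤ e) {m : ℕ} {p : ℕ → E}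
    (hp : ∀ i ≤ m, ‖p i - γ (i * h)‖ ≤ e)
    (hInt : Integrable (fun r => f r (γ r)) τ) :
    ‖∑ i ∈ Finset.range m, gridStep τ h i • f (i * h) (p (i + 1)) -
      ∫ r in Ioc 0 (m * h), f r (γ r) ∂τ‖ ≤ Λ * (h + 2 * e) * τ.real univ := by
  have hstep : ∀ i < m, ‖gridStep τ h i • f (i * h) (p (i + 1)) -
      ∫ r in Ioc (i * h) ((i + 1 : ℕ) * h), f r (γ r) ∂τ‖ ≤
        Λ * (h + 2 * e) * gridStep τ h i := by
    intro i hi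
    have e1 : gridStep τ h i • f (i * h) (p (i + 1)) =
        ∫ r in Ioc (i * h) ((i + 1 : ℕ) * h), f (i * h) (p (i + 1)) ∂τ := by
      simp [gridStep]
    rw [e1, ← integral_sub (integrable_const _) hInt.integrableOn]
    refine norm_setIntegral_le_of_norm_le_const (measure_lt_top τ _) fun r hr => ?_
    refine (hf _ _ _ _).trans ?_
    have h1 : |(i : ℝ) * h - r| ≤ h := by
      have := hr.2
      push_cast at this
      rw [abs_le]; constructor <;> linarith [hr.1]
    have h2 : ‖p (i + 1) - γ r‖ ≤ 2 * e := by
      calc ‖p (i + 1) - γ r‖ ≤ ‖p (i + 1) - γ ((i + 1 : ℕ) * h)‖ +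
            ‖γ ((i + 1 : ℕ) * h) - γ r‖ := norm_sub_le_norm_sub_add_norm_sub _ _ _
        _ ≤ e + e := by
            gcongr
            · exact hp (i + 1) hi
            · refine (hγ _ _ hr.2).trans ((measureReal_mono ?_).trans (he i))
              exact Ioc_subset_Ioc_left hr.1.le
        _ = 2 * e := by ring
    gcongr
  have he0 : 0 ≤ e := measureReal_nonneg.trans (he 0)
  rw [← sum_setIntegral_grid hh m hInt, ← Finset.sum_sub_distrib]
  calc _ ≤ ∑ i ∈ Finset.range m, Λ * (h + 2 * e) * gridStep τ h i :=
        norm_sum_le_of_le _ fun i hi => hstep i (Finset.mem_range.1 hi)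
    _ ≤ _ := by
        rw [← Finset.mul_sum]
        gcongr
        exact sum_gridStep_le hh m

end Paths

section Limits

open ProbabilityTheory Metric Filter

set_option maxSynthPendingDepth 3
set_option linter.unusedSectionVars false

variable {E : Type*} [NormedAddCommGroup E] [NormedSpace ℝ E] [FiniteDimensional ℝ E]
  [MeasureSpace E] [BorelSpace E] [(volume : Measure E).IsAddHaarMeasure]

variable {τ : Measure ℝ} {κ : Kernel ℝ E} {b : ℝ → E → E} {T : ℝ}

/-- A bounded Lipschitz function of time and space. -/
structure IsBoundedLipschitzField {F : Type*} [NormedAddCommGroup F] (f : ℝ × E → F) (K : ℝ) :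
    Prop where
  norm_le : ∀ q, ‖f q‖ ≤ K
  norm_sub_le : ∀ s t x y, ‖f (s, x) - f (t, y)‖ ≤ K * (|s - t| + ‖x - y‖)

namespace IsBoundedLipschitzField

variable {F : Type*} [NormedAddCommGroup F] {f : ℝ × E → F} {K : ℝ}

lemma nonneg (hf : IsBoundedLipschitzField f K) : 0 ≤ K := (norm_nonneg _).trans (hf.norm_le 0)

lemma mono (hf : IsBoundedLipschitzField f K) {K' : ℝ} (h : K ≤ K') :
    IsBoundedLipschitzField f K' where
  norm_le q := (hf.norm_le q).trans h
  norm_sub_le s t x y := (hf.norm_sub_le s t x y).trans (by gcongr)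

lemma continuous (hf : IsBoundedLipschitzField f K) : Continuous f := by
  have h0 := hf.nonneg
  refine (LipschitzWith.of_dist_le_mul (K := ⟨2 * K, by positivity⟩) fun q q' => ?_).continuous
  have := hf.norm_sub_le q.1 q'.1 q.2 q'.2
  rw [dist_eq_norm]
  refine this.trans ?_
  have h1 : |q.1 - q'.1| ≤ dist q q' := by
    rw [← Real.dist_eq, Prod.dist_eq]; exact le_max_left _ _
  have h2 : ‖q.2 - q'.2‖ ≤ dist q q' := by
    rw [← dist_eq_norm, Prod.dist_eq]; exact le_max_right _ _
  calc K * (|q.1 - q'.1| + ‖q.2 - q'.2‖) ≤ K * (dist q q' + dist q q') := by gcongr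
    _ = 2 * K * dist q q' := by ring

lemma integrable_comp [IsFiniteMeasure τ] (hf : IsBoundedLipschitzField f K) {γ : ℝ → E}
    (hγ : Continuous γ) : Integrable (fun r => f (r, γ r)) τ :=
  .of_bound (by
    have : Continuous fun r => f (r, γ r) := hf.continuous.comp (by fun_prop)
    exact this.aestronglyMeasurable) K (.of_forall fun r => hf.norm_le _)

/-- Riemann sums along converging discrete paths converge to the integral along the limit. -/
lemma tendsto_sum_gridStep [IsFiniteMeasure τ] [NormedSpace ℝ F] [CompleteSpace F]
    (hτ : IsContinuousClock τ) (hf : IsBoundedLipschitzField f K) {γ : ℝ → E}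
    (hγ : ∀ s t, s ≤ t → ‖γ t - γ s‖ ≤ τ.real (Ioc s t)) {l : Filter ℕ} {h e : ℕ → ℝ}
    (hh0 : ∀ k, 0 < h k) (hh : Tendsto h l (𝓝 0)) (he : ∀ k i, gridStep τ (h k) i ≤ e k)
    (he0 : Tendsto e l (𝓝 0)) {p : ℕ → ℕ → E} {t : ℝ} (ht : 0 ≤ t)
    (hp : ∀ ε > 0, ∀ᶠ k in l, ∀ i ≤ ⌊t / h k⌋₊, ‖p k i - γ (i * h k)‖ ≤ ε) :
    Tendsto (fun k => ∑ i ∈ Finset.range ⌊t / h k⌋₊,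
      gridStep τ (h k) i • f (i * h k, p k (i + 1))) l
      (𝓝 (∫ r in Ioc 0 t, f (r, γ r) ∂τ)) := by
  have hK := hf.nonneg
  have hInt := hf.integrable_comp (τ := τ) (hτ.continuous hγ)
  rw [Metric.tendsto_nhds]
  intro ε hε
  obtain ⟨δ, hδ, hδε⟩ : ∃ δ > 0, K * (3 * δ) * τ.real univ + K * δ < ε := by
    have : Tendsto (fun δ : ℝ => K * (3 * δ) * τ.real univ + K * δ) (𝓝[>] 0) (𝓝 0) := by
      refine Tendsto.mono_left ?_ nhdsWithin_le_nhds
      have h : Continuous fun δ : ℝ => K * (3 * δ) * τ.real univ + K * δ := by fun_prop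
      simpa using h.tendsto 0
    obtain ⟨δ, h1, h2⟩ := ((this.eventually_lt_const hε).and self_mem_nhdsWithin).exists
    exact ⟨δ, h2, h1⟩
  filter_upwards [hp δ hδ, hh.eventually_le_const hδ, he0.eventually_le_const hδ] with k h1 h2 h3
  have hm : (⌊t / h k⌋₊ : ℝ) * h k ≤ t := by
    rw [← le_div_iff₀ (hh0 k)]; exact Nat.floor_le (div_nonneg ht (hh0 k).le)
  have hm' : t ≤ (⌊t / h k⌋₊ + 1 : ℕ) * h k := by
    have := Nat.lt_floor_add_one (t / h k)
    rw [div_lt_iff₀ (hh0 k)] at this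
    push_cast
    exact this.le
  have hm0 : (0 : ℝ) ≤ ⌊t / h k⌋₊ * h k := mul_nonneg (Nat.cast_nonneg _) (hh0 k).le
  have key := norm_sum_gridStep_sub_integral_le (f := fun s x => f (s, x)) hK hf.norm_sub_le hγ
    (hh0 k).le (fun i => (he k i).trans h3) h1 hInt
  have hsplit : ∫ r in Ioc 0 t, f (r, γ r) ∂τ =
      ∫ r in Ioc 0 (⌊t / h k⌋₊ * h k), f (r, γ r) ∂τ +
        ∫ r in Ioc (⌊t / h k⌋₊ * h k) t, f (r, γ r) ∂τ := by
    rw [← setIntegral_union (Ioc_disjoint_Ioc_of_le le_rfl) measurableSet_Ioc hInt.integrableOn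
      hInt.integrableOn, Ioc_union_Ioc_eq_Ioc hm0 hm]
  have hrest : ‖∫ r in Ioc (⌊t / h k⌋₊ * h k) t, f (r, γ r) ∂τ‖ ≤ K * δ := by
    refine (norm_setIntegral_le_of_norm_le_const (measure_lt_top τ _)
      fun r _ => hf.norm_le _).trans ?_
    gcongr
    exact (measureReal_mono (Ioc_subset_Ioc_right hm')).trans ((he k _).trans h3)
  rw [dist_eq_norm, hsplit, ← sub_sub]
  refine (_root_.norm_sub_le _ _).trans_lt (lt_of_le_of_lt (add_le_add key hrest) (lt_of_le_of_lt ?_ hδε))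
  gcongr
  linarith

end IsBoundedLipschitzField

/-- Running cost penalizing the deviation of the velocity from the fields `W l`, plus `H k`. -/
def penalty (η : ℝ) (W : ℕ → ℝ × E → E) (H : ℕ → ℝ × E → ℝ) (k : ℕ) (t : ℝ) (x v : E) : ℝ :=
  η * (∑ l ∈ Finset.range k, 2 ^ l * ‖v - W l (t, x)‖ + H k (t, x))

variable {η : ℝ} {W : ℕ → ℝ × E → E} {H : ℕ → ℝ × E → ℝ}

lemma exists_isLagrangian_penalty (hη : 0 ≤ η) (hW : ∀ l, ∃ K, IsBoundedLipschitzField (W l) K)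
    (hH0 : ∀ k q, 0 ≤ H k q) (hH : ∀ k, ∃ K, IsBoundedLipschitzField (H k) K) (k : ℕ) :
    ∃ K, IsLagrangian (penalty η W H k) K := by
  choose C hC using hW
  obtain ⟨M, hM⟩ := hH k
  have hC0 := fun l => (hC l).nonneg
  have hM0 := hM.nonneg
  refine ⟨η * (∑ l ∈ Finset.range k, 2 ^ l * (1 + C l) + M), ?_, ?_, ?_, ?_⟩
  · have h1 := fun l => (hC l).continuous
    have h2 := hM.continuous
    unfold penalty
    fun_prop
  · intro t x v
    have := hH0 k (t, x)
    unfold penalty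
    positivity
  · intro t x v hv
    unfold penalty
    gcongr with l
    · refine (norm_sub_le _ _).trans ?_
      gcongr
      exact (hC l).norm_le _
    · exact (le_abs_self _).trans (hM.norm_le _)
  · intro s t x y v _
    unfold penalty
    rw [← mul_sub, abs_mul, abs_of_nonneg hη, mul_assoc]
    gcongr
    rw [add_sub_add_comm, ← Finset.sum_sub_distrib, add_mul, Finset.sum_mul]
    refine (abs_add_le _ _).trans (add_le_add ?_ (hM.norm_sub_le s t x y))
    refine (Finset.abs_sum_le_sum_abs _ _).trans (Finset.sum_le_sum fun l _ => ?_)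
    rw [← mul_sub, abs_mul, abs_of_nonneg (by positivity : (0 : ℝ) ≤ 2 ^ l), mul_assoc]
    gcongr
    refine (abs_norm_sub_norm_le _ _).trans ?_
    rw [sub_sub_sub_cancel_left, norm_sub_rev]
    refine ((hC l).norm_sub_le s t x y).trans ?_
    have : 0 ≤ |s - t| + ‖x - y‖ := by positivity
    gcongr
    linarith

/-- Cheap discrete paths converge to a cheap curve. -/
lemma IsContinuousClock.exists_limit_curve [IsFiniteMeasure τ] (hτ : IsContinuousClock τ)
    (hT : 0 < T) (hη : 0 ≤ η) (hW : ∀ l, ∃ K, IsBoundedLipschitzField (W l) K)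
    (hH0 : ∀ k q, 0 ≤ H k q) (hH : ∀ k, ∃ K, IsBoundedLipschitzField (H k) K)
    (hHm : ∀ q, Monotone fun k => H k q) {G : ℕ → E → ℝ} (hG0 : ∀ k x, 0 ≤ G k x)
    (hG : ∀ k, Continuous (G k)) (hGm : ∀ x, Monotone fun k => G k x) {g : E → ℝ}
    (hg : Continuous g) (hg0 : ∀ x, 0 ≤ g x) {A B : ℝ} (hA : A ∈ Icc 0 T) (hB : B ∈ Icc 0 T)
    {R c : ℝ} (hpath : ∀ k, ∀ᶠ n : ℕ in atTop, ∃ p v, IsDiscretePath τ (T / n) n p v ∧ ‖p n‖ ≤ R ∧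
      G k (p ⌊A / (T / n)⌋₊) + g (p ⌊B / (T / n)⌋₊) + ∑ i ∈ Finset.range n,
        gridStep τ (T / n) i * penalty η W H k (i * (T / n)) (p (i + 1)) (v i) ≤ c) :
    ∃ γ : ℝ → E, Continuous γ ∧ (∀ j, G j (γ A) + g (γ B) ≤ c) ∧
      (∀ l, ∀ t ∈ Icc 0 T, η * (2 ^ l * ‖γ t - γ 0 - ∫ r in Ioc 0 t, W l (r, γ r) ∂τ‖) ≤ c) ∧
      ∀ j, η * ∫ r in Ioc 0 T, H j (r, γ r) ∂τ ≤ c := by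
  have hchoose : ∀ k : ℕ, ∃ n : ℕ, 0 < n ∧ T / n ≤ 1 / (k + 1) ∧
      (∀ i, gridStep τ (T / n) i ≤ 1 / (k + 1)) ∧
      ∃ p v, IsDiscretePath τ (T / n) n p v ∧ ‖p n‖ ≤ R ∧
      G k (p ⌊A / (T / n)⌋₊) + g (p ⌊B / (T / n)⌋₊) + ∑ i ∈ Finset.range n,
        gridStep τ (T / n) i * penalty η W H k (i * (T / n)) (p (i + 1)) (v i) ≤ c := by
    intro k
    obtain ⟨ρ, hρ, hclock⟩ := hτ (1 / (k + 1)) (by positivity)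
    have ht : Tendsto (fun n : ℕ => T / n) atTop (𝓝 0) := tendsto_const_div_atTop_nhds_zero_nat T
    obtain ⟨n, h1, h2, h3, h4⟩ := ((eventually_gt_atTop 0).and
      ((ht.eventually_le_const (show (0 : ℝ) < 1 / (k + 1) by positivity)).and
        ((ht.eventually_le_const hρ).and (hpath k)))).exists
    refine ⟨n, h1, h2, fun i => hclock _ _ ?_, h4⟩
    push_cast
    linarith
  choose n hn0 hnT hnstep p v hp hpR hcost using hchoose
  set h : ℕ → ℝ := fun k => T / n k with hh
  have hh0 : ∀ k, 0 < h k := fun k => div_pos hT (Nat.cast_pos.2 (hn0 k))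
  have hnh : ∀ k, T / h k = n k := fun k => by
    simp only [hh]; field_simp
  have he0 : Tendsto (fun k : ℕ => (1 : ℝ) / (k + 1)) atTop (𝓝 0) :=
    tendsto_one_div_add_atTop_nhds_zero_nat
  obtain ⟨l, γ, hl, hlt, hγ, hlim⟩ := hτ.exists_uniform_limit
    (γ := fun k => stepPath (h k) (n k) (p k)) (R := R + τ.real univ)
    (fun k t => (hp k).norm_stepPath_le (hh0 k) (hpR k) t) he0
    (fun k s t hst => (hp k).norm_stepPath_sub_le (hh0 k) (hnstep k) hst) T
  have hγc := hτ.continuous hγ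
  have hfloor : ∀ k, ∀ t ∈ Icc 0 T, ⌊t / h k⌋₊ ≤ n k := fun k t ht => by
    rw [← Nat.floor_natCast (R := ℝ) (n k), ← hnh k]
    exact Nat.floor_mono (div_le_div_of_nonneg_right ht.2 (hh0 k).le)
  have hstep : ∀ k, ∀ t ∈ Icc 0 T, stepPath (h k) (n k) (p k) t = p k ⌊t / h k⌋₊ :=
    fun k t ht => by rw [stepPath, min_eq_left (hfloor k t ht)]
  have hpt : ∀ t ∈ Icc 0 T, Tendsto (fun k => p k ⌊t / h k⌋₊) l (𝓝 (γ t)) := fun t ht => by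
    rw [Metric.tendsto_nhds]
    intro ε hε
    filter_upwards [hlim (ε / 2) (half_pos hε)] with k hk
    have := hk t ht
    rw [hstep k t ht] at this
    rw [dist_eq_norm]
    linarith
  have hgrid : ∀ t ∈ Icc 0 T, ∀ ε > 0, ∀ᶠ k in l, ∀ i ≤ ⌊t / h k⌋₊,
      ‖p k i - γ (i * h k)‖ ≤ ε := fun t ht ε hε => by
    filter_upwards [hlim ε hε] with k hk i hi
    have hin : i ≤ n k := hi.trans (hfloor k t ht)
    have hi1 : (i : ℝ) * h k ∈ Icc 0 T := by
      refine ⟨mul_nonneg (Nat.cast_nonneg _) (hh0 k).le, ?_⟩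
      rw [← le_div_iff₀ (hh0 k), hnh k]
      exact_mod_cast hin
    have := hk _ hi1
    rwa [hstep k _ hi1, mul_div_assoc, div_self (hh0 k).ne', mul_one, Nat.floor_natCast] at this
  have hht : Tendsto h l (𝓝 0) :=
    (squeeze_zero (fun k => (hh0 k).le) hnT he0).mono_left hlt
  have hel := he0.mono_left hlt
  have hgs : ∀ k i, 0 ≤ gridStep τ (h k) i := fun k i => measureReal_nonneg
  have hpen : ∀ k t x v, 0 ≤ penalty η W H k t x v := fun k t x v => by
    have := hH0 k (t, x)
    unfold penalty
    positivity
  have hsum : ∀ k, ∀ t ∈ Icc 0 T, ∑ i ∈ Finset.range ⌊t / h k⌋₊,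
      gridStep τ (h k) i * penalty η W H k (i * h k) (p k (i + 1)) (v k i) ≤ c := fun k t ht => by
    have h1 := hcost k
    have h2 := hG0 k (p k ⌊A / h k⌋₊)
    have h3 := hg0 (p k ⌊B / h k⌋₊)
    refine le_trans (Finset.sum_le_sum_of_subset_of_nonneg
      (Finset.range_subset_range.2 (hfloor k t ht)) fun i _ _ =>
        mul_nonneg (hgs k i) (hpen _ _ _ _)) ?_
    simp only [hh] at h1 h2 h3 ⊢
    linarith
  refine ⟨γ, hγc, fun j => ?_, fun j t ht => ?_, fun j => ?_⟩
  · refine le_of_tendsto ((((hG j).tendsto _).comp (hpt A hA)).add ((hg.tendsto _).comp (hpt B hB)))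
      ?_
    filter_upwards [hlt (eventually_ge_atTop j)] with k hk
    have h1 := hcost k
    have h2 : 0 ≤ ∑ i ∈ Finset.range (n k),
        gridStep τ (T / n k) i * penalty η W H k (i * (T / n k)) (p k (i + 1)) (v k i) :=
      Finset.sum_nonneg fun i _ => mul_nonneg (hgs k i) (hpen _ _ _ _)
    have h3 := hGm (p k ⌊A / h k⌋₊) hk
    simp only [hh, Function.comp_apply] at h1 h2 h3 ⊢
    linarith
  · obtain ⟨K, hK⟩ := hW j
    have hr := hK.tendsto_sum_gridStep hτ hγ hh0 hht hnstep hel ht.1 (hgrid t ht)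
    have h00 : (0 : ℝ) ∈ Icc 0 T := ⟨le_rfl, hT.le⟩
    refine le_of_tendsto (((((hpt t ht).sub (hpt 0 h00)).sub hr).norm.const_mul (2 ^ j)).const_mul η)
      ?_
    filter_upwards [hlt (eventually_gt_atTop j)] with k hk
    refine le_trans ?_ (hsum k t ht)
    rw [zero_div, Nat.floor_zero, (hp k).sub_eq_sum (hfloor k t ht), ← Finset.sum_sub_distrib]
    calc _ ≤ η * (2 ^ j * ∑ i ∈ Finset.range ⌊t / h k⌋₊,
          gridStep τ (h k) i * ‖v k i - W j (i * h k, p k (i + 1))‖) := by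
          gcongr
          refine norm_sum_le_of_le _ fun i _ => ?_
          rw [← smul_sub, norm_smul, Real.norm_of_nonneg (hgs k i)]
      _ ≤ _ := by
          rw [Finset.mul_sum, Finset.mul_sum]
          refine Finset.sum_le_sum fun i _ => ?_
          have h1 : 2 ^ j * ‖v k i - W j (i * h k, p k (i + 1))‖ ≤
              ∑ l ∈ Finset.range k, 2 ^ l * ‖v k i - W l (i * h k, p k (i + 1))‖ :=
            Finset.single_le_sum (f := fun l => 2 ^ l * ‖v k i - W l (i * h k, p k (i + 1))‖)
              (fun l _ => by positivity) (Finset.mem_range.2 hk)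
          have h2 := hH0 k (i * h k, p k (i + 1))
          have h3 := hgs k i
          calc _ = gridStep τ (h k) i * (η * (2 ^ j * ‖v k i - W j (i * h k, p k (i + 1))‖)) := by
                ring
            _ ≤ _ := by
                unfold penalty
                gcongr
                linarith
  · obtain ⟨K, hK⟩ := hH j
    have hTT : T ∈ Icc 0 T := ⟨hT.le, le_rfl⟩
    have hr := hK.tendsto_sum_gridStep hτ hγ hh0 hht hnstep hel hT.le (hgrid T hTT)
    refine le_of_tendsto (hr.const_mul η) ?_
    filter_upwards [hlt (eventually_ge_atTop j)] with k hk
    refine le_trans ?_ (hsum k T hTT)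
    rw [Finset.mul_sum]
    refine Finset.sum_le_sum fun i _ => ?_
    have h1 := hHm (i * h k, p k (i + 1)) hk
    have h2 : 0 ≤ ∑ l ∈ Finset.range k, 2 ^ l * ‖v k i - W l (i * h k, p k (i + 1))‖ := by positivity
    have h3 := hgs k i
    rw [smul_eq_mul, mul_left_comm]
    unfold penalty
    gcongr
    dsimp only at h1
    linarith

end Limits

section Superposition

open ProbabilityTheory Metric Filter

set_option maxSynthPendingDepth 3
set_option linter.unusedSectionVars false

variable {E : Type*} [NormedAddCommGroup E] [NormedSpace ℝ E] [FiniteDimensional ℝ E]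
  [MeasureSpace E] [BorelSpace E] [(volume : Measure E).IsAddHaarMeasure]

variable {τ : Measure ℝ} {κ : Kernel ℝ E} {b : ℝ → E → E} {T : ℝ}

/-- Smooth fields `W l` approximating `b` so well that the weighted errors, together with an
infinite penalty on the null set `N`, have a lower semicontinuous integrable majorant `Φ`, which is
the supremum of the bounded Lipschitz functions `H k`. -/
structure IsApproximation (lam : Measure (ℝ × E)) (b : ℝ → E → E) (N : Set (ℝ × E))
    (W : ℕ → ℝ × E → E) (H : ℕ → ℝ × E → ℝ) (Φ : ℝ × E → ℝ≥0∞) : Prop where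
  field : ∀ l, ∃ K, IsBoundedLipschitzField (W l) K
  cost : ∀ k, ∃ K, IsBoundedLipschitzField (H k) K
  cost_nonneg : ∀ k q, 0 ≤ H k q
  cost_mono : ∀ q, Monotone fun k => H k q
  cost_le : ∀ k q, ENNReal.ofReal (H k q) ≤ Φ q
  le_iSup : ∀ q, Φ q ≤ ⨆ k, ENNReal.ofReal (H k q)
  sum_le : ∀ k q, ∑ l ∈ Finset.range k, 2 ^ l * ‖b q.1 q.2 - W l q‖ₑ ≤ Φ q
  eq_top : ∀ q ∈ N, Φ q = ⊤
  lintegral_le : ∫⁻ q, Φ q ∂lam ≤ 3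

lemma exists_isApproximation (lam : Measure (ℝ × E)) [IsFiniteMeasure lam]
    (hb : Measurable (Function.uncurry b)) (hb1 : ∀ r y, ‖b r y‖ ≤ 1) {N : Set (ℝ × E)}
    (hN : MeasurableSet N) (hN0 : lam N = 0) : ∃ W H Φ, IsApproximation lam b N W H Φ := by
  have hmem : MemLp (Function.uncurry b) 1 lam :=
    MemLp.of_bound hb.aestronglyMeasurable 1 (.of_forall fun q => hb1 q.1 q.2)
  have happrox : ∀ l : ℕ, ∃ w : ℝ × E → E, HasCompactSupport w ∧ ContDiff ℝ (⊤ : ℕ∞) w ∧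
      eLpNorm (Function.uncurry b - w) 1 lam ≤ ENNReal.ofReal ((1 / 4) ^ l) := fun l =>
    hmem.exist_eLpNorm_sub_le (by simp) le_rfl (by positivity)
  choose W hWc hWs hWe using happrox
  have hW : ∀ l, ∃ K, IsBoundedLipschitzField (W l) K := fun l => by
    obtain ⟨C, hC⟩ := (hWs l).lipschitzWith_of_hasCompactSupport (hWc l) (by simp)
    obtain ⟨M, hM⟩ := (hWs l).continuous.bounded_above_of_compact_support (hWc l)
    refine ⟨max M C, fun q => (hM q).trans (le_max_left _ _), fun s t x y => ?_⟩
    have := hC.dist_le_mul (s, x) (t, y)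
    rw [dist_eq_norm, Prod.dist_eq, Real.dist_eq, dist_eq_norm] at this
    refine this.trans ?_
    have h1 : max |s - t| ‖x - y‖ ≤ |s - t| + ‖x - y‖ :=
      max_le_add_of_nonneg (abs_nonneg _) (norm_nonneg _)
    exact mul_le_mul (le_max_right _ _) h1 (by positivity) ((NNReal.coe_nonneg C).trans
      (le_max_right _ _))
  have hm : ∀ l, Measurable fun q : ℝ × E => (2 : ℝ≥0∞) ^ l * ‖b q.1 q.2 - W l q‖ₑ := fun l =>
    ((hb.sub (hWs l).continuous.measurable).enorm).const_mul _
  have hNm : Measurable (N.indicator fun _ => (⊤ : ℝ≥0∞)) := measurable_const.indicator hN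
  set f : ℝ × E → ℝ≥0∞ := fun q =>
    (∑' l, 2 ^ l * ‖b q.1 q.2 - W l q‖ₑ) + N.indicator (fun _ => (⊤ : ℝ≥0∞)) q with hf
  have hfm : Measurable f := (Measurable.tsum hm).add hNm
  have hfi : ∫⁻ q, f q ∂lam ≤ 2 := by
    rw [lintegral_add_right _ hNm, lintegral_indicator_const hN, hN0, mul_zero, add_zero,
      lintegral_tsum fun l => (hm l).aemeasurable]
    have hterm : ∀ l : ℕ, ∫⁻ q, 2 ^ l * ‖b q.1 q.2 - W l q‖ₑ ∂lam ≤
        ENNReal.ofReal ((1 / 2) ^ l) := fun l => by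
      have h1 := hWe l
      rw [eLpNorm_one_eq_lintegral_enorm] at h1
      rw [lintegral_const_mul' _ _ (by simp)]
      calc (2 : ℝ≥0∞) ^ l * ∫⁻ q, ‖b q.1 q.2 - W l q‖ₑ ∂lam
          ≤ 2 ^ l * ENNReal.ofReal ((1 / 4) ^ l) := by gcongr; exact h1
        _ = ENNReal.ofReal (2 ^ l * (1 / 4) ^ l) := by
            rw [ENNReal.ofReal_mul (by positivity), ENNReal.ofReal_pow (by norm_num)]
            simp
        _ = _ := by rw [← mul_pow]; norm_num
    calc _ ≤ ∑' l : ℕ, ENNReal.ofReal ((1 / 2) ^ l) := ENNReal.tsum_le_tsum hterm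
      _ = ENNReal.ofReal (∑' l : ℕ, (1 / 2) ^ l) :=
          (ENNReal.ofReal_tsum_of_nonneg (fun l => by positivity) summable_geometric_two).symm
      _ = 2 := by rw [tsum_geometric_two]; simp
  obtain ⟨Φ, hΦ, hlsc, hΦi⟩ := exists_le_lowerSemicontinuous_lintegral_ge lam f hfm one_ne_zero
  obtain ⟨H, hH0, hHk, hHl, hHm, hHle, hHsup⟩ := hlsc.exists_lipschitz_seq
  refine ⟨W, H, Φ, hW, fun k => ⟨k, ?_, ?_⟩, hH0, hHm, hHle, hHsup, fun k q => ?_, fun q hq => ?_,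
    ?_⟩
  · intro q
    rw [Real.norm_of_nonneg (hH0 k q)]
    exact hHk k q
  · intro s t x y
    have := hHl k (s, x) (t, y)
    rw [Prod.dist_eq, Real.dist_eq, dist_eq_norm] at this
    refine this.trans ?_
    gcongr
    exact max_le_add_of_nonneg (abs_nonneg _) (norm_nonneg _)
  · exact (ENNReal.sum_le_tsum _).trans (le_self_add.trans (hΦ q))
  · have := hΦ q
    simpa [hf, hq] using this
  · refine hΦi.trans ((add_le_add_left hfi 1).trans ?_)
    norm_num

namespace IsApproximation

variable {lam : Measure (ℝ × E)} {N : Set (ℝ × E)} {W : ℕ → ℝ × E → E} {H : ℕ → ℝ × E → ℝ}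
  {Φ : ℝ × E → ℝ≥0∞} {η : ℝ}

lemma setIntegral_penalty_le [IsFiniteMeasure τ] [IsMarkovKernel κ]
    (h : IsApproximation (τ ⊗ₘ κ) b N W H Φ) (hb : Measurable (Function.uncurry b))
    (hb1 : ∀ r y, ‖b r y‖ ≤ 1) (hη : 0 ≤ η) (k : ℕ) (t : ℝ) :
    ∫ r in Ioc 0 t, ∫ y, penalty η W H k r y (b r y) ∂κ r ∂τ ≤ 6 * η := by
  obtain ⟨K, hL⟩ := exists_isLagrangian_penalty hη h.field h.cost_nonneg h.cost k
  have hm : Measurable (Function.uncurry fun r y => penalty η W H k r y (b r y)) :=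
    hL.continuous.measurable.comp (measurable_fst.prodMk (measurable_snd.prodMk hb))
  have habs : ∀ r y, |penalty η W H k r y (b r y)| ≤ K := fun r y => by
    rw [abs_of_nonneg (hL.nonneg _ _ _)]
    exact hL.le _ _ _ (hb1 r y)
  have hi := integrable_integral_kernel (τ := τ) (κ := κ) hm habs
  have hi2 : Integrable (Function.uncurry fun r y => penalty η W H k r y (b r y)) (τ ⊗ₘ κ) :=
    .of_bound hm.aestronglyMeasurable K (.of_forall fun q => habs q.1 q.2)
  calc _ ≤ ∫ r, ∫ y, penalty η W H k r y (b r y) ∂κ r ∂τ :=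
        setIntegral_le_integral hi
          (.of_forall fun r => integral_nonneg fun y => hL.nonneg _ _ _)
    _ = ∫ q, penalty η W H k q.1 q.2 (b q.1 q.2) ∂(τ ⊗ₘ κ) := (Measure.integral_compProd hi2).symm
    _ = (∫⁻ q, ENNReal.ofReal (penalty η W H k q.1 q.2 (b q.1 q.2)) ∂(τ ⊗ₘ κ)).toReal :=
        integral_eq_lintegral_of_nonneg_ae (.of_forall fun q => hL.nonneg _ _ _)
          hm.aestronglyMeasurable
    _ ≤ (ENNReal.ofReal (6 * η)).toReal := by
        refine ENNReal.toReal_mono ENNReal.ofReal_ne_top ?_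
        calc _ ≤ ∫⁻ q, ENNReal.ofReal (2 * η) * Φ q ∂(τ ⊗ₘ κ) := by
              refine lintegral_mono fun q => ?_
              have e : ENNReal.ofReal (∑ l ∈ Finset.range k, 2 ^ l * ‖b q.1 q.2 - W l q‖) =
                  ∑ l ∈ Finset.range k, 2 ^ l * ‖b q.1 q.2 - W l q‖ₑ := by
                rw [ENNReal.ofReal_sum_of_nonneg fun l _ => by positivity]
                refine Finset.sum_congr rfl fun l _ => ?_
                rw [ENNReal.ofReal_mul (by positivity), ENNReal.ofReal_pow (by norm_num),
                  ofReal_norm]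
                simp
              unfold penalty
              rw [ENNReal.ofReal_mul hη, ENNReal.ofReal_add (by positivity) (h.cost_nonneg _ _), e,
                mul_comm 2 η, ENNReal.ofReal_mul hη, mul_assoc]
              gcongr
              rw [ENNReal.ofReal_ofNat, two_mul]
              exact add_le_add (h.sum_le k q) (h.cost_le k q)
          _ = ENNReal.ofReal (2 * η) * ∫⁻ q, Φ q ∂(τ ⊗ₘ κ) :=
              lintegral_const_mul' _ _ ENNReal.ofReal_ne_top
          _ ≤ ENNReal.ofReal (2 * η) * ENNReal.ofReal 3 := by
              gcongr
              simpa using h.lintegral_le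
          _ = ENNReal.ofReal (6 * η) := by
              rw [← ENNReal.ofReal_mul (by positivity)]
              congr 1
              ring
    _ = 6 * η := ENNReal.toReal_ofReal (by positivity)

/-- A curve of finite penalty avoids `N` and is an integral curve of `b`. -/
lemma isIntegralCurve [IsFiniteMeasure τ]
    (h : IsApproximation lam b N W H Φ) (hb : Measurable (Function.uncurry b))
    (hb1 : ∀ r y, ‖b r y‖ ≤ 1) (hη : 0 < η) {c : ℝ} {γ : ℝ → E} (hγ : Continuous γ)
    (hW : ∀ l, ∀ t ∈ Icc 0 T,
      η * (2 ^ l * ‖γ t - γ 0 - ∫ r in Ioc 0 t, W l (r, γ r) ∂τ‖) ≤ c)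
    (hH : ∀ j, η * ∫ r in Ioc 0 T, H j (r, γ r) ∂τ ≤ c) :
    (∀ᵐ r ∂τ.restrict (Ioc 0 T), (r, γ r) ∉ N) ∧
      ∀ t ∈ Icc 0 T, γ t - γ 0 = ∫ r in Ioc 0 t, b r (γ r) ∂τ := by
  have hcont : Continuous fun r => (r, γ r) := by fun_prop
  have hHc : ∀ k, Continuous fun r => H k (r, γ r) := fun k => by
    obtain ⟨K, hK⟩ := h.cost k
    exact hK.continuous.comp hcont
  have hΦ : ∀ q, Φ q = ⨆ k, ENNReal.ofReal (H k q) := fun q =>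
    le_antisymm (h.le_iSup q) (iSup_le fun k => h.cost_le k q)
  have hΦm : Measurable fun r => Φ (r, γ r) := by
    simp only [hΦ]
    exact .iSup fun k => (hHc k).measurable.ennreal_ofReal
  have hfin : ∫⁻ r in Ioc 0 T, Φ (r, γ r) ∂τ ≤ ENNReal.ofReal (c / η) := by
    simp only [hΦ]
    rw [lintegral_iSup (fun k => (hHc k).measurable.ennreal_ofReal)
      fun i j hij r => ENNReal.ofReal_le_ofReal (h.cost_mono _ hij)]
    refine iSup_le fun k => ?_
    obtain ⟨K, hK⟩ := h.cost k
    rw [← ofReal_integral_eq_lintegral_ofReal (hK.integrable_comp hγ).integrableOn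
      (.of_forall fun r => h.cost_nonneg _ _)]
    refine ENNReal.ofReal_le_ofReal ?_
    rw [le_div_iff₀ hη, mul_comm]
    exact hH k
  refine ⟨?_, fun t ht => ?_⟩
  · filter_upwards [ae_lt_top hΦm (hfin.trans_lt ENNReal.ofReal_lt_top).ne] with r hr hrN
    exact hr.ne (h.eq_top _ hrN)
  have hbi : IntegrableOn (fun r => b r (γ r)) (Ioc 0 t) τ :=
    (Integrable.of_bound (hb.comp hcont.measurable).aestronglyMeasurable 1
      (.of_forall fun r => hb1 _ _)).integrableOn
  have hc : 0 ≤ c / η := by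
    have := hW 0 t ht
    have : 0 ≤ c := le_trans (by positivity) this
    positivity
  have key : ∀ l : ℕ, 2 ^ l * ‖γ t - γ 0 - ∫ r in Ioc 0 t, b r (γ r) ∂τ‖ ≤ 2 * (c / η) := by
    intro l
    obtain ⟨K, hK⟩ := h.field l
    have hWi : IntegrableOn (fun r => W l (r, γ r)) (Ioc 0 t) τ := (hK.integrable_comp hγ).integrableOn
    have h1 : 2 ^ l * ‖γ t - γ 0 - ∫ r in Ioc 0 t, W l (r, γ r) ∂τ‖ ≤ c / η := by
      rw [le_div_iff₀ hη, mul_comm]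
      exact hW l t ht
    have h2 : 2 ^ l * ‖∫ r in Ioc 0 t, (b r (γ r) - W l (r, γ r)) ∂τ‖ ≤ c / η := by
      rw [← ENNReal.ofReal_le_ofReal_iff hc, ENNReal.ofReal_mul (by positivity),
        ofReal_norm, ENNReal.ofReal_pow (by norm_num), ENNReal.ofReal_ofNat]
      refine le_trans ?_ hfin
      calc (2 : ℝ≥0∞) ^ l * ‖∫ r in Ioc 0 t, (b r (γ r) - W l (r, γ r)) ∂τ‖ₑ
          ≤ 2 ^ l * ∫⁻ r in Ioc 0 t, ‖b r (γ r) - W l (r, γ r)‖ₑ ∂τ := by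
            gcongr; exact enorm_integral_le_lintegral_enorm _
        _ = ∫⁻ r in Ioc 0 t, 2 ^ l * ‖b r (γ r) - W l (r, γ r)‖ₑ ∂τ :=
            (lintegral_const_mul' _ _ (by simp)).symm
        _ ≤ ∫⁻ r in Ioc 0 T, 2 ^ l * ‖b r (γ r) - W l (r, γ r)‖ₑ ∂τ :=
            lintegral_mono_set (Ioc_subset_Ioc_right ht.2)
        _ ≤ _ := lintegral_mono fun r => le_trans (Finset.single_le_sum
              (f := fun l => 2 ^ l * ‖b r (γ r) - W l (r, γ r)‖ₑ) (fun _ _ => zero_le)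
              (Finset.mem_range.2 (Nat.lt_succ_self l))) (h.sum_le (l + 1) (r, γ r))
    rw [MeasureTheory.integral_sub hbi hWi] at h2
    calc _ = 2 ^ l * ‖(γ t - γ 0 - ∫ r in Ioc 0 t, W l (r, γ r) ∂τ) -
          (∫ r in Ioc 0 t, b r (γ r) ∂τ - ∫ r in Ioc 0 t, W l (r, γ r) ∂τ)‖ := by
          rw [sub_sub_sub_cancel_right]
      _ ≤ 2 ^ l * (‖γ t - γ 0 - ∫ r in Ioc 0 t, W l (r, γ r) ∂τ‖ +
          ‖∫ r in Ioc 0 t, b r (γ r) ∂τ - ∫ r in Ioc 0 t, W l (r, γ r) ∂τ‖) := by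
          gcongr; exact norm_sub_le _ _
      _ ≤ 2 * (c / η) := by linarith
  rw [← sub_eq_zero, ← norm_eq_zero]
  by_contra hne
  have hpos : 0 < ‖γ t - γ 0 - ∫ r in Ioc 0 t, b r (γ r) ∂τ‖ :=
    lt_of_le_of_ne (norm_nonneg _) (Ne.symm hne)
  obtain ⟨l, hl⟩ := pow_unbounded_of_one_lt
    (2 * (c / η) / ‖γ t - γ 0 - ∫ r in Ioc 0 t, b r (γ r) ∂τ‖) (one_lt_two (α := ℝ))
  rw [div_lt_iff₀ hpos] at hl
  exact absurd (key l) (not_le.2 hl)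

end IsApproximation

/-- Superposition in dual form: an inequality between the values at two times which holds along all
integral curves of `b` holds on average along every transported curve of measures. -/
theorem IsTransport.integral_le_of_curves [IsFiniteMeasure τ] [IsMarkovKernel κ]
    (htr : IsTransport τ κ b T) (hτ : IsContinuousClock τ) (hT : 0 < T) {A B : ℝ}
    (hA : A ∈ Icc 0 T) (hB : B ∈ Icc 0 T) {F g : E → ℝ} {K : ℝ} (hF : Measurable F)
    (hF0 : ∀ x, 0 ≤ F x) (hFK : ∀ x, F x ≤ K) (hg : IsBoundedLipschitz g K) (hg0 : ∀ x, 0 ≤ g x)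
    {N : Set (ℝ × E)} (hN : MeasurableSet N) (hN0 : (τ ⊗ₘ κ) N = 0)
    (hcurve : ∀ γ : ℝ → E, Continuous γ → (∀ᵐ r ∂τ.restrict (Ioc 0 T), (r, γ r) ∉ N) →
      (∀ t ∈ Icc 0 T, γ t - γ 0 = ∫ r in Ioc 0 t, b r (γ r) ∂τ) → F (γ A) ≤ g (γ B)) :
    ∫ x, F x ∂κ A ≤ ∫ x, g x ∂κ B := by
  by_contra! hlt
  obtain ⟨W, H, Φ, happ⟩ := exists_isApproximation (τ ⊗ₘ κ) htr.measurable htr.norm_le hN hN0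
  have hFi : Integrable F (κ A) := .of_bound hF.aestronglyMeasurable K (.of_forall fun x => by
    rw [Real.norm_of_nonneg (hF0 x)]; exact hFK x)
  have hKF : ∫ x, (K - F x) ∂κ A = K - ∫ x, F x ∂κ A := by
    rw [MeasureTheory.integral_sub (integrable_const _) hFi]; simp
  have hKF0 : 0 ≤ ∫ x, (K - F x) ∂κ A := integral_nonneg fun x => sub_nonneg.2 (hFK x)
  have hgi0 : 0 ≤ ∫ x, g x ∂κ B := integral_nonneg hg0
  obtain ⟨ε, hε, hεK⟩ : ∃ ε > 0, ∫ x, (K - F x) ∂κ A + ∫ x, g x ∂κ B + 4 * ε = K :=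
    ⟨(∫ x, F x ∂κ A - ∫ x, g x ∂κ B) / 4, by linarith, by rw [hKF]; ring⟩
  obtain ⟨Γ, hΓ, hlsc, hΓi⟩ := exists_le_lowerSemicontinuous_lintegral_ge (κ A)
    (fun x => ENNReal.ofReal (K - F x)) (measurable_const.sub hF).ennreal_ofReal
    (ε := ENNReal.ofReal ε) (by simpa using hε)
  obtain ⟨G, hG0, hGk, hGl, hGm, hGle, hGsup⟩ := hlsc.exists_lipschitz_seq
  have hGbl : ∀ k : ℕ, IsBoundedLipschitz (G k) k := fun k =>
    ⟨fun x => by rw [abs_of_nonneg (hG0 k x)]; exact hGk k x,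
      fun x y => by rw [← dist_eq_norm]; exact hGl k x y⟩
  have hGi : ∀ k, ∫ x, G k x ∂κ A ≤ ∫ x, (K - F x) ∂κ A + ε := fun k => by
    rw [← ENNReal.ofReal_le_ofReal_iff (by linarith), ENNReal.ofReal_add hKF0 hε.le,
      ofReal_integral_eq_lintegral_ofReal ((hGbl k).integrable _) (.of_forall (hG0 k)),
      ofReal_integral_eq_lintegral_ofReal (f := fun x => K - F x) ((integrable_const _).sub hFi)
        (.of_forall fun x => sub_nonneg.2 (hFK x))]
    exact (lintegral_mono (hGle k)).trans hΓi
  set D := ∫ x, (K - F x) ∂κ A + ∫ x, g x ∂κ B with hD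
  have hball : ∃ R : ℝ, D + 3 * ε ≤ (D + 7 / 2 * ε) * (κ T).real (closedBall 0 R) := by
    have hU : (⋃ n : ℕ, closedBall (0 : E) n) = univ := iUnion_closedBall_nat 0
    have ht : Tendsto (fun n : ℕ => (κ T).real (closedBall (0 : E) n)) atTop (𝓝 1) := by
      have := tendsto_measure_iUnion_atTop (μ := κ T) (s := fun n : ℕ => closedBall (0 : E) n)
        fun i j hij => closedBall_subset_closedBall (by exact_mod_cast hij)
      rw [hU, measure_univ] at this
      simpa [measureReal_def, Function.comp_def] using (ENNReal.tendsto_toReal ENNReal.one_ne_top).comp this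
    have ht2 := ht.const_mul (D + 7 / 2 * ε)
    rw [mul_one] at ht2
    obtain ⟨n, hn⟩ := (ht2.eventually_const_le (show D + 3 * ε < D + 7 / 2 * ε by linarith)).exists
    exact ⟨n, hn⟩
  obtain ⟨R, hR⟩ := hball
  have hη : 0 < ε / 6 := by positivity
  have hpath : ∀ k, ∀ᶠ n : ℕ in atTop, ∃ p v, IsDiscretePath τ (T / n) n p v ∧ ‖p n‖ ≤ R ∧
      G k (p ⌊A / (T / n)⌋₊) + g (p ⌊B / (T / n)⌋₊) + ∑ i ∈ Finset.range n,
        gridStep τ (T / n) i * penalty (ε / 6) W H k (i * (T / n)) (p (i + 1)) (v i) ≤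
          D + 7 / 2 * ε := by
    intro k
    obtain ⟨M, hM⟩ := exists_isLagrangian_penalty hη.le happ.field happ.cost_nonneg happ.cost k
    have hmax1 : M ≤ max M (max k K) := le_max_left _ _
    have hmax2 : (k : ℝ) ≤ max M (max k K) := (le_max_left _ _).trans (le_max_right _ _)
    have hmax3 : K ≤ max M (max k K) := (le_max_right _ _).trans (le_max_right _ _)
    have hM' : IsLagrangian (penalty (ε / 6) W H k) (max M (max k K)) :=
      ⟨hM.continuous, hM.nonneg, fun t x v hv => (hM.le t x v hv).trans hmax1,
        fun s t x y v hv => (hM.lipschitz s t x y v hv).trans (by gcongr)⟩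
    have hG' : IsBoundedLipschitz (G k) (max M (max k K)) :=
      ⟨fun x => ((hGbl k).abs_le x).trans hmax2,
        fun x y => ((hGbl k).abs_sub_le x y).trans (by gcongr)⟩
    have hg' : IsBoundedLipschitz g (max M (max k K)) :=
      ⟨fun x => (hg.abs_le x).trans hmax3, fun x y => (hg.abs_sub_le x y).trans (by gcongr)⟩
    have hcost := happ.setIntegral_penalty_le htr.measurable htr.norm_le hη.le k T
    have := htr.eventually_exists_path hτ hT hM' hG' hg' (hG0 k) hg0 hA hB (c := D + 3 * ε)
      (by linarith [hGi k]) measurableSet_closedBall hR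
    filter_upwards [this] with n hn
    obtain ⟨p, v, hp, hpD, hpc⟩ := hn
    exact ⟨p, v, hp, by simpa using hpD, hpc⟩
  obtain ⟨γ, hγ, hγG, hγW, hγH⟩ := hτ.exists_limit_curve hT hη.le happ.field happ.cost_nonneg
    happ.cost happ.cost_mono hG0 (fun k => (hGbl k).continuous) hGm hg.continuous hg0 hA hB hpath
  obtain ⟨hγN, hγb⟩ := happ.isIntegralCurve htr.measurable htr.norm_le hη hγ hγW hγH
  have hle := hcurve γ hγ hγN hγb
  have hfinal : ENNReal.ofReal (K - F (γ A)) ≤ ENNReal.ofReal (D + 7 / 2 * ε - g (γ B)) := by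
    refine (hΓ _).trans ((hGsup _).trans (iSup_le fun k => ENNReal.ofReal_le_ofReal ?_))
    linarith [hγG k]
  have hnn : 0 ≤ D + 7 / 2 * ε - g (γ B) := by linarith [hγG 0, hG0 0 (γ A)]
  rw [ENNReal.ofReal_le_ofReal_iff hnn] at hfinal
  linarith

end Superposition

section Cutoff

open ProbabilityTheory Metric Filter

set_option maxSynthPendingDepth 3
set_option linter.unusedSectionVars false

variable {E : Type*} [NormedAddCommGroup E] [InnerProductSpace ℝ E] [FiniteDimensional ℝ E]

/-- A smooth substitute for the norm. -/
def smoothNorm (x : E) : ℝ := √(1 + ‖x‖ ^ 2)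

lemma contDiff_smoothNorm : ContDiff ℝ (⊤ : ℕ∞) (smoothNorm : E → ℝ) :=
  (contDiff_const.add (contDiff_norm_sq ℝ)).sqrt fun x => by positivity

lemma norm_le_smoothNorm (x : E) : ‖x‖ ≤ smoothNorm x :=
  Real.le_sqrt_of_sq_le (by linarith)

lemma norm_fderiv_smoothNorm_le (x : E) : ‖fderiv ℝ smoothNorm x‖ ≤ 1 := by
  have h : LipschitzWith 1 (smoothNorm : E → ℝ) := LipschitzWith.of_le_add fun x y => by
    have h1 : ‖x‖ ≤ ‖y‖ + dist x y := by
      rw [dist_eq_norm]; linarith [norm_sub_norm_le x y]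
    have h2 := norm_le_smoothNorm y
    have h3 : smoothNorm y ^ 2 = 1 + ‖y‖ ^ 2 := Real.sq_sqrt (by positivity)
    have h4 : 0 ≤ smoothNorm y := Real.sqrt_nonneg _
    have h5 : 0 ≤ dist x y := dist_nonneg
    refine (Real.sqrt_le_left (by positivity)).2 ?_
    have h6 : ‖x‖ ^ 2 ≤ (‖y‖ + dist x y) ^ 2 := by gcongr
    nlinarith
  simpa using norm_fderiv_le_of_lipschitz ℝ h (x₀ := x)

/-- The radial function with profile `ψ`, read inwards from radius `R`. -/
def radial (ψ : ℝ → ℝ) (R : ℝ) (x : E) : ℝ := ψ (R - smoothNorm x)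

variable {ψ : ℝ → ℝ}

lemma contDiff_radial (hψ : ContDiff ℝ (⊤ : ℕ∞) ψ) (R : ℝ) :
    ContDiff ℝ (⊤ : ℕ∞) (radial ψ R : E → ℝ) :=
  hψ.comp (contDiff_const.sub contDiff_smoothNorm)

lemma hasCompactSupport_radial (h0 : ∀ z ≤ 0, ψ z = 0) (R : ℝ) :
    HasCompactSupport (radial ψ R : E → ℝ) :=
  .intro (isCompact_closedBall (0 : E) R) fun x hx => h0 _ <| by
    have := norm_le_smoothNorm x
    simp only [mem_closedBall, dist_zero_right, not_le] at hx
    linarith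

lemma fderiv_radial (hψ : ContDiff ℝ (⊤ : ℕ∞) ψ) (R : ℝ) (x : E) :
    fderiv ℝ (radial ψ R) x = -(deriv ψ (R - smoothNorm x) • fderiv ℝ smoothNorm x) := by
  have h1 : HasFDerivAt (fun x : E => R - smoothNorm x) (-fderiv ℝ smoothNorm x) x :=
    ((contDiff_smoothNorm.differentiable (by simp)) x).hasFDerivAt.const_sub R
  have h2 : HasDerivAt ψ (deriv ψ (R - smoothNorm x)) (R - smoothNorm x) :=
    (hψ.differentiable (by simp) _).hasDerivAt
  rw [← smul_neg]
  exact (h2.comp_hasFDerivAt x h1).fderiv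

lemma abs_fderiv_radial_le (hψ : ContDiff ℝ (⊤ : ℕ∞) ψ) (R : ℝ) (x v : E) :
    |fderiv ℝ (radial ψ R) x v| ≤ |deriv ψ (R - smoothNorm x)| * ‖v‖ := by
  rw [fderiv_radial hψ, ← Real.norm_eq_abs]
  refine (ContinuousLinearMap.le_opNorm _ _).trans ?_
  rw [norm_neg, norm_smul, Real.norm_eq_abs]
  have := norm_fderiv_smoothNorm_le x
  gcongr
  exact mul_le_of_le_one_right (abs_nonneg _) this

/-- The derivative of the smooth transition function. -/
def transitionDeriv : ℝ → ℝ := deriv Real.smoothTransition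

lemma contDiff_transitionDeriv : ContDiff ℝ (⊤ : ℕ∞) transitionDeriv :=
  ((contDiff_infty_iff_deriv (𝕜 := ℝ)).1 Real.smoothTransition.contDiff).2

lemma monotone_smoothTransition : Monotone Real.smoothTransition := Real.smoothTransition.monotone

lemma transitionDeriv_nonneg (z : ℝ) : 0 ≤ transitionDeriv z :=
  monotone_smoothTransition.deriv_nonneg

lemma transitionDeriv_of_nonpos : ∀ z ≤ 0, transitionDeriv z = 0 := fun z hz =>
  IsLocalMin.deriv_eq_zero <| .of_forall fun w => by
    rw [Real.smoothTransition.zero_of_nonpos hz]; exact Real.smoothTransition.nonneg w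

lemma transitionDeriv_of_one_le {z : ℝ} (hz : 1 ≤ z) : transitionDeriv z = 0 :=
  IsLocalMax.deriv_eq_zero <| .of_forall fun w => by
    rw [Real.smoothTransition.one_of_one_le hz]; exact Real.smoothTransition.le_one w

lemma exists_transitionDeriv_bound : ∃ C, 0 ≤ C ∧ (∀ z, |transitionDeriv z| ≤ C) ∧
    ∀ z, |deriv transitionDeriv z| ≤ C := by
  have hc : HasCompactSupport transitionDeriv := .intro (isCompact_Icc (a := (0 : ℝ)) (b := 1))
    fun z hz => by
      rcases le_or_gt z 0 with h | h
      · exact transitionDeriv_of_nonpos z h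
      · exact transitionDeriv_of_one_le (not_lt.1 fun h1 => hz ⟨h.le, h1.le⟩)
  obtain ⟨C, hC⟩ := contDiff_transitionDeriv.continuous.bounded_above_of_compact_support hc
  obtain ⟨D, hD⟩ := (contDiff_transitionDeriv.continuous_deriv
    (by simp)).bounded_above_of_compact_support hc.deriv
  exact ⟨max C D, (norm_nonneg _).trans ((hC 0).trans (le_max_left _ _)),
    fun z => (hC z).trans (le_max_left _ _), fun z => (hD z).trans (le_max_right _ _)⟩

/-- A smooth cutoff function, vanishing for `R ≤ smoothNorm x`. -/
def cutoff (R : ℝ) : E → ℝ := radial Real.smoothTransition R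

lemma contDiff_cutoff (R : ℝ) : ContDiff ℝ (⊤ : ℕ∞) (cutoff R : E → ℝ) :=
  contDiff_radial Real.smoothTransition.contDiff R

lemma hasCompactSupport_cutoff (R : ℝ) : HasCompactSupport (cutoff R : E → ℝ) :=
  hasCompactSupport_radial (fun _ => Real.smoothTransition.zero_of_nonpos) R

lemma cutoff_nonneg (R : ℝ) (x : E) : 0 ≤ cutoff R x := Real.smoothTransition.nonneg _

lemma cutoff_le_one (R : ℝ) (x : E) : cutoff R x ≤ 1 := Real.smoothTransition.le_one _

lemma cutoff_eq_one {R : ℝ} {x : E} (h : smoothNorm x + 1 ≤ R) : cutoff R x = 1 :=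
  Real.smoothTransition.one_of_one_le (by linarith)

lemma abs_fderiv_cutoff_le (R : ℝ) (x v : E) :
    |fderiv ℝ (cutoff R) x v| ≤ transitionDeriv (R - smoothNorm x) * ‖v‖ := by
  have := abs_fderiv_radial_le Real.smoothTransition.contDiff R x v
  change _ ≤ |transitionDeriv (R - smoothNorm x)| * _ at this
  rwa [abs_of_nonneg (transitionDeriv_nonneg _)] at this

lemma tendsto_cutoff (x : E) : Tendsto (fun n : ℕ => cutoff (n : ℝ) x) atTop (𝓝 1) := by
  obtain ⟨N, hN⟩ := exists_nat_ge (smoothNorm x + 1)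
  refine tendsto_atTop_of_eventually_const (i₀ := N) fun n hn => cutoff_eq_one (hN.trans ?_)
  exact_mod_cast hn

variable [MeasurableSpace E] [BorelSpace E]

/-- Measurability of a family of finite measures can be tested on smooth compactly supported
functions. -/
lemma measurable_of_measurable_integral {α : Type*} [MeasurableSpace α] {μ : α → Measure E}
    [∀ a, IsFiniteMeasure (μ a)]
    (h : ∀ u : E → ℝ, ContDiff ℝ (⊤ : ℕ∞) u → HasCompactSupport u →
      Measurable fun a => ∫ x, u x ∂μ a) : Measurable μ := by
  have hopen : ∀ U : Set E, IsOpen U → Measurable fun a => μ a U := by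
    intro U hU
    obtain ⟨f, hfs, hf, hfr⟩ := hU.exists_contDiff_support_eq (n := ⊤)
    let u : ℕ → E → ℝ := fun n x => Real.smoothTransition (n * f x) * cutoff (n : ℝ) x
    have hu : ∀ n, ContDiff ℝ (⊤ : ℕ∞) (u n) := fun n =>
      (Real.smoothTransition.contDiff.comp (contDiff_const.mul hf)).mul (contDiff_cutoff _)
    have hlim : ∀ x, Tendsto (fun n => u n x) atTop (𝓝 (U.indicator 1 x)) := fun x => by
      by_cases hx : x ∈ U
      · have hpos : 0 < f x := lt_of_le_of_ne (hfr ⟨x, rfl⟩).1 fun h0 => by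
          rw [← hfs, Function.mem_support] at hx; exact hx h0.symm
        have h1 : Tendsto (fun n : ℕ => Real.smoothTransition (n * f x)) atTop (𝓝 1) := by
          obtain ⟨N, hN⟩ := exists_nat_ge (1 / f x)
          refine tendsto_atTop_of_eventually_const (i₀ := N) fun n hn =>
            Real.smoothTransition.one_of_one_le ?_
          rw [← div_le_iff₀ hpos]
          exact hN.trans (by exact_mod_cast hn)
        simpa [u, hx] using h1.mul (tendsto_cutoff x)
      · have hf0 : f x = 0 := by rwa [← hfs, Function.notMem_support] at hx
        simp [u, hx, hf0, Real.smoothTransition.zero]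
    have hreal : Measurable fun a => (μ a).real U := by
      refine measurable_of_tendsto_metrizable (f := fun n a => ∫ x, u n x ∂μ a)
        (fun n => h _ (hu n) (hasCompactSupport_cutoff _).mul_left) (tendsto_pi_nhds.2 fun a => ?_)
      rw [← integral_indicator_one hU.measurableSet]
      refine tendsto_integral_of_dominated_convergence (fun _ => 1)
        (fun n => (hu n).continuous.aestronglyMeasurable) (integrable_const _)
        (fun n => .of_forall fun x => ?_) (.of_forall hlim)
      have h1 := Real.smoothTransition.nonneg (n * f x)
      have h2 := cutoff_nonneg (n : ℝ) x
      rw [Real.norm_of_nonneg (mul_nonneg h1 h2)]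
      exact mul_le_one₀ (Real.smoothTransition.le_one _) h2 (cutoff_le_one _ _)
    have e : (fun a => μ a U) = fun a => ENNReal.ofReal ((μ a).real U) := by
      funext a; exact (ENNReal.ofReal_toReal (measure_ne_top _ _)).symm
    rw [e]
    exact hreal.ennreal_ofReal
  exact .measure_of_isPiSystem (BorelSpace.measurable_eq (α := E)) isPiSystem_isOpen hopen
    (hopen univ isOpen_univ)

lemma isSFiniteKernel_of_isFiniteMeasure {α β : Type*} [MeasurableSpace α] [MeasurableSpace β]
    (κ : Kernel α β)    [∀ a, IsFiniteMeasure (κ a)] : IsSFiniteKernel κ := by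
  classical
  let s : ℕ → Set α := fun n => {a | ⌊(κ a).real univ⌋₊ = n}
  have hs : ∀ n, MeasurableSet (s n) := fun n =>
    (Nat.measurable_floor.comp (κ.measurable_coe .univ).ennreal_toReal) (measurableSet_singleton n)
  refine ⟨fun n => Kernel.piecewise (hs n) κ 0, fun n => ?_, ?_⟩
  · refine ⟨ENNReal.ofReal (n + 1), ENNReal.ofReal_lt_top, fun a => ?_⟩
    rw [Kernel.piecewise_apply']
    split_ifs with ha
    · rw [← ENNReal.ofReal_toReal (measure_ne_top (κ a) univ)]
      refine ENNReal.ofReal_le_ofReal ?_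
      have := Nat.lt_floor_add_one ((κ a).real univ)
      rw [show ⌊(κ a).real univ⌋₊ = n from ha] at this
      exact this.le
    · simp
  · ext a t ht
    rw [Kernel.sum_apply' _ _ ht, tsum_eq_single ⌊(κ a).real univ⌋₊]
    · rw [Kernel.piecewise_apply', if_pos (show a ∈ s _ from rfl)]
    · intro n hn
      rw [Kernel.piecewise_apply', if_neg fun h => hn h.symm]
      simp

end Cutoff

section Mass

open ProbabilityTheory Metric Filter

set_option maxSynthPendingDepth 3
set_option linter.unusedSectionVars false

variable {E : Type*} [NormedAddCommGroup E] [InnerProductSpace ℝ E] [FiniteDimensional ℝ E]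
  [MeasureSpace E] [BorelSpace E] [(volume : Measure E).IsAddHaarMeasure]

variable {τ : Measure ℝ} {κ : Kernel ℝ E} {b : ℝ → E → E} {T : ℝ}

/-- A curve of finite measures transported by the field `b`, bounded by one, with respect to the
clock `τ`, tested only against compactly supported functions. -/
structure IsLocalTransport (τ : Measure ℝ) (κ : Kernel ℝ E) (b : ℝ → E → E) (T : ℝ) : Prop where
  measurable : Measurable (Function.uncurry b)
  norm_le : ∀ r y, ‖b r y‖ ≤ 1
  bounded : ∀ u : E → ℝ, ContDiff ℝ (⊤ : ℕ∞) u → HasCompactSupport u →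
    ∃ C, ∀ t, |∫ y, u y ∂κ t| ≤ C
  clamped : ∀ t, ∃ s ∈ Icc 0 T, κ t = κ s
  integral_sub : ∀ u : E → ℝ, ContDiff ℝ (⊤ : ℕ∞) u → HasCompactSupport u →
    ∀ s t, 0 ≤ s → s ≤ t → t ≤ T →
    ∫ y, u y ∂κ t - ∫ y, u y ∂κ s = ∫ r in Ioc s t, ∫ y, fderiv ℝ u y (b r y) ∂κ r ∂τ

lemma smoothTransition_sub_le {C : ℝ} (hC : ∀ z, |deriv transitionDeriv z| ≤ C) {δ : ℝ}
    (hδ : 0 ≤ δ) (z : ℝ) :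
    Real.smoothTransition (z - δ) ≤
      Real.smoothTransition z - δ * transitionDeriv (z - δ) + C * δ ^ 2 := by
  rcases hδ.eq_or_lt with rfl | hδ
  · simp
  have hd : Differentiable ℝ Real.smoothTransition :=
    Real.smoothTransition.contDiff.differentiable (n := (⊤ : ℕ∞)) (by simp)
  obtain ⟨ξ, hξ, hξe⟩ := exists_deriv_eq_slope Real.smoothTransition
    (show z - δ < z by linarith) hd.continuous.continuousOn hd.differentiableOn
  have h1 := Convex.norm_image_sub_le_of_norm_deriv_le (f := transitionDeriv) (s := univ) (C := C)
    (x := z - δ) (y := ξ)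
    (fun z _ => contDiff_transitionDeriv.differentiable (by simp) z) (fun z _ => hC z)
    convex_univ (mem_univ _) (mem_univ _)
  have hC0 : 0 ≤ C := (abs_nonneg _).trans (hC 0)
  rw [Real.norm_eq_abs, Real.norm_eq_abs, abs_of_pos (show 0 < ξ - (z - δ) by linarith [hξ.1])] at h1
  have h2 : C * (ξ - (z - δ)) ≤ C * δ := by gcongr; linarith [hξ.2]
  have h3 := (abs_le.1 (h1.trans h2)).1
  change transitionDeriv ξ = _ at hξe
  rw [show z - (z - δ) = δ by ring, eq_div_iff hδ.ne'] at hξe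
  nlinarith

namespace IsLocalTransport

lemma exists_ball_bound [∀ t, IsFiniteMeasure (κ t)] (h : IsLocalTransport τ κ b T) (R : ℝ) :
    ∃ M, 0 ≤ M ∧ ∀ t, (κ t).real {x | smoothNorm x ≤ R} ≤ M := by
  obtain ⟨C, hC⟩ := h.bounded (cutoff (R + 1)) (contDiff_cutoff _) (hasCompactSupport_cutoff _)
  refine ⟨C, (abs_nonneg _).trans (hC 0), fun t => ?_⟩
  refine le_trans ?_ ((le_abs_self _).trans (hC t))
  have hm : MeasurableSet {x : E | smoothNorm x ≤ R} :=
    (isClosed_le contDiff_smoothNorm.continuous continuous_const).measurableSet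
  rw [← integral_indicator_one hm]
  refine integral_mono ((integrable_const (1 : ℝ)).indicator hm)
    ((contDiff_cutoff _).continuous.integrable_of_hasCompactSupport (hasCompactSupport_cutoff _))
    fun x => ?_
  by_cases hx : smoothNorm x ≤ R
  · rw [indicator_of_mem (show x ∈ {x : E | smoothNorm x ≤ R} from hx), cutoff_eq_one (by linarith)]; simp
  · rw [indicator_of_notMem (show x ∉ {x : E | smoothNorm x ≤ R} from hx)]; exact cutoff_nonneg _ _

lemma abs_integral_sub_le_of_bound [∀ t, IsFiniteMeasure (κ t)] [IsFiniteMeasure τ]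
    (h : IsLocalTransport τ κ b T) {u : E → ℝ} (hu : ContDiff ℝ (⊤ : ℕ∞) u)
    (huc : HasCompactSupport u) {R C M : ℝ} (hC : 0 ≤ C)
    (hM : ∀ t, (κ t).real {x | smoothNorm x ≤ R} ≤ M)
    (hR : ∀ x v, |fderiv ℝ u x v| ≤ C * ‖v‖) (hR0 : ∀ x v, R < smoothNorm x → fderiv ℝ u x v = 0)
    {s t : ℝ} (hs : 0 ≤ s) (hst : s ≤ t) (ht : t ≤ T) :
    |∫ y, u y ∂κ t - ∫ y, u y ∂κ s| ≤ C * M * τ.real (Ioc s t) := by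
  have hm : MeasurableSet {x : E | smoothNorm x ≤ R} :=
    (isClosed_le contDiff_smoothNorm.continuous continuous_const).measurableSet
  rw [h.integral_sub u hu huc s t hs hst ht, ← Real.norm_eq_abs]
  refine norm_setIntegral_le_of_norm_le_const (measure_lt_top τ _) fun r _ => ?_
  have e : ∫ y, fderiv ℝ u y (b r y) ∂κ r =
      ∫ y in {x | smoothNorm x ≤ R}, fderiv ℝ u y (b r y) ∂κ r := by
    rw [setIntegral_eq_integral_of_forall_compl_eq_zero]
    intro x hx
    exact hR0 _ _ (not_le.1 hx)
  rw [e]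
  refine (norm_setIntegral_le_of_norm_le_const (C := C) (measure_lt_top _ _) fun y _ => ?_).trans ?_
  · refine (hR y _).trans ?_
    have := h.norm_le r y
    exact mul_le_of_le_one_right hC this
  · gcongr
    exact hM r

/-- The mass inside a shrinking ball grows at most quadratically in the time step. -/
lemma integral_cutoff_le [∀ t, IsFiniteMeasure (κ t)] [IsFiniteMeasure τ]
    (h : IsLocalTransport τ κ b T) {R C M : ℝ} (hC : ∀ z, |deriv transitionDeriv z| ≤ C)
    (hM : ∀ t, (κ t).real {x | smoothNorm x ≤ R} ≤ M) {R' : ℝ} (hR' : R' ≤ R) {s t : ℝ}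
    (hs : 0 ≤ s) (hst : s ≤ t) (ht : t ≤ T) :
    ∫ y, cutoff (R' - τ.real (Ioc s t)) y ∂κ t ≤
      ∫ y, cutoff R' y ∂κ s + 2 * (C * M) * τ.real (Ioc s t) ^ 2 := by
  have hsf := isSFiniteKernel_of_isFiniteMeasure κ
  set δ := τ.real (Ioc s t) with hδ
  have hδ0 : 0 ≤ δ := measureReal_nonneg
  have hC0 : 0 ≤ C := (abs_nonneg _).trans (hC 0)
  have hM0 : 0 ≤ M := measureReal_nonneg.trans (hM 0)
  have hm : MeasurableSet {x : E | smoothNorm x ≤ R} :=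
    (isClosed_le contDiff_smoothNorm.continuous continuous_const).measurableSet
  set w : E → ℝ := radial transitionDeriv (R' - δ) with hw
  have hwd : ContDiff ℝ (⊤ : ℕ∞) w := contDiff_radial contDiff_transitionDeriv _
  have hwc : HasCompactSupport w := hasCompactSupport_radial transitionDeriv_of_nonpos _
  have hw0 : ∀ x, 0 ≤ w x := fun x => transitionDeriv_nonneg _
  have hwi : ∀ t, Integrable w (κ t) := fun t => hwd.continuous.integrable_of_hasCompactSupport hwc
  have hci : ∀ R t, Integrable (cutoff R) (κ t) := fun R t =>
    (contDiff_cutoff R).continuous.integrable_of_hasCompactSupport (hasCompactSupport_cutoff R)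
  have hdw0 : ∀ z < 0, deriv transitionDeriv z = 0 := fun z hz => by
    have : transitionDeriv =ᶠ[𝓝 z] fun _ => 0 := by
      filter_upwards [Iio_mem_nhds hz] with y hy
      exact transitionDeriv_of_nonpos y hy.le
    rw [this.deriv_eq]; simp
  have hspace : ∫ y, cutoff (R' - δ) y ∂κ s ≤
      ∫ y, cutoff R' y ∂κ s - δ * ∫ y, w y ∂κ s + C * M * δ ^ 2 := by
    have hind : Integrable ({x : E | smoothNorm x ≤ R}.indicator fun _ => C * δ ^ 2) (κ s) :=
      (integrable_const _).indicator hm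
    calc ∫ y, cutoff (R' - δ) y ∂κ s ≤ ∫ y, (cutoff R' y - δ * w y +
          {x : E | smoothNorm x ≤ R}.indicator (fun _ => C * δ ^ 2) y) ∂κ s := by
          refine integral_mono (hci _ _) (((hci _ _).sub ((hwi _).const_mul _)).add hind)
            fun x => ?_
          by_cases hx : smoothNorm x ≤ R
          · dsimp only
            rw [indicator_of_mem (show x ∈ {x : E | smoothNorm x ≤ R} from hx)]
            have := smoothTransition_sub_le hC hδ0 (R' - smoothNorm x)
            simp only [cutoff, radial, hw]
            rwa [show R' - δ - smoothNorm x = R' - smoothNorm x - δ by ring]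
          · dsimp only
            rw [indicator_of_notMem (show x ∉ {x : E | smoothNorm x ≤ R} from hx)]
            rw [not_le] at hx
            simp only [cutoff, radial, hw]
            rw [Real.smoothTransition.zero_of_nonpos (by linarith),
              Real.smoothTransition.zero_of_nonpos (by linarith),
              transitionDeriv_of_nonpos _ (by linarith)]
            simp
      _ = ∫ y, cutoff R' y ∂κ s - δ * ∫ y, w y ∂κ s +
          (κ s).real {x : E | smoothNorm x ≤ R} * (C * δ ^ 2) := by
          have hd : Integrable (fun y => cutoff R' y - δ * w y) (κ s) :=
            (hci _ _).sub ((hwi _).const_mul _)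
          rw [integral_add hd hind,
            MeasureTheory.integral_sub (hci _ _) ((hwi _).const_mul _), integral_const_mul,
            integral_indicator_const _ hm, smul_eq_mul]
      _ ≤ _ := by
          have := mul_le_mul_of_nonneg_right (hM s) (show 0 ≤ C * δ ^ 2 by positivity)
          linarith
  have hwr : ∀ r ∈ Ioc s t, ∫ y, w y ∂κ r ≤ ∫ y, w y ∂κ s + C * M * δ := fun r hr => by
    have h1 := h.abs_integral_sub_le_of_bound hwd hwc hC0 hM
      (fun x v => (abs_fderiv_radial_le contDiff_transitionDeriv _ x v).trans (by
        gcongr; exact hC _))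
      (fun x v hx => by
        rw [hw, fderiv_radial contDiff_transitionDeriv, hdw0 _ (by linarith)]; simp)
      hs hr.1.le (hr.2.trans ht)
    have h2 : τ.real (Ioc s r) ≤ δ := measureReal_mono (Ioc_subset_Ioc_right hr.2)
    have h3 : C * M * τ.real (Ioc s r) ≤ C * M * δ := by gcongr
    linarith [le_abs_self (∫ y, w y ∂κ r - ∫ y, w y ∂κ s)]
  have htime : ∫ y, cutoff (R' - δ) y ∂κ t - ∫ y, cutoff (R' - δ) y ∂κ s ≤
      (∫ y, w y ∂κ s + C * M * δ) * δ := by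
    rw [h.integral_sub _ (contDiff_cutoff _) (hasCompactSupport_cutoff _) s t hs hst ht]
    refine (le_abs_self _).trans ?_
    rw [← Real.norm_eq_abs]
    refine norm_setIntegral_le_of_norm_le_const (measure_lt_top τ _) fun r hr => ?_
    refine le_trans ?_ (hwr r hr)
    refine norm_integral_le_of_norm_le (hwi r) (.of_forall fun y => ?_)
    refine (abs_fderiv_cutoff_le _ _ _).trans ?_
    exact mul_le_of_le_one_right (transitionDeriv_nonneg _) (h.norm_le r y)
  nlinarith

/-- The total mass never exceeds the initial one. -/
lemma measureReal_univ_le [∀ t, IsFiniteMeasure (κ t)] [IsFiniteMeasure τ]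
    (h : IsLocalTransport τ κ b T) (hτ : IsContinuousClock τ) (t : ℝ) :
    (κ t).real univ ≤ (κ 0).real univ := by
  obtain ⟨t', ht, he⟩ := h.clamped t
  rw [he]
  clear he t
  obtain ⟨C, hC0, -, hC⟩ := exists_transitionDeriv_bound
  have hci : ∀ R t, Integrable (cutoff R) (κ t) := fun R t =>
    (contDiff_cutoff R).continuous.integrable_of_hasCompactSupport (hasCompactSupport_cutoff R)
  have key : ∀ R : ℝ, ∫ y, cutoff (R - τ.real univ) y ∂κ t' ≤ (κ 0).real univ := by
    intro R
    obtain ⟨M, hM0, hM⟩ := h.exists_ball_bound R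
    refine le_of_forall_pos_le_add fun ε hε => ?_
    set Q := 2 * (C * M) with hQ
    have hQ0 : 0 ≤ Q := by positivity
    obtain ⟨e, he, heε⟩ : ∃ e > 0, Q * e * τ.real univ ≤ ε := by
      refine ⟨ε / (Q * τ.real univ + 1), by positivity, ?_⟩
      have : 0 ≤ Q * τ.real univ := by positivity
      rw [mul_comm Q, mul_assoc, div_mul_eq_mul_div, div_le_iff₀ (by positivity)]
      nlinarith
    obtain ⟨ρ, hρ, hclock⟩ := hτ e he
    obtain ⟨n, hn0, hn⟩ := ((eventually_gt_atTop 0).and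
      ((tendsto_const_div_atTop_nhds_zero_nat t').eventually_le_const hρ)).exists
    set m := t' / n with hm
    have hm0 : 0 ≤ m := div_nonneg ht.1 (Nat.cast_nonneg _)
    have hnm : n * m = t' := by rw [hm]; field_simp
    have hstep : ∀ i, gridStep τ m i ≤ e := fun i => hclock _ _ (by push_cast; linarith)
    have hind : ∀ i ≤ n, ∫ y, cutoff (R - ∑ j ∈ Finset.range i, gridStep τ m j) y ∂κ (i * m) ≤
        (κ 0).real univ + Q * e * ∑ j ∈ Finset.range i, gridStep τ m j := by
      intro i
      induction i with
      | zero =>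
        intro _
        simp only [Finset.range_zero, Finset.sum_empty, Nat.cast_zero, zero_mul, mul_zero, add_zero]
        calc _ ≤ ∫ _, (1 : ℝ) ∂κ 0 :=
              integral_mono (hci _ _) (integrable_const _) fun x => cutoff_le_one _ x
          _ = _ := by simp
      | succ i ih =>
        intro hi
        have h1 := ih (by omega)
        have hg0 : ∀ j, 0 ≤ gridStep τ m j := fun j => measureReal_nonneg
        have h2 := h.integral_cutoff_le hC hM
          (R' := R - ∑ j ∈ Finset.range i, gridStep τ m j)
          (sub_le_self _ (Finset.sum_nonneg fun j _ => hg0 j)) (s := i * m)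
          (t := (i + 1 : ℕ) * m) (by positivity) (by push_cast; linarith) (by
            refine le_trans ?_ (hnm.trans_le ht.2)
            gcongr)
        change ∫ y, cutoff (_ - gridStep τ m i) y ∂κ _ ≤ _ + _ * gridStep τ m i ^ 2 at h2
        rw [Finset.sum_range_succ, ← sub_sub, mul_add]
        have h3 : Q * gridStep τ m i ^ 2 ≤ Q * e * gridStep τ m i := by
          rw [sq, ← mul_assoc]
          have := hg0 i
          gcongr
          exact hstep i
        linarith
    have hfin := hind n le_rfl
    rw [hnm] at hfin
    have hs := sum_gridStep_le (τ := τ) hm0 n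
    calc _ ≤ ∫ y, cutoff (R - ∑ j ∈ Finset.range n, gridStep τ m j) y ∂κ t' :=
          integral_mono (hci _ _) (hci _ _) fun x =>
            monotone_smoothTransition (by linarith)
      _ ≤ _ := hfin
      _ ≤ (κ 0).real univ + Q * e * τ.real univ := by gcongr
      _ ≤ _ := by linarith
  have hlim : Tendsto (fun n : ℕ => ∫ y, cutoff (n : ℝ) y ∂κ t') atTop (𝓝 (∫ _, 1 ∂κ t')) :=
    tendsto_integral_of_dominated_convergence (fun _ => 1)
      (fun n => (hci _ _).aestronglyMeasurable) (integrable_const _)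
      (fun n => .of_forall fun x => by
        rw [Real.norm_of_nonneg (cutoff_nonneg _ _)]; exact cutoff_le_one _ _)
      (.of_forall tendsto_cutoff)
  have := le_of_tendsto' hlim fun n => by
    have := key (n + τ.real univ)
    rwa [add_sub_cancel_right] at this
  simpa using this

/-- A local transport with a probability measure at some time is a transport of probability
measures. -/
lemma isTransport [∀ t, IsFiniteMeasure (κ t)] [IsFiniteMeasure τ]
    (h : IsLocalTransport τ κ b T) (hτ : IsContinuousClock τ) {S : ℝ} (hS : S ∈ Icc 0 T)
    (hprob : IsProbabilityMeasure (κ S)) : IsMarkovKernel κ ∧ IsTransport τ κ b T := by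
  have hfin : IsFiniteKernel κ := ⟨κ 0 univ, measure_lt_top _ _, fun t => by
    have := h.measureReal_univ_le hτ t
    rwa [measureReal_def, measureReal_def,
      ENNReal.toReal_le_toReal (measure_ne_top _ _) (measure_ne_top _ _)] at this⟩
  obtain ⟨C', hC'0, hC', -⟩ := exists_transitionDeriv_bound
  have hInt : ∀ u : E → ℝ, ContDiff ℝ (⊤ : ℕ∞) u → (∃ C, ∀ x, |u x| ≤ C) →
      (∃ C, ∀ x, ‖fderiv ℝ u x‖ ≤ C) → ∀ s t, 0 ≤ s → s ≤ t → t ≤ T →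
      ∫ y, u y ∂κ t - ∫ y, u y ∂κ s = ∫ r in Ioc s t, ∫ y, fderiv ℝ u y (b r y) ∂κ r ∂τ := by
    rintro u hu ⟨C, hC⟩ ⟨D, hD⟩ s t hs hst ht
    have hC0 : 0 ≤ C := (abs_nonneg _).trans (hC 0)
    have hD0 : 0 ≤ D := (norm_nonneg _).trans (hD 0)
    let v : ℕ → E → ℝ := fun n x => u x * cutoff (n : ℝ) x
    have hv : ∀ n, ContDiff ℝ (⊤ : ℕ∞) (v n) := fun n => hu.mul (contDiff_cutoff _)
    have hvc : ∀ n, HasCompactSupport (v n) := fun n => (hasCompactSupport_cutoff _).mul_left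
    have hleft : ∀ t, Tendsto (fun n => ∫ y, v n y ∂κ t) atTop (𝓝 (∫ y, u y ∂κ t)) := fun t =>
      tendsto_integral_of_dominated_convergence (fun _ => C)
        (fun n => (hv n).continuous.aestronglyMeasurable) (integrable_const _)
        (fun n => .of_forall fun x => by
          rw [Real.norm_eq_abs, abs_mul, abs_of_nonneg (cutoff_nonneg _ _)]
          exact (mul_le_of_le_one_right (abs_nonneg _) (cutoff_le_one _ _)).trans (hC x))
        (.of_forall fun x => by simpa [v] using (tendsto_cutoff x).const_mul (u x))
    have hderiv : ∀ n x w, ‖w‖ ≤ 1 → |fderiv ℝ (v n) x w| ≤ C * C' + D := fun n x w hw => by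
      have e : fderiv ℝ (v n) x w = u x * fderiv ℝ (cutoff (n : ℝ)) x w +
          cutoff (n : ℝ) x * fderiv ℝ u x w := by
        have := fderiv_mul (hu.differentiable (by simp) x)
          ((contDiff_cutoff (E := E) (n : ℝ)).differentiable (by simp) x)
        change fderiv ℝ (u * cutoff (n : ℝ)) x w = _
        rw [this]
        simp
      rw [e]
      refine (abs_add_le _ _).trans (add_le_add ?_ ?_)
      · rw [abs_mul]
        refine mul_le_mul (hC x) ?_ (abs_nonneg _) hC0
        refine (abs_fderiv_cutoff_le _ _ _).trans ?_
        refine (mul_le_of_le_one_right (transitionDeriv_nonneg _) hw).trans ?_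
        exact (le_abs_self _).trans (hC' _)
      · rw [abs_mul, abs_of_nonneg (cutoff_nonneg _ _)]
        refine (mul_le_of_le_one_left (abs_nonneg _) (cutoff_le_one _ _)).trans ?_
        refine ((fderiv ℝ u x).le_opNorm w).trans ?_
        exact (mul_le_of_le_one_right (norm_nonneg _) hw).trans (hD x)
    have hptw : ∀ x w, Tendsto (fun n => fderiv ℝ (v n) x w) atTop (𝓝 (fderiv ℝ u x w)) :=
      fun x w => by
      obtain ⟨N, hN⟩ := exists_nat_gt (smoothNorm x + 1)
      refine tendsto_atTop_of_eventually_const (i₀ := N) fun n hn => ?_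
      have hn' : smoothNorm x + 1 < n := hN.trans_le (by exact_mod_cast hn)
      have : v n =ᶠ[𝓝 x] u := by
        have hopen : IsOpen {y : E | smoothNorm y + 1 < n} :=
          isOpen_lt (contDiff_smoothNorm.continuous.add continuous_const) continuous_const
        filter_upwards [hopen.mem_nhds hn'] with y hy
        simp only [v]
        rw [cutoff_eq_one (le_of_lt hy), mul_one]
      rw [this.fderiv_eq]
    have hmeas : ∀ u : E → ℝ, ContDiff ℝ (⊤ : ℕ∞) u →
        Measurable fun q : ℝ × E => fderiv ℝ u q.2 (b q.1 q.2) := fun u hu =>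
      Measurable.fderiv_apply hu measurable_snd h.measurable
    have hcomp : ∀ u : E → ℝ, ContDiff ℝ (⊤ : ℕ∞) u → (∃ D, ∀ x w, ‖w‖ ≤ 1 → |fderiv ℝ u x w| ≤ D) →
        ∫ r in Ioc s t, ∫ y, fderiv ℝ u y (b r y) ∂κ r ∂τ =
          ∫ q, fderiv ℝ u q.2 (b q.1 q.2) ∂(τ.restrict (Ioc s t) ⊗ₘ κ) := by
      rintro u hu ⟨D, hD⟩
      refine (Measure.integral_compProd (f := fun q : ℝ × E => fderiv ℝ u q.2 (b q.1 q.2)) ?_).symm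
      exact .of_bound (hmeas u hu).aestronglyMeasurable D
        (.of_forall fun q => hD _ _ (h.norm_le _ _))
    have hright : Tendsto (fun n => ∫ r in Ioc s t, ∫ y, fderiv ℝ (v n) y (b r y) ∂κ r ∂τ) atTop
        (𝓝 (∫ r in Ioc s t, ∫ y, fderiv ℝ u y (b r y) ∂κ r ∂τ)) := by
      rw [hcomp u hu ⟨D, fun x w hw => ((fderiv ℝ u x).le_opNorm w).trans
        ((mul_le_of_le_one_right (norm_nonneg _) hw).trans (hD x))⟩]
      simp only [fun n => hcomp (v n) (hv n) ⟨_, hderiv n⟩]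
      exact tendsto_integral_of_dominated_convergence (fun _ => C * C' + D)
        (fun n => (hmeas _ (hv n)).aestronglyMeasurable) (integrable_const _)
        (fun n => .of_forall fun q => hderiv n _ _ (h.norm_le _ _))
        (.of_forall fun q => hptw _ _)
    refine tendsto_nhds_unique ((hleft t).sub (hleft s)) ?_
    simpa only [fun n => h.integral_sub (v n) (hv n) (hvc n) s t hs hst ht] using hright
  have hone : ∀ s t, 0 ≤ s → s ≤ t → t ≤ T → (κ t).real univ = (κ s).real univ := by
    intro s t hs hst ht
    have := hInt (fun _ => 1) contDiff_const ⟨1, fun x => by simp⟩ ⟨0, fun x => by simp⟩ s t hs hst ht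
    simpa [sub_eq_zero] using this
  have hmarkov : IsMarkovKernel κ := ⟨fun t => by
    obtain ⟨t', ht, he⟩ := h.clamped t
    rw [he]
    have h1 : (κ t').real univ = 1 := by
      rw [hone 0 t' le_rfl ht.1 ht.2, ← hone 0 S le_rfl hS.1 hS.2]
      simp
    exact ⟨by rwa [measureReal_def, ENNReal.toReal_eq_one_iff] at h1⟩⟩
  exact ⟨hmarkov, h.measurable, h.norm_le, hInt⟩

end IsLocalTransport

end Mass

section Clock

open ProbabilityTheory Metric Filter

set_option maxSynthPendingDepth 3
set_option linter.unusedSectionVars false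

variable {E : Type*} [NormedAddCommGroup E] [InnerProductSpace ℝ E] [FiniteDimensional ℝ E]
  [MeasureSpace E] [BorelSpace E] [(volume : Measure E).IsAddHaarMeasure]

variable {κ : Kernel ℝ E} {V : ℝ → E → E} {m : ℝ → ℝ≥0} {T : ℝ}

lemma continuousOn_of_sub_eq_integral {G f : ℝ → ℝ} (hT : 0 ≤ T)
    (h : ∀ s ∈ Icc 0 T, ∀ t ∈ Icc 0 T, G t - G s = ∫ σ in s..t, f σ) :
    ContinuousOn G (Icc 0 T) := by
  have h0 : (0 : ℝ) ∈ Icc 0 T := left_mem_Icc.2 hT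
  have hT' : T ∈ Icc 0 T := right_mem_Icc.2 hT
  by_cases hf : IntervalIntegrable f volume 0 T
  · have := intervalIntegral.continuousOn_primitive_interval' hf left_mem_uIcc
    rw [uIcc_of_le hT] at this
    refine (this.const_add (G 0)).congr fun t ht => ?_
    have := h 0 h0 t ht
    dsimp only
    linarith
  · refine (continuousOn_const (c := G 0)).congr fun t ht => ?_
    have hTeq := h 0 h0 T hT'
    rw [intervalIntegral.integral_undef hf] at hTeq
    by_cases h1 : IntervalIntegrable f volume 0 t
    · have h2 : ¬ IntervalIntegrable f volume t T := fun h2 => hf (h1.trans h2)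
      have := h t ht T hT'
      rw [intervalIntegral.integral_undef h2] at this
      linarith
    · have := h 0 h0 t ht
      rw [intervalIntegral.integral_undef h1] at this
      linarith

/-- The Lebesgue measure on `[0, T]` with density `m`. -/
def clock (m : ℝ → ℝ≥0) (T : ℝ) : Measure ℝ :=
  (volume.restrict (Icc 0 T)).withDensity fun t => (m t : ℝ≥0∞)

/-- The field `V` in the time scale given by `m`, truncated where it exceeds `m`. -/
def slowField (V : ℝ → E → E) (m : ℝ → ℝ≥0) (r : ℝ) (y : E) : E :=
  if ‖V r y‖ ≤ m r then (m r)⁻¹ • V r y else 0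

lemma norm_slowField_le (hm1 : ∀ r, 1 ≤ m r) (r : ℝ) (y : E) : ‖slowField V m r y‖ ≤ 1 := by
  have h0 : (0 : ℝ) < m r := by exact_mod_cast one_pos.trans_le (hm1 r)
  unfold slowField
  split_ifs with h
  · rw [NNReal.smul_def, norm_smul, NNReal.coe_inv, norm_inv, Real.norm_eq_abs, abs_of_pos h0,
      inv_mul_le_iff₀ h0]
    simpa using h
  · simp

lemma smul_slowField (hm1 : ∀ r, 1 ≤ m r) {r : ℝ} {y : E} (h : ‖V r y‖ ≤ m r) :
    m r • slowField V m r y = V r y := by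
  rw [slowField, if_pos h, smul_smul, mul_inv_cancel₀ (one_pos.trans_le (hm1 r)).ne', one_smul]

lemma measurable_slowField (hV : Measurable (Function.uncurry V)) (hm : Measurable m) :
    Measurable (Function.uncurry (slowField V m)) := by
  have hm' : Measurable fun p : ℝ × E => m p.1 := hm.comp measurable_fst
  have : Measurable fun p : ℝ × E => ((m p.1)⁻¹ : ℝ≥0) • Function.uncurry V p := hm'.inv.smul hV
  exact Measurable.ite (measurableSet_le hV.norm hm'.coe_nnreal_real) this measurable_const

lemma isFiniteMeasure_clock (hmT : ∫⁻ t in Icc 0 T, m t < ⊤) : IsFiniteMeasure (clock m T) :=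
  isFiniteMeasure_withDensity hmT.ne

lemma isContinuousClock_clock (hmT : ∫⁻ t in Icc 0 T, m t < ⊤) :
    IsContinuousClock (clock m T) := by
  intro ε hε
  obtain ⟨δ, hδ, h⟩ := exists_pos_setLIntegral_lt_of_measure_lt hmT.ne
    (ENNReal.ofReal_pos.2 hε).ne'
  obtain ⟨ρ, hρ0, hρ⟩ := ENNReal.lt_iff_exists_nnreal_btwn.1 hδ
  refine ⟨ρ, by exact_mod_cast hρ0, fun s t hst => ?_⟩
  refine ENNReal.toReal_le_of_le_ofReal hε.le ?_
  rw [clock, withDensity_apply _ measurableSet_Ioc]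
  refine (h _ (lt_of_le_of_lt ?_ hρ)).le
  calc volume.restrict (Icc 0 T) (Ioc s t) ≤ volume (Ioc s t) := Measure.restrict_apply_le _ _
    _ = ENNReal.ofReal (t - s) := Real.volume_Ioc
    _ ≤ ρ := by
      rw [← ENNReal.ofReal_coe_nnreal]; exact ENNReal.ofReal_le_ofReal hst

lemma ae_restrict_of_ae_clock (hm : Measurable m) (hm1 : ∀ r, 1 ≤ m r) {p : ℝ → Prop}
    {s : Set ℝ} (hs : MeasurableSet s) (hsT : s ⊆ Icc 0 T)
    (h : ∀ᵐ r ∂(clock m T).restrict s, p r) : ∀ᵐ r ∂volume.restrict s, p r := by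
  rw [clock, restrict_withDensity hs, Measure.restrict_restrict hs, inter_eq_left.2 hsT,
    ae_withDensity_iff hm.coe_nnreal_ennreal] at h
  filter_upwards [h] with r hr
  exact hr (by simpa using (one_pos.trans_le (hm1 r)).ne')

lemma setIntegral_clock {F : Type*} [NormedAddCommGroup F] [NormedSpace ℝ F] (hm : Measurable m)
    (f : ℝ → F) {s t : ℝ} (hs : 0 ≤ s) (hst : s ≤ t) (ht : t ≤ T) :
    ∫ r in Ioc s t, f r ∂clock m T = ∫ r in s..t, m r • f r := by
  have hsub : Ioc s t ⊆ Icc 0 T := fun r hr => ⟨hs.trans hr.1.le, hr.2.trans ht⟩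
  rw [clock, setIntegral_withDensity_eq_setIntegral_smul hm _ measurableSet_Ioc,
    Measure.restrict_restrict measurableSet_Ioc, inter_eq_left.2 hsub,
    intervalIntegral.integral_of_le hst]

lemma exists_clock_density [IsSFiniteKernel κ] (hV : Measurable (Function.uncurry V))
    (hbound : (∫⁻ t in Icc 0 T, ⨆ x, (‖V t x‖₊ : ℝ≥0∞)) < ⊤) :
    ∃ m : ℝ → ℝ≥0, Measurable m ∧ (∀ r, 1 ≤ m r) ∧ ∫⁻ t in Icc 0 T, m t < ⊤ ∧
      ∀ᵐ t ∂volume.restrict (Icc 0 T), ∀ᵐ x ∂κ t, ‖V t x‖ ≤ m t := by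
  set a : ℝ → ℝ≥0∞ := fun t => essSup (fun x => (‖V t x‖₊ : ℝ≥0∞)) (κ t) with ha
  have hVn : Measurable fun p : ℝ × E => (‖V p.1 p.2‖₊ : ℝ≥0∞) := hV.nnnorm.coe_nnreal_ennreal
  have ham : Measurable a := by
    refine measurable_of_Iic fun c => ?_
    have hset : MeasurableSet {p : ℝ × E | c < (‖V p.1 p.2‖₊ : ℝ≥0∞)} :=
      measurableSet_lt measurable_const hVn
    convert! Kernel.measurable_kernel_prodMk_left (κ := κ) hset (measurableSet_singleton 0) using 1
    ext t
    simp only [mem_preimage, mem_Iic, mem_singleton_iff]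
    have heq : Prod.mk t ⁻¹' {p : ℝ × E | c < (‖V p.1 p.2‖₊ : ℝ≥0∞)} =
        {x | ¬ (‖V t x‖₊ : ℝ≥0∞) ≤ c} := by ext x; simp
    rw [heq]
    constructor
    · intro h
      exact ae_iff.1 ((ENNReal.ae_le_essSup _).mono fun x hx => hx.trans h)
    · intro h
      exact essSup_le_of_ae_le _ (ae_iff.2 h)
  have hale : ∀ t, a t ≤ ⨆ x, (‖V t x‖₊ : ℝ≥0∞) := fun t =>
    essSup_le_of_ae_le _ (Eventually.of_forall fun x => le_iSup (fun x => (‖V t x‖₊ : ℝ≥0∞)) x)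
  have haT : ∫⁻ t in Icc 0 T, a t < ⊤ := (lintegral_mono hale).trans_lt hbound
  refine ⟨fun t => (a t).toNNReal + 1, ham.ennreal_toNNReal.add_const 1,
    fun r => le_add_self, ?_, ?_⟩
  · calc ∫⁻ t in Icc 0 T, (((a t).toNNReal + 1 : ℝ≥0) : ℝ≥0∞) ≤ ∫⁻ t in Icc 0 T, (a t + 1) := by
          refine lintegral_mono fun t => ?_
          push_cast
          gcongr
          exact ENNReal.coe_toNNReal_le_self
      _ < ⊤ := by
          rw [lintegral_add_right _ measurable_const]
          simp [haT]
  · filter_upwards [ae_lt_top ham haT.ne] with t ht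
    filter_upwards [ENNReal.ae_le_essSup fun x => (‖V t x‖₊ : ℝ≥0∞)] with x hx
    have h1 : ‖V t x‖₊ ≤ (a t).toNNReal := by
      rw [← ENNReal.coe_le_coe, ENNReal.coe_toNNReal ht.ne]; exact hx
    have h2 : ‖V t x‖₊ ≤ (a t).toNNReal + 1 := h1.trans (le_add_of_nonneg_right zero_le_one)
    exact_mod_cast h2

lemma sub_eq_integral_of_slowField (hm : Measurable m) (hm1 : ∀ r, 1 ≤ m r) {γ : ℝ → E}
    (hN : ∀ᵐ r ∂(clock m T).restrict (Ioc 0 T), ‖V r (γ r)‖ ≤ m r)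
    (hγ : ∀ t ∈ Icc 0 T, γ t - γ 0 = ∫ r in Ioc 0 t, slowField V m r (γ r) ∂clock m T) :
    ∀ t ∈ Icc 0 T, γ t - γ 0 = ∫ r in (0 : ℝ)..t, V r (γ r) := by
  intro t ht
  rw [hγ t ht, setIntegral_clock hm _ le_rfl ht.1 ht.2]
  have h := ae_restrict_of_ae_clock hm hm1 measurableSet_Ioc Ioc_subset_Icc_self hN
  rw [ae_restrict_iff' measurableSet_Ioc] at h
  refine intervalIntegral.integral_congr_ae ?_
  filter_upwards [h] with r hr hrt
  rw [uIoc_of_le ht.1] at hrt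
  exact smul_slowField hm1 (hr ⟨hrt.1, hrt.2.trans ht.2⟩)

lemma isLocalTransport_slowField (hV : Measurable (Function.uncurry V)) (hm : Measurable m)
    (hm1 : ∀ r, 1 ≤ m r)
    (hVm : ∀ᵐ t ∂volume.restrict (Icc 0 T), ∀ᵐ x ∂κ t, ‖V t x‖ ≤ m t)
    (hclamp : ∀ t, ∃ s ∈ Icc 0 T, κ t = κ s) (hT : 0 ≤ T)
    (h : ∀ u : E → ℝ, ContDiff ℝ (⊤ : ℕ∞) u → HasCompactSupport u →
      ∀ s ∈ Icc 0 T, ∀ t ∈ Icc 0 T,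
        ∫ x, u x ∂κ t - ∫ x, u x ∂κ s = ∫ σ in s..t, ∫ x, fderiv ℝ u x (V σ x) ∂κ σ) :
    IsLocalTransport (clock m T) κ (slowField V m) T where
  measurable := measurable_slowField hV hm
  norm_le := norm_slowField_le hm1
  bounded u hu huc := by
    have hc := continuousOn_of_sub_eq_integral hT (h u hu huc)
    obtain ⟨C, hC⟩ := isCompact_Icc.exists_bound_of_continuousOn hc
    refine ⟨C, fun t => ?_⟩
    obtain ⟨s, hs, hst⟩ := hclamp t
    rw [hst]
    exact hC s hs
  clamped := hclamp
  integral_sub u hu huc s t hs hst ht := by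
    rw [h u hu huc s ⟨hs, hst.trans ht⟩ t ⟨hs.trans hst, ht⟩, setIntegral_clock hm _ hs hst ht]
    rw [ae_restrict_iff' measurableSet_Icc] at hVm
    refine intervalIntegral.integral_congr_ae ?_
    filter_upwards [hVm] with r hr hrt
    rw [uIoc_of_le hst] at hrt
    rw [NNReal.smul_def, ← integral_smul]
    refine integral_congr_ae ?_
    filter_upwards [hr ⟨hs.trans hrt.1.le, hrt.2.trans ht⟩] with y hy
    rw [← map_smul, ← NNReal.smul_def, smul_slowField hm1 hy]

lemma compProd_clock_eq_zero [IsSFiniteKernel κ]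
    (hV : Measurable (Function.uncurry V)) (hm : Measurable m)
    (hVm : ∀ᵐ t ∂volume.restrict (Icc 0 T), ∀ᵐ x ∂κ t, ‖V t x‖ ≤ m t) :
    MeasurableSet {p : ℝ × E | (m p.1 : ℝ) < ‖V p.1 p.2‖} ∧
    (clock m T ⊗ₘ κ) {p : ℝ × E | (m p.1 : ℝ) < ‖V p.1 p.2‖} = 0 := by
  have hm' : Measurable fun p : ℝ × E => m p.1 := hm.comp measurable_fst
  have h1 : MeasurableSet {p : ℝ × E | (m p.1 : ℝ) < ‖V p.1 p.2‖} :=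
    measurableSet_lt hm'.coe_nnreal_real hV.norm
  refine ⟨h1, ?_⟩
  rw [measure_eq_zero_iff_ae_notMem]
  refine Measure.ae_compProd_of_ae_ae h1.compl ?_
  filter_upwards [(withDensity_absolutelyContinuous _ _).ae_le hVm] with t ht
  filter_upwards [ht] with x hx
  simpa using hx

lemma exists_clamped_kernel (hT : 0 ≤ T) (ν : ℝ → Measure E) [∀ t, IsFiniteMeasure (ν t)]
    (h : ∀ u : E → ℝ, ContDiff ℝ (⊤ : ℕ∞) u → HasCompactSupport u →
      ∀ s ∈ Icc 0 T, ∀ t ∈ Icc 0 T,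
        ∫ x, u x ∂ν t - ∫ x, u x ∂ν s = ∫ σ in s..t, ∫ x, fderiv ℝ u x (V σ x) ∂ν σ) :
    ∃ κ : Kernel ℝ E, ∀ t, κ t = ν (projIcc 0 T hT t) := by
  refine ⟨⟨fun t => ν (projIcc 0 T hT t), measurable_of_measurable_integral fun u hu huc => ?_⟩,
    fun t => rfl⟩
  have hc := continuousOn_of_sub_eq_integral hT (h u hu huc)
  exact (hc.domRestrict.comp continuous_projIcc).measurable

end Clock

section Flow

open ProbabilityTheory Metric Filter

set_option maxSynthPendingDepth 3
set_option linter.unusedSectionVars false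

variable {E : Type*} [NormedAddCommGroup E] [InnerProductSpace ℝ E] [FiniteDimensional ℝ E]
  [MeasureSpace E] [BorelSpace E] [(volume : Measure E).IsAddHaarMeasure]

variable {V : ℝ → E → E} {T : ℝ}

lemma AbsolutelyContinuousOnInterval.of_dist_le {F : Type*} [PseudoMetricSpace F] {f : ℝ → F}
    {φ : ℝ → ℝ} {a b : ℝ} (hφ : AbsolutelyContinuousOnInterval φ a b)
    (h : ∀ x ∈ uIcc a b, ∀ y ∈ uIcc a b, dist (f x) (f y) ≤ dist (φ x) (φ y)) :
    AbsolutelyContinuousOnInterval f a b := by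
  refine squeeze_zero' (Eventually.of_forall fun I => Finset.sum_nonneg fun i _ => dist_nonneg)
    ?_ hφ
  refine Eventually.filter_mono inf_le_right (eventually_principal.2 fun I hI => ?_)
  exact Finset.sum_le_sum fun i hi => h _ (hI.1 i hi).1 _ (hI.1 i hi).2

/-- The chain rule for a smooth function along an absolutely continuous curve. -/
lemma sub_eq_integral_fderiv {γ v : ℝ → E} (hT : 0 ≤ T) (hv : IntervalIntegrable v volume 0 T)
    (hγ : ∀ t ∈ Icc 0 T, γ t - γ 0 = ∫ r in (0 : ℝ)..t, v r) {u : E → ℝ}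
    (hu : ContDiff ℝ (⊤ : ℕ∞) u) {L : ℝ≥0} (hL : LipschitzWith L u) {s t : ℝ}
    (hs : s ∈ Icc 0 T) (ht : t ∈ Icc 0 T) :
    u (γ t) - u (γ s) = ∫ r in s..t, fderiv ℝ u (γ r) (v r) := by
  set Γ : ℝ → E := fun t => γ 0 + ∫ r in (0 : ℝ)..t, v r with hΓ
  have hΓγ : ∀ t ∈ Icc 0 T, Γ t = γ t := fun t ht => by simp only [hΓ, ← hγ t ht]; abel
  have hsub : uIcc s t ⊆ Icc 0 T := uIcc_subset_Icc hs ht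
  have h0 : (0 : ℝ) ∈ uIcc 0 T := left_mem_uIcc
  have hInt : ∀ x ∈ Icc 0 T, ∀ y ∈ Icc 0 T, IntervalIntegrable v volume x y := fun x hx y hy =>
    hv.mono_set (by rw [uIcc_of_le hT]; exact uIcc_subset_Icc hx hy)
  have hac : AbsolutelyContinuousOnInterval (fun t => u (Γ t)) 0 T := by
    refine ((hv.norm.absolutelyContinuousOnInterval_intervalIntegral h0).const_mul L).of_dist_le
      fun x hx y hy => ?_
    rw [uIcc_of_le hT] at hx hy
    have h0' : (0 : ℝ) ∈ Icc 0 T := left_mem_Icc.2 hT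
    refine (hL.dist_le_mul _ _).trans ?_
    rw [Real.dist_eq, ← mul_sub, abs_mul, NNReal.abs_eq,
      intervalIntegral.integral_interval_sub_left (hInt _ h0' _ hx).norm (hInt _ h0' _ hy).norm]
    gcongr
    rw [dist_eq_norm, hΓ, add_sub_add_left_eq_sub,
      intervalIntegral.integral_interval_sub_left (hInt _ h0' _ hx) (hInt _ h0' _ hy)]
    exact intervalIntegral.norm_integral_le_abs_integral_norm
  have hst := (hac.mono (c := s) (d := t) (by rwa [uIcc_of_le hT])).integral_deriv_eq_sub
  simp only [hΓγ t ht, hΓγ s hs] at hst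
  rw [← hst]
  refine intervalIntegral.integral_congr_ae ?_
  filter_upwards [hv.ae_hasDerivAt_integral] with r hr hrt
  have hrT := hsub (uIoc_subset_uIcc hrt)
  have h1 : HasDerivAt Γ (v r) r :=
    (hr (by rwa [uIcc_of_le hT]) 0 h0).const_add (γ 0)
  have h2 := ((hu.differentiable (by simp) (Γ r)).hasFDerivAt.comp_hasDerivAt r h1).deriv
  rw [← hΓγ r hrT]
  exact h2

lemma intervalIntegrable_field (hT : 0 ≤ T) (hV : Measurable (Function.uncurry V))
    (hbound : (∫⁻ t in Icc 0 T, ⨆ x, (‖V t x‖₊ : ℝ≥0∞)) < ⊤) {γ : ℝ → E} (hγ : Measurable γ) :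
    IntervalIntegrable (fun r => V r (γ r)) volume 0 T := by
  rw [intervalIntegrable_iff_integrableOn_Icc_of_le hT]
  refine ⟨(hV.comp (measurable_id.prodMk hγ)).aestronglyMeasurable, ?_⟩
  refine lt_of_le_of_lt (lintegral_mono fun r => ?_) hbound
  exact le_iSup (fun x => (‖V r x‖₊ : ℝ≥0∞)) (γ r)

/-- Pushing a measure forward along curves of the field solves the continuity equation. -/
lemma integral_map_sub_eq (hT : 0 ≤ T) (hV : Measurable (Function.uncurry V))
    (hbound : (∫⁻ t in Icc 0 T, ⨆ x, (‖V t x‖₊ : ℝ≥0∞)) < ⊤) {μ : Measure E}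
    [IsProbabilityMeasure μ] {Y : ℝ → E → E} (hYm : ∀ t, Measurable (Y t))
    (hYc : ∀ x, Continuous fun t => Y t x)
    (hY : ∀ x, ∀ t ∈ Icc 0 T, Y t x - Y 0 x = ∫ r in (0 : ℝ)..t, V r (Y r x))
    {u : E → ℝ} (hu : ContDiff ℝ (⊤ : ℕ∞) u) (huc : HasCompactSupport u) {s t : ℝ}
    (hs : s ∈ Icc 0 T) (ht : t ∈ Icc 0 T) :
    ∫ x, u x ∂μ.map (Y t) - ∫ x, u x ∂μ.map (Y s) =
      ∫ σ in s..t, ∫ x, fderiv ℝ u x (V σ x) ∂μ.map (Y σ) := by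
  obtain ⟨L, hL⟩ := (hu.of_le (m := 1) (by simp)).lipschitzWith_of_hasCompactSupport huc (by simp)
  have hui : ∀ r, Integrable (fun x => u (Y r x)) μ := fun r => by
    obtain ⟨C, hC⟩ := huc.exists_bound_of_continuous hu.continuous
    exact .of_bound (hu.continuous.measurable.comp (hYm r)).aestronglyMeasurable C
      (.of_forall fun x => hC _)
  have hYj : Measurable (Function.uncurry Y) :=
    measurable_uncurry_of_continuous_of_measurable hYc hYm
  have hG : Measurable fun p : ℝ × E => fderiv ℝ u (Y p.1 p.2) (V p.1 (Y p.1 p.2)) :=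
    Measurable.fderiv_apply hu hYj (hV.comp (measurable_fst.prodMk hYj))
  have hsub : uIoc s t ⊆ Icc 0 T := uIoc_subset_uIcc.trans (uIcc_subset_Icc hs ht)
  have hInt : Integrable (Function.uncurry fun σ x => fderiv ℝ u (Y σ x) (V σ (Y σ x)))
      ((volume.restrict (uIoc s t)).prod μ) := by
    refine ⟨hG.aestronglyMeasurable, ?_⟩
    refine (lintegral_prod _ hG.enorm.aemeasurable).trans_lt ?_
    calc ∫⁻ σ in uIoc s t, ∫⁻ x, ‖fderiv ℝ u (Y σ x) (V σ (Y σ x))‖ₑ ∂μ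
        ≤ ∫⁻ σ in uIoc s t, L * ⨆ x, (‖V σ x‖₊ : ℝ≥0∞) := by
          refine lintegral_mono fun σ => ?_
          calc ∫⁻ x, ‖fderiv ℝ u (Y σ x) (V σ (Y σ x))‖ₑ ∂μ
              ≤ ∫⁻ _, L * ⨆ x, (‖V σ x‖₊ : ℝ≥0∞) ∂μ := by
                refine lintegral_mono fun x => ?_
                have h1 : ‖fderiv ℝ u (Y σ x) (V σ (Y σ x))‖₊ ≤ L * ‖V σ (Y σ x)‖₊ :=
                  ((fderiv ℝ u (Y σ x)).le_opNNNorm _).trans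
                    (mul_le_mul_left (show ‖fderiv ℝ u (Y σ x)‖₊ ≤ L from
                      norm_fderiv_le_of_lipschitz ℝ hL) _)
                calc ‖fderiv ℝ u (Y σ x) (V σ (Y σ x))‖ₑ ≤ ((L * ‖V σ (Y σ x)‖₊ : ℝ≥0) : ℝ≥0∞) :=
                      ENNReal.coe_le_coe.2 h1
                  _ = L * (‖V σ (Y σ x)‖₊ : ℝ≥0∞) := by push_cast; rfl
                  _ ≤ _ := by
                      gcongr
                      exact le_iSup (fun x => (‖V σ x‖₊ : ℝ≥0∞)) (Y σ x)
            _ = _ := by simp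
      _ = L * ∫⁻ σ in uIoc s t, ⨆ x, (‖V σ x‖₊ : ℝ≥0∞) :=
          lintegral_const_mul' _ _ ENNReal.coe_ne_top
      _ < ⊤ := ENNReal.mul_lt_top ENNReal.coe_lt_top
          ((lintegral_mono_set hsub).trans_lt hbound)
  have hmapD : ∀ σ, ∫ x, fderiv ℝ u x (V σ x) ∂μ.map (Y σ) =
      ∫ x, fderiv ℝ u (Y σ x) (V σ (Y σ x)) ∂μ := fun σ =>
    integral_map (hYm σ).aemeasurable (Measurable.fderiv_apply hu measurable_id
      (hV.comp measurable_prodMk_left)).aestronglyMeasurable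
  simp only [hmapD]
  rw [integral_map (hYm t).aemeasurable hu.continuous.aestronglyMeasurable,
    integral_map (hYm s).aemeasurable hu.continuous.aestronglyMeasurable,
    intervalIntegral_integral_swap hInt, ← integral_sub (hui t) (hui s)]
  refine integral_congr_ae (.of_forall fun x => ?_)
  exact sub_eq_integral_fderiv hT (intervalIntegrable_field hT hV hbound (hYc x).measurable)
    (hY x) hu hL hs ht

lemma Measure.eq_of_forall_isBoundedLipschitz {μ ν : Measure E} [IsProbabilityMeasure μ]
    [IsProbabilityMeasure ν] (h : ∀ (g : E → ℝ) (K : ℝ), IsBoundedLipschitz g K → (∀ x, 0 ≤ g x) →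
      ∫ x, g x ∂μ = ∫ x, g x ∂ν) : μ = ν := by
  let μ' : ProbabilityMeasure E := ⟨μ, inferInstance⟩
  let ν' : ProbabilityMeasure E := ⟨ν, inferInstance⟩
  have htend : Tendsto (fun _ : ℕ => μ') atTop (𝓝 ν') := by
    rw [tendsto_iff_forall_lipschitz_integral_tendsto]
    rintro f ⟨C, hC⟩ ⟨L, hL⟩
    have hC0 : 0 ≤ C := by simpa using hC 0 0
    have hg0 : ∀ x, 0 ≤ f x + (C - f 0) := fun x => by
      have := hC x 0
      rw [Real.dist_eq] at this
      linarith [neg_le_of_abs_le this]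
    have hg : IsBoundedLipschitz (fun x => f x + (C - f 0)) (max (2 * C) L) :=
      ⟨fun x => by
        have := hC x 0
        rw [Real.dist_eq] at this
        rw [abs_of_nonneg (hg0 x)]
        exact le_max_of_le_left (by linarith [le_of_abs_le this]), fun x y => by
        rw [add_sub_add_right_eq_sub, ← Real.dist_eq, ← dist_eq_norm]
        exact (hL.dist_le_mul x y).trans (by gcongr; exact le_max_right _ _)⟩
    have hf : ∀ (ρ : Measure E) [IsProbabilityMeasure ρ],
        ∫ x, (f x + (C - f 0)) ∂ρ = ∫ x, f x ∂ρ + (C - f 0) := fun ρ _ => by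
      have hfi : Integrable f ρ := by
        refine ((hg.integrable ρ).sub (integrable_const (C - f 0))).congr (.of_forall fun x => ?_)
        simp
      rw [integral_add hfi (integrable_const _)]
      simp
    have heq := h _ _ hg hg0
    rw [hf μ, hf ν, add_left_inj] at heq
    change Tendsto (fun _ : ℕ => ∫ x, f x ∂μ) atTop (𝓝 (∫ x, f x ∂ν))
    rw [heq]
    exact tendsto_const_nhds
  have heq : μ' = ν' := tendsto_nhds_unique tendsto_const_nhds htend
  exact congrArg Subtype.val heq

/-- Solutions of the continuity equation are carried by any map which describes all curves of the
field. -/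
lemma eq_map_of_curves (hT : 0 < T) (hV : Measurable (Function.uncurry V))
    (hbound : (∫⁻ t in Icc 0 T, ⨆ x, (‖V t x‖₊ : ℝ≥0∞)) < ⊤) {ν : ℝ → Measure E}
    [∀ t, IsFiniteMeasure (ν t)]
    (h : ∀ u : E → ℝ, ContDiff ℝ (⊤ : ℕ∞) u → HasCompactSupport u →
      ∀ s ∈ Icc 0 T, ∀ t ∈ Icc 0 T,
        ∫ x, u x ∂ν t - ∫ x, u x ∂ν s = ∫ σ in s..t, ∫ x, fderiv ℝ u x (V σ x) ∂ν σ)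
    {A B : ℝ} (hA : A ∈ Icc 0 T) (hB : B ∈ Icc 0 T) [IsProbabilityMeasure (ν A)]
    {Φ : E → E} (hΦ : Measurable Φ)
    (hcurve : ∀ γ : ℝ → E, Continuous γ →
      (∀ t ∈ Icc 0 T, γ t - γ 0 = ∫ r in (0 : ℝ)..t, V r (γ r)) → γ B = Φ (γ A)) :
    ν B = (ν A).map Φ := by
  obtain ⟨κ, hκ⟩ := exists_clamped_kernel hT.le ν h
  have hκν : ∀ t ∈ Icc 0 T, κ t = ν t := fun t ht => by rw [hκ, projIcc_of_mem _ ht]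
  have hfin : ∀ t, IsFiniteMeasure (κ t) := fun t => by rw [hκ]; infer_instance
  have hsfin := isSFiniteKernel_of_isFiniteMeasure κ
  have hclamp : ∀ t, ∃ s ∈ Icc 0 T, κ t = κ s := fun t =>
    ⟨_, (projIcc 0 T hT.le t).2, by rw [hκν _ (projIcc 0 T hT.le t).2, hκ]⟩
  have hκeq : ∀ u : E → ℝ, ContDiff ℝ (⊤ : ℕ∞) u → HasCompactSupport u →
      ∀ s ∈ Icc 0 T, ∀ t ∈ Icc 0 T,
        ∫ x, u x ∂κ t - ∫ x, u x ∂κ s = ∫ σ in s..t, ∫ x, fderiv ℝ u x (V σ x) ∂κ σ := by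
    intro u hu huc s hs t ht
    rw [hκν s hs, hκν t ht, h u hu huc s hs t ht]
    exact intervalIntegral.integral_congr fun σ hσ => by
      simp only [hκν σ (uIcc_subset_Icc hs ht hσ)]
  obtain ⟨m, hm, hm1, hmT, hVm⟩ := exists_clock_density (κ := κ) hV hbound
  have hτfin := isFiniteMeasure_clock hmT
  have hτ := isContinuousClock_clock hmT
  have hprob : IsProbabilityMeasure (κ A) := by rw [hκν A hA]; infer_instance
  obtain ⟨hmark, htr⟩ :=
    (isLocalTransport_slowField hV hm hm1 hVm hclamp hT.le hκeq).isTransport hτ hA hprob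
  obtain ⟨hN, hN0⟩ := compProd_clock_eq_zero hV hm hVm
  have hle : ∀ (g : E → ℝ) (K : ℝ), IsBoundedLipschitz g K → (∀ x, 0 ≤ g x) →
      ∫ x, g (Φ x) ∂κ A ≤ ∫ x, g x ∂κ B := by
    intro g K hg hg0
    refine htr.integral_le_of_curves hτ hT hA hB (hg.continuous.measurable.comp hΦ)
      (fun x => hg0 _) (fun x => (le_abs_self _).trans (hg.abs_le _)) hg hg0 hN hN0
      fun γ hγc hγN hγ => ?_
    have := hcurve γ hγc (sub_eq_integral_of_slowField hm hm1 (hγN.mono fun r hr => by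
      simpa using hr) hγ)
    rw [this]
  have hprobB : IsProbabilityMeasure (ν B) := by rw [← hκν B hB]; infer_instance
  have hprobM : IsProbabilityMeasure ((ν A).map Φ) :=
    Measure.isProbabilityMeasure_map hΦ.aemeasurable
  refine Measure.eq_of_forall_isBoundedLipschitz fun g K hg hg0 => ?_
  have hgm := hg.continuous.measurable
  rw [integral_map hΦ.aemeasurable hgm.aestronglyMeasurable, ← hκν A hA, ← hκν B hB]
  have hK : 0 ≤ K := (abs_nonneg _).trans (hg.abs_le 0)
  have hg' : IsBoundedLipschitz (fun x => K - g x) K :=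
    ⟨fun x => by
      have := (abs_le.1 (hg.abs_le x)).2
      rw [abs_of_nonneg (by linarith)]
      linarith [hg0 x], fun x y => by
      rw [sub_sub_sub_cancel_left, abs_sub_comm]; exact hg.abs_sub_le x y⟩
  refine le_antisymm ?_ (hle g K hg hg0)
  have h1 := hle _ K hg' fun x => sub_nonneg.2 ((le_abs_self _).trans (hg.abs_le _))
  have hgΦ : Integrable (fun x => g (Φ x)) (κ A) :=
    .of_bound (hgm.comp hΦ).aestronglyMeasurable K (.of_forall fun x => hg.abs_le _)
  rw [integral_sub (integrable_const _) hgΦ, integral_sub (integrable_const _)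
    (hg.integrable _)] at h1
  simp only [integral_const, probReal_univ, one_smul] at h1
  linarith

end Flow

/-- if the ODE is uniquely solved by a flow `X`, then for each
`S ∈ [0,T]` and each probability measure `μ`, the curve `μ_t = (X_S^t)_♯ μ`
is the unique nonnegative-measure-valued solution of the continuity equation
with value `μ` at time `S`. -/
theorem stmt11 (d : ℕ) (T : ℝ) (hT : 0 ≤ T)
    (V : ℝ → EuclideanSpace ℝ (Fin d) → EuclideanSpace ℝ (Fin d))
    (hV : Measurable (Function.uncurry V))
    (hbound : (∫⁻ t in Set.Icc (0:ℝ) T, ⨆ x, (‖V t x‖₊ : ℝ≥0∞)) < ⊤)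
    (X : ℝ → ℝ → EuclideanSpace ℝ (Fin d) → EuclideanSpace ℝ (Fin d))
    (hX : IsFlow T hT V X)
    (hXmeas : ∀ s t : ℝ, Measurable (X s t))
    (S : ℝ) (hS : S ∈ Set.Icc (0:ℝ) T)
    (μ : Measure (EuclideanSpace ℝ (Fin d))) (hμ : IsProbabilityMeasure μ) :
    IsMeasureSolution T V (fun t => Measure.map (X S t) μ) ∧
    Measure.map (X S S) μ = μ ∧
    ∀ ν : ℝ → Measure (EuclideanSpace ℝ (Fin d)),
      (∀ t, IsFiniteMeasure (ν t)) → IsMeasureSolution T V ν → ν S = μ →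
      ∀ t ∈ Set.Icc (0:ℝ) T, ν t = Measure.map (X S t) μ := by
  have hproj : ∀ {t} (ht : t ∈ Icc 0 T), ((projIcc 0 T hT t : Icc 0 T) : ℝ) = t := fun ht => by
    rw [projIcc_of_mem _ ht]
  have hSS : X S S = id := funext fun x => by
    obtain ⟨γ, -, hγ, hXγ, -⟩ := hX S hS x
    exact (hXγ ⟨S, hS⟩).trans hγ
  refine ⟨fun u hu huc s hs t ht => ?_, by rw [hSS, Measure.map_id], fun ν hν hsol hνS t ht => ?_⟩
  · have hY := integral_map_sub_eq (Y := fun t x => X S (projIcc 0 T hT t) x) (μ := μ) hT hV hbound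
      (fun t => hXmeas _ _) (fun x => ?_) (fun x t ht => ?_) hu huc hs ht
    · simp only [hproj hs, hproj ht] at hY
      rw [hY]
      exact intervalIntegral.integral_congr fun σ hσ => by
        simp only [hproj (uIcc_subset_Icc hs ht hσ)]
    · obtain ⟨γ, -, -, hXγ, -⟩ := hX S hS x
      simp only [hXγ]
      exact γ.continuous.comp continuous_projIcc
    · obtain ⟨γ, hγ, -, hXγ, -⟩ := hX S hS x
      simp only [hXγ]
      have := hγ ⟨t, ht⟩
      rwa [← projIcc_of_mem hT ht, ← projIcc_of_mem hT (left_mem_Icc.2 hT), hproj ht] at this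
  · rcases hT.eq_or_lt with rfl | hT'
    · have htS : t = S := by rw [le_antisymm ht.2 ht.1, le_antisymm hS.2 hS.1]
      rw [htS, hνS, hSS, Measure.map_id]
    have hprob : IsProbabilityMeasure (ν S) := by rwa [hνS]
    rw [← hνS]
    refine eq_map_of_curves hT' hV hbound hsol hS ht (hXmeas S t) fun γ hγc hγ => ?_
    obtain ⟨γ', -, -, hXγ', huniq⟩ := hX S hS (γ S)
    have heq := huniq ⟨fun r => γ r, hγc.comp continuous_subtype_val⟩ (fun r => ?_) rfl
    · rw [hXγ' ⟨t, ht⟩, ← heq]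
      rfl
    · refine (hγ r r.2).trans (intervalIntegral.integral_congr fun σ hσ => ?_)
      rw [uIcc_of_le r.2.1] at hσ
      simp only [ContinuousMap.coe_mk, hproj ⟨hσ.1, hσ.2.trans r.2.2⟩]
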